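/- arXiv:alg-geom/9610006 — 2 statements merged into one kernel-verified Lean document; each statement's English description precedes it below -/
import Mathlib

section
/- Let s ≤ n and let F, f_1,...,f_s ∈ k[x_0,...,x_n] be homogeneous polynomials with deg F ≥ 1, such that f_1,...,f_s is a weak regular sequence in the localization k[x_0,...,x_n]_F. Let I = (f_1,...,f_s) ⊆ k[x_0,...,x_n]_F and I^c = I ∩ k[x_0,...,x_n]. Then deg I^c ≤ ∏_{i=1}^s deg f_i. -/
open MvPolynomial

/-- Integer-valued binomial coefficient `C(a, b)`, zero when `a < 0` or `a < b`. -/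
def ichoose (a : ℤ) (b : ℕ) : ℤ := if a < 0 then 0 else (a.toNat).choose b

/-- The Hilbert function of a (homogeneous) ideal `I ⊆ k[x₀, …, xₙ]`:
`m ↦ dim_k (k[x₀, …, xₙ]/I)_m`. -/
noncomputable def hilbF (k : Type*) [Field k] {n : ℕ}
    (I : Ideal (MvPolynomial (Fin (n+1)) k)) (m : ℕ) : ℕ :=
  Module.finrank k ((homogeneousSubmodule (Fin (n+1)) k m).map
    (Ideal.Quotient.mkₐ k I).toLinearMap)

open scoped Classical in
/-- The Hilbert polynomial of `I` (the polynomial agreeing with the Hilbert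
function for all large `m`; junk value `0` if none exists). -/
noncomputable def hilbP (k : Type*) [Field k] {n : ℕ}
    (I : Ideal (MvPolynomial (Fin (n+1)) k)) : Polynomial ℚ :=
  if h : ∃ P : Polynomial ℚ, ∀ᶠ m : ℕ in Filter.atTop,
      (hilbF k I m : ℚ) = P.eval (m : ℚ) then h.choose else 0

/-- The (algebraic) degree of a homogeneous ideal `I` of projective dimension
`d ≥ 0`: `d! · (leading coefficient of its Hilbert polynomial)`. -/
noncomputable def idealDeg (k : Type*) [Field k] {n : ℕ}
    (I : Ideal (MvPolynomial (Fin (n+1)) k)) : ℕ :=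
  ⌊((hilbP k I).natDegree.factorial : ℚ) * (hilbP k I).leadingCoeff⌋₊

/-- The projective dimension of a homogeneous ideal `I` (of dimension `≥ 0`):
the degree of its Hilbert polynomial. -/
noncomputable def idealDim (k : Type*) [Field k] {n : ℕ}
    (I : Ideal (MvPolynomial (Fin (n+1)) k)) : ℕ :=
  (hilbP k I).natDegree

/-- A homogeneous ideal: one containing all homogeneous components of its elements. -/
def IsHomogeneousIdeal {k : Type*} [Field k] {n : ℕ}
    (I : Ideal (MvPolynomial (Fin (n+1)) k)) : Prop :=
  ∀ f ∈ I, ∀ m : ℕ, homogeneousComponent m f ∈ I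

/-- `I` is unmixed of projective dimension `d`: every associated prime `P` of
`k[x₀,…,xₙ]/I` satisfies `dim k[x₀,…,xₙ]/P = d + 1` (affine Krull dimension). -/
def IsUnmixed (k : Type*) [Field k] {n : ℕ}
    (I : Ideal (MvPolynomial (Fin (n+1)) k)) (d : ℕ) : Prop :=
  ∀ P ∈ associatedPrimes (MvPolynomial (Fin (n+1)) k)
      (MvPolynomial (Fin (n+1)) k ⧸ I),
    ringKrullDim (MvPolynomial (Fin (n+1)) k ⧸ P) = ((d + 1 : ℕ) : WithBot (WithTop ℕ))


def partialSum (g : ℕ → ℕ) (M : ℕ) : ℕ := ∑ m ∈ Finset.range (M+1), g m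

def shiftf (e : ℕ) (g : ℕ → ℕ) (M : ℕ) : ℕ := if e ≤ M then g (M - e) else 0

lemma partialSum_shiftf (e : ℕ) (g : ℕ → ℕ) : partialSum (shiftf e g) = shiftf e (partialSum g) := by
  funext M
  induction M with
  | zero =>
    by_cases h : e = 0
    · subst h; simp [partialSum, shiftf]
    · simp [partialSum, shiftf, h]
  | succ M ih =>
    have h1 : partialSum (shiftf e g) (M+1) = partialSum (shiftf e g) M + shiftf e g (M+1) := by
      simp only [partialSum]; rw [Finset.sum_range_succ]
    rw [h1, ih]
    unfold shiftf
    by_cases h : e ≤ M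
    · have h2 : M + 1 - e = (M - e) + 1 := by omega
      rw [if_pos h, if_pos (by omega), if_pos (by omega), h2]
      simp only [partialSum]; rw [Finset.sum_range_succ _ (M - e + 1)]
    · by_cases h' : e = M + 1
      · subst h'; simp [partialSum]
      · rw [if_neg h, if_neg (by omega), if_neg (by omega)]

lemma partialSum_iter_shiftf (i e : ℕ) (g : ℕ → ℕ) :
    partialSum^[i] (shiftf e g) = shiftf e (partialSum^[i] g) := by
  induction i with
  | zero => rfl
  | succ i ih => rw [Function.iterate_succ_apply', ih, partialSum_shiftf, Function.iterate_succ_apply']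

lemma partialSum_iter_mono_add (i : ℕ) (a b c : ℕ → ℕ) (h : ∀ m, a m + b m ≤ c m) :
    ∀ m, partialSum^[i] a m + partialSum^[i] b m ≤ partialSum^[i] c m := by
  induction i with
  | zero => exact h
  | succ i ih =>
    intro m
    simp only [Function.iterate_succ_apply']
    simp only [partialSum]
    rw [← Finset.sum_add_distrib]
    exact Finset.sum_le_sum fun j _ => ih j

lemma partialSum_le_shiftf (e c : ℕ) (g B : ℕ → ℕ) (hB : Monotone B) (hg : ∀ m, g m ≤ c * B m) (M : ℕ) :
    partialSum g M ≤ shiftf e (partialSum g) M + e * c * B M := by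
  induction e with
  | zero => simp [shiftf]
  | succ e ih =>
    refine ih.trans ?_
    have : shiftf e (partialSum g) M ≤ shiftf (e+1) (partialSum g) M + c * B M := by
      unfold shiftf
      by_cases h : e + 1 ≤ M
      · rw [if_pos h, if_pos (by omega)]
        have h2 : M - e = (M - (e+1)) + 1 := by omega
        rw [h2]
        simp only [partialSum]
        rw [Finset.sum_range_succ _ (M - (e+1) + 1)]
        have h3 := hg (M - (e+1) + 1)
        have h4 : B (M - (e+1) + 1) ≤ B M := hB (by omega)
        have := Nat.mul_le_mul_left c h4
        omega
      · by_cases h' : e = M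
        · subst h'
          have := hg 0
          have h4 : B 0 ≤ B e := hB (by omega)
          have := Nat.mul_le_mul_left c h4
          simp [partialSum]; omega
        · rw [if_neg (by omega)]; omega
    have h5 : (e+1) * c * B M = e * c * B M + c * B M := by ring
    omega

/-- One Bézout step on iterated sums. -/
lemma partialSum_step (i e c : ℕ) (h h' B : ℕ → ℕ) (hB : Monotone B)
    (hstep : ∀ m, h' m + shiftf e h m ≤ h m)
    (hg : ∀ m, partialSum^[i] h m ≤ c * B m) :
    ∀ m, partialSum^[i+1] h' m ≤ e * c * B m := by
  intro m
  have h1 := partialSum_iter_mono_add (i+1) _ _ _ hstep m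
  rw [partialSum_iter_shiftf] at h1
  have h2 := partialSum_le_shiftf e c _ B hB hg m
  rw [← Function.iterate_succ_apply' partialSum] at h2
  simp only [Nat.succ_eq_add_one] at h2
  omega

lemma partialSum_choose (d M : ℕ) : partialSum (fun m => (m + d).choose d) M = (M + (d+1)).choose (d+1) := by
  induction M with
  | zero => simp [partialSum]
  | succ M ih =>
    have h1 : partialSum (fun m => (m + d).choose d) (M+1)
      = partialSum (fun m => (m + d).choose d) M + (M + 1 + d).choose d := by
      simp only [partialSum]; rw [Finset.sum_range_succ]
    rw [h1, ih, show M + 1 + (d+1) = (M + (d+1)) + 1 by ring, Nat.choose_succ_succ',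
      show M + 1 + d = M + (d+1) by ring, add_comm]

lemma partialSum_liminf_step (d : ℕ) (c : ℚ) (g : ℕ → ℕ)
    (h : ∀ c' < c, ∀ᶠ m in Filter.atTop, c' * ((m + d).choose d : ℕ) ≤ (g m : ℚ)) :
    ∀ c' < c, ∀ᶠ m in Filter.atTop, c' * ((m + (d+1)).choose (d+1) : ℕ) ≤ (partialSum g m : ℚ) := by
  intro c' hc'
  obtain ⟨c'', h1, h2⟩ := exists_between hc'
  obtain ⟨m0, hm0⟩ := Filter.eventually_atTop.1 (h c'' h2)
  set K : ℚ := ∑ m ∈ Finset.range m0, |c'' * ((m + d).choose d : ℕ) - (g m : ℚ)| with hK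
  have key : ∀ M, c'' * ((M + (d+1)).choose (d+1) : ℕ) - K ≤ partialSum g M := by
    intro M
    rw [← partialSum_choose]
    simp only [partialSum]
    push_cast
    rw [Finset.mul_sum, sub_le_iff_le_add, ← sub_le_iff_le_add', ← Finset.sum_sub_distrib]
    calc _ ≤ ∑ m ∈ Finset.range (M+1), (if m < m0 then
            |c'' * ((m + d).choose d : ℕ) - (g m : ℚ)| else 0) := by
          apply Finset.sum_le_sum
          intro m _
          split_ifs with hm
          · exact le_abs_self _
          · have := hm0 m (by omega); linarith
      _ ≤ _ := by
          rw [← Finset.sum_filter, hK]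
          apply Finset.sum_le_sum_of_subset_of_nonneg
          · intro m; simp
          · intros; positivity
  have hlim : ∀ᶠ m : ℕ in Filter.atTop, K / (c'' - c') ≤ (m : ℚ) :=
    tendsto_natCast_atTop_atTop.eventually_ge_atTop _
  filter_upwards [hlim] with m hm
  have h3 := key m
  have h4 : m ≤ (m + (d+1)).choose (d+1) := by
    calc m ≤ m + (d+1) - (d+1) + 1 := by omega
      _ ≤ _ := by
        have : (m + 1).choose 1 ≤ (m+1 + d).choose (1 + d) := by
          rw [Nat.choose_symm_of_eq_add (show m + 1 = 1 + m by ring),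
            Nat.choose_symm_of_eq_add (show m + 1 + d = (1 + d) + m by ring)]
          exact Nat.choose_le_choose _ (by omega)
        rw [show m + (d+1) - (d+1) + 1 = (m+1).choose 1 by simp]
        rwa [show m + (d+1) = m+1+d by ring, show d + 1 = 1 + d by ring]
  have h5 : (m : ℚ) ≤ ((m + (d+1)).choose (d+1) : ℕ) := by exact_mod_cast h4
  have hpos : 0 < c'' - c' := by linarith
  rw [div_le_iff₀ hpos] at hm
  nlinarith

lemma partialSum_liminf (s d : ℕ) (c : ℚ) (g : ℕ → ℕ)
    (h : ∀ c' < c, ∀ᶠ m in Filter.atTop, c' * ((m + d).choose d : ℕ) ≤ (g m : ℚ)) :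
    ∀ c' < c, ∀ᶠ m in Filter.atTop,
      c' * ((m + (d+s)).choose (d+s) : ℕ) ≤ (partialSum^[s] g m : ℚ) := by
  induction s with
  | zero => exact h
  | succ s ih =>
    rw [Function.iterate_succ_apply']
    exact partialSum_liminf_step (d+s) c _ ih

lemma choose_mono_aux (m : ℕ) {a b : ℕ} (h : a ≤ b) : (m + a).choose a ≤ (m + b).choose b := by
  rw [Nat.choose_symm_of_eq_add (show m + a = a + m by ring),
    Nat.choose_symm_of_eq_add (show m + b = b + m by ring)]
  exact Nat.choose_le_choose _ (by omega)

/-- `C(m+d,d)` as a polynomial. -/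
noncomputable def binPoly (d : ℕ) : Polynomial ℚ :=
  Polynomial.C ((d.factorial : ℚ)⁻¹) * (ascPochhammer ℚ d).comp (Polynomial.X + Polynomial.C 1)

lemma binPoly_eval (d m : ℕ) : (binPoly d).eval (m : ℚ) = ((m + d).choose d : ℕ) := by
  have h := Nat.ascFactorial_eq_factorial_mul_choose m d
  have h2 : (ascPochhammer ℚ d).eval ((m : ℚ) + 1) = ((m+1).ascFactorial d : ℕ) := by
    rw [← ascPochhammer_nat_eq_ascFactorial]; simp
  simp only [binPoly, Polynomial.eval_mul, Polynomial.eval_C, Polynomial.eval_comp,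
    Polynomial.eval_add, Polynomial.eval_X]
  rw [h2, h]
  push_cast
  field_simp

lemma binPoly_natDegree (d : ℕ) : (binPoly d).natDegree = d := by
  have hd : ((d.factorial : ℚ)⁻¹) ≠ 0 := by positivity
  rw [binPoly, Polynomial.natDegree_C_mul hd, Polynomial.natDegree_comp, ascPochhammer_natDegree,
    Polynomial.natDegree_X_add_C, mul_one]

lemma binPoly_leadingCoeff (d : ℕ) : (binPoly d).leadingCoeff = (d.factorial : ℚ)⁻¹ := by
  rw [binPoly, Polynomial.leadingCoeff_mul, Polynomial.leadingCoeff_C,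
    Polynomial.leadingCoeff_comp (by rw [Polynomial.natDegree_X_add_C]; norm_num)]
  rw [(monic_ascPochhammer ℚ d).leadingCoeff, Polynomial.leadingCoeff_X_add_C]
  simp

lemma poly_liminf (P : Polynomial ℚ) (hP : P ≠ 0) (c' : ℚ)
    (hc : c' < P.natDegree.factorial * P.leadingCoeff) :
    ∀ᶠ m : ℕ in Filter.atTop, c' * ((m + P.natDegree).choose P.natDegree : ℕ) ≤ P.eval (m : ℚ) := by
  set d := P.natDegree with hd
  have hb0 : binPoly d ≠ 0 := by
    intro h; have := binPoly_leadingCoeff d; rw [h] at this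
    have h3 : ((d.factorial : ℚ)⁻¹) ≠ 0 := by positivity
    simp at this; exact absurd this.symm (by positivity)
  have hdeg : P.degree = (binPoly d).degree := by
    rw [Polynomial.degree_eq_natDegree hP, Polynomial.degree_eq_natDegree hb0, binPoly_natDegree]
  have ht := Polynomial.div_tendsto_atTop_leadingCoeff_div_of_degree_eq P (binPoly d) hdeg
  rw [binPoly_leadingCoeff, div_inv_eq_mul, mul_comm] at ht
  have := (ht.comp tendsto_natCast_atTop_atTop).eventually (lt_mem_nhds hc)
  filter_upwards [this] with m hm
  simp only [Function.comp, binPoly_eval] at hm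
  have hpos : (0:ℚ) < ((m + d).choose d : ℕ) := by exact_mod_cast Nat.choose_pos (by omega)
  rw [lt_div_iff₀ hpos] at hm
  exact hm.le

lemma natDegree_ge_of_choose_le (P : Polynomial ℚ) (r : ℕ)
    (h : ∀ᶠ m : ℕ in Filter.atTop, (((m + r).choose r : ℕ) : ℚ) ≤ P.eval (m : ℚ)) :
    r ≤ P.natDegree := by
  by_contra hlt
  push Not at hlt
  have hdeg : P.degree < (binPoly r).degree := by
    apply Polynomial.degree_lt_degree; rwa [binPoly_natDegree]
  have ht := Polynomial.div_tendsto_atTop_zero_of_degree_lt P (binPoly r) hdeg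
  have := (ht.comp tendsto_natCast_atTop_atTop).eventually (gt_mem_nhds (show (0:ℚ) < 1 by norm_num))
  obtain ⟨m, h1, h2⟩ := (this.and h).exists
  simp only [Function.comp, binPoly_eval] at h1
  have hpos : (0:ℚ) < ((m + r).choose r : ℕ) := by exact_mod_cast Nat.choose_pos (by omega)
  rw [div_lt_iff₀ hpos] at h1
  linarith

/-- The numerical heart. -/
lemma degree_bound_numeric (n s E : ℕ) (g : ℕ → ℕ) (P : Polynomial ℚ)
    (hgP : ∀ᶠ m : ℕ in Filter.atTop, (g m : ℚ) = P.eval (m : ℚ))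
    (hlow : ∀ m, (m + (n - s)).choose (n - s) ≤ g m)
    (hup : ∀ m, partialSum^[s] g m ≤ E * (m + n).choose n) :
    (P.natDegree.factorial : ℚ) * P.leadingCoeff ≤ E := by
  by_cases hP : P = 0
  · subst hP; simp
  have hd : n - s ≤ P.natDegree := by
    apply natDegree_ge_of_choose_le
    filter_upwards [hgP] with m hm
    rw [← hm]; exact_mod_cast hlow m
  refine le_of_forall_lt_imp_le_of_dense fun c hc => ?_
  by_cases hc0 : c ≤ 0
  · exact hc0.trans (by positivity)
  push Not at hc0
  have h1 := partialSum_liminf s P.natDegree _ g (fun c' hc' => by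
    filter_upwards [poly_liminf P hP c' hc', hgP] with m h1 h2
    rwa [h2]) c hc
  obtain ⟨m, hm⟩ := h1.exists
  have h2 : (((m + n).choose n : ℕ) : ℚ) ≤ ((m + (P.natDegree + s)).choose (P.natDegree + s) : ℕ) := by
    exact_mod_cast choose_mono_aux m (by omega)
  have h3 : ((partialSum^[s] g m : ℕ) : ℚ) ≤ E * ((m + n).choose n : ℕ) := by exact_mod_cast hup m
  have hpos : (0:ℚ) < ((m + n).choose n : ℕ) := by exact_mod_cast Nat.choose_pos (by omega)
  have h4 : c * ((m + n).choose n : ℕ) ≤ E * ((m + n).choose n : ℕ) :=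
    (mul_le_mul_of_nonneg_left h2 hc0.le).trans (hm.trans h3)
  exact le_of_mul_le_mul_right h4 hpos

/-- Dimension theorem for prime ideals in polynomial rings, in terms of independent variables. -/
lemma exists_indep_vars {k : Type*} [Field k] (N : ℕ) (P : Ideal (MvPolynomial (Fin N) k))
    [P.IsPrime] : ∃ T : Finset (Fin N),
      (∀ q ∈ P, (∀ m, coeff m q ≠ 0 → ∀ i ∉ T, m i = 0) → q = 0) ∧
      (N : ℕ∞) ≤ T.card + P.height := by
  classical
  induction N with
  | zero =>
    refine ⟨∅, fun q hq _ => ?_, by simp⟩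
    by_contra h0
    have hP : P = ⊤ := by
      apply Ideal.eq_top_of_isUnit_mem _ hq
      rw [eq_C_of_isEmpty q] at h0 ⊢
      exact (isUnit_iff_ne_zero.2 (by simpa using h0)).map C
    exact Ideal.IsPrime.ne_top ‹_› hP
  | succ N ih =>
    let φ := (finSuccEquiv k N).toRingEquiv
    let Q : Ideal (Polynomial (MvPolynomial (Fin N) k)) := P.comap φ.symm
    have : Q.IsPrime := Ideal.IsPrime.comap _
    have hQh : Q.height = P.height := φ.symm.height_comap P
    let p : Ideal (MvPolynomial (Fin N) k) := Q.under _
    have : Q.LiesOver p := ⟨rfl⟩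
    have : p.IsPrime := inferInstance
    obtain ⟨T, hT, hTc⟩ := ih p
    have hmem : ∀ q, q ∈ P ↔ finSuccEquiv k N q ∈ Q := by
      intro q
      change q ∈ P ↔ φ.symm (φ q) ∈ P
      rw [φ.symm_apply_apply]
    have hheq := Ideal.height_eq_height_add_of_liesOver_of_hasGoingDown p Q
    by_cases hcase : Q ≤ p.map (algebraMap _ (Polynomial (MvPolynomial (Fin N) k)))
    · refine ⟨insert 0 (T.map (Fin.succEmb N)), ?_, ?_⟩
      · intro q hq hs
        have h1 := hcase ((hmem q).1 hq)
        rw [Polynomial.algebraMap_eq, Ideal.mem_map_C_iff] at h1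
        have : finSuccEquiv k N q = 0 := by
          ext1 i
          rw [Polynomial.coeff_zero]
          refine hT _ (h1 i) fun m hm j hj => ?_
          rw [finSuccEquiv_coeff_coeff] at hm
          have := hs _ hm j.succ (by simpa [Fin.succ_ne_zero] using hj)
          simpa using this
        simpa using this
      · rw [Finset.card_insert_of_notMem (by simp [Fin.succ_ne_zero]), Finset.card_map, ← hQh, hheq]
        push_cast
        calc (N : ℕ∞) + 1 ≤ T.card + p.height + 1 := by gcongr
          _ = (T.card + 1 + p.height) := by ring
          _ ≤ _ := by rw [← add_assoc]; exact le_self_add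
    · refine ⟨T.map (Fin.succEmb N), ?_, ?_⟩
      · intro q hq hs
        -- only the constant coefficient survives
        have h0 : ∀ i ≠ 0, (finSuccEquiv k N q).coeff i = 0 := by
          intro i hi
          ext m
          rw [finSuccEquiv_coeff_coeff, coeff_zero]
          by_contra hm
          have := hs _ hm 0 (by simp [Fin.succ_ne_zero])
          simp at this; exact hi this
        have hC : finSuccEquiv k N q = Polynomial.C ((finSuccEquiv k N q).coeff 0) := by
          ext1 i
          by_cases hi : i = 0
          · subst hi; simp
          · rw [h0 i hi, Polynomial.coeff_C_of_ne_zero hi]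
        have h1 := (hmem q).1 hq
        rw [hC] at h1
        have h2 := hT _ h1 (fun m hm j hj => by
          rw [finSuccEquiv_coeff_coeff] at hm
          have := hs _ hm j.succ (by simpa using hj)
          simpa using this)
        rw [h2, map_zero] at hC
        simpa using hC
      · rw [Finset.card_map, ← hQh]
        have hlt : p.map (algebraMap _ (Polynomial (MvPolynomial (Fin N) k))) < Q :=
          lt_of_le_not_ge (Ideal.map_le_iff_le_comap.2 le_rfl) hcase
        have hpp : (p.map (algebraMap _ (Polynomial (MvPolynomial (Fin N) k)))).IsPrime :=
          Ideal.isPrime_map_C_of_isPrime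
        have : (p.map (algebraMap _ (Polynomial (MvPolynomial (Fin N) k)))).LiesOver p := by
          refine ⟨?_⟩
          refine Ideal.ext fun x => ?_
          change x ∈ p ↔ algebraMap _ (Polynomial (MvPolynomial (Fin N) k)) x ∈
            p.map (algebraMap _ (Polynomial (MvPolynomial (Fin N) k)))
          rw [Polynomial.algebraMap_eq, Ideal.mem_map_C_iff]
          constructor
          · intro hx i
            rw [Polynomial.coeff_C]; split_ifs; exacts [hx, p.zero_mem]
          · intro h; simpa using h 0
        have h1 := Ideal.height_eq_height_add_of_liesOver_of_hasGoingDown p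
          (p.map (algebraMap _ (Polynomial (MvPolynomial (Fin N) k))))
        have h2 := Ideal.height_add_one_le_of_lt_of_isPrime hlt
        push_cast
        calc (N : ℕ∞) + 1 ≤ T.card + p.height + 1 := by gcongr
          _ = T.card + (p.height + 1) := by ring
          _ ≤ T.card + Q.height := by
            gcongr
            refine le_trans ?_ h2
            gcongr
            rw [h1]; exact le_self_add

lemma mem_homog_fin {k : Type*} [Field k] (n m : ℕ) :
    Module.Finite k (homogeneousSubmodule (Fin (n+1)) k m) :=
  Module.Finite.iff_fg.2 (homogeneousSubmodule_fg _ _ m)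

lemma hilbF_fin {k : Type*} [Field k] {n : ℕ} (I : Ideal (MvPolynomial (Fin (n+1)) k)) (m : ℕ) :
    Module.Finite k ((homogeneousSubmodule (Fin (n+1)) k m).map
    (Ideal.Quotient.mkₐ k I).toLinearMap) :=
  Module.Finite.iff_fg.2 ((homogeneousSubmodule_fg _ _ m).map _)

lemma card_antidiag_aux {n : ℕ} (T : Finset (Fin (n+1))) (t m : ℕ) (ht : T.card = t + 1) :
    (Finset.finsuppAntidiag T m).card = (m + t).choose t := by
  rw [Finset.card_finsuppAntidiag_nat_eq_choose, ht]
  rw [show t + 1 + m - 1 = m + t by omega]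
  exact Nat.choose_symm_of_eq_add rfl

lemma hilbF_le {k : Type*} [Field k] {n : ℕ} (I : Ideal (MvPolynomial (Fin (n+1)) k)) (m : ℕ) :
    hilbF k I m ≤ (m + n).choose n := by
  classical
  rw [← card_antidiag_aux (Finset.univ : Finset (Fin (n+1))) n m (by simp)]
  have := mem_homog_fin (k := k) n m
  refine (Submodule.finrank_map_le _ _).trans ?_
  have : homogeneousSubmodule (Fin (n+1)) k m ≤ Submodule.span k
      (((Finset.finsuppAntidiag Finset.univ m).image
        (fun d => (monomial d (1:k) : MvPolynomial (Fin (n+1)) k)) : Finset _) : Set _) := by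
    intro q hq
    rw [mem_homogeneousSubmodule] at hq
    rw [q.as_sum]
    refine Submodule.sum_mem _ fun d hd => ?_
    rw [show monomial d (coeff d q) = (coeff d q) • monomial d (1:k) by simp [smul_monomial]]
    refine Submodule.smul_mem _ _ (Submodule.subset_span ?_)
    rw [Finset.coe_image]
    refine ⟨d, ?_, rfl⟩
    have := hq (mem_support_iff.1 hd)
    rw [Finset.mem_coe, Finset.mem_finsuppAntidiag]
    refine ⟨?_, by simp⟩
    rw [← this, Finsupp.weight_apply, Finsupp.sum_fintype _ _ (by simp)]
    simp
  refine (Submodule.finrank_mono this).trans ?_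
  exact (finrank_span_finset_le_card _).trans Finset.card_image_le

lemma hilbF_ge {k : Type*} [Field k] {n : ℕ} (I P : Ideal (MvPolynomial (Fin (n+1)) k)) (hIP : I ≤ P)
    (T : Finset (Fin (n+1)))
    (hT : ∀ q ∈ P, (∀ m, coeff m q ≠ 0 → ∀ i ∉ T, m i = 0) → q = 0) (m : ℕ) :
    (Finset.finsuppAntidiag T m).card ≤ hilbF k I m := by
  classical
  have := hilbF_fin I m
  have hmon : ∀ d : Finset.finsuppAntidiag T m,
      (monomial (d : Fin (n+1) →₀ ℕ) (1:k)) ∈ homogeneousSubmodule (Fin (n+1)) k m := by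
    rintro ⟨d, hd⟩
    rw [Finset.mem_finsuppAntidiag] at hd
    apply isHomogeneous_monomial
    refine Eq.trans ?_ hd.1
    rw [Finsupp.degree_apply]
    exact Finset.sum_subset hd.2 (by simp)
  let v : Finset.finsuppAntidiag T m → ((homogeneousSubmodule (Fin (n+1)) k m).map
    (Ideal.Quotient.mkₐ k I).toLinearMap) := fun d => ⟨_, Submodule.mem_map_of_mem (hmon d)⟩
  have hv : LinearIndependent k v := by
    apply LinearIndependent.of_comp (Submodule.subtype _)
    rw [Fintype.linearIndependent_iff]
    intro g hg
    have h1 : (∑ d, g d • (monomial (d : Fin (n+1) →₀ ℕ) (1:k))) ∈ I := by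
      rw [← Ideal.Quotient.eq_zero_iff_mem, ← Ideal.Quotient.mkₐ_eq_mk k, map_sum, ← hg]
      refine Finset.sum_congr rfl fun d _ => ?_
      rw [map_smul]; rfl
    have hco : ∀ e : Fin (n+1) →₀ ℕ, coeff e (∑ d, g d • (monomial (d : Fin (n+1) →₀ ℕ) (1:k)))
        = if h : e ∈ Finset.finsuppAntidiag T m then g ⟨e, h⟩ else 0 := by
      intro e
      rw [coeff_sum]
      simp only [coeff_smul, coeff_monomial, smul_eq_mul, mul_ite, mul_one, mul_zero]
      split_ifs with h
      · rw [Finset.sum_eq_single ⟨e, h⟩]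
        · simp
        · intro b _ hb; rw [if_neg]; intro h'; exact hb (Subtype.ext h')
        · simp
      · refine Finset.sum_eq_zero fun d _ => ?_
        rw [if_neg]; intro h'; exact h (h' ▸ d.2)
    have h2 := hT _ (hIP h1) (fun e he i hi => by
      rw [hco] at he
      split_ifs at he with h
      · rw [Finset.mem_finsuppAntidiag] at h
        exact Finsupp.notMem_support_iff.1 fun h' => hi (h.2 h')
      · exact absurd rfl he)
    intro d
    have := hco d
    rw [h2, dif_pos d.2] at this
    simpa using this.symm
  have := hv.fintype_card_le_finrank
  simpa [hilbF] using this


lemma hilbF_step {k : Type*} [Field k] {n : ℕ} (I J : Ideal (MvPolynomial (Fin (n+1)) k))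
    (f : MvPolynomial (Fin (n+1)) k) (e : ℕ) (hf : f.IsHomogeneous e) (hIJ : I ≤ J) (hfJ : f ∈ J)
    (hreg : ∀ x, f * x ∈ I → x ∈ I) (m : ℕ) :
    hilbF k J m + shiftf e (hilbF k I) m ≤ hilbF k I m := by
  classical
  set A := (homogeneousSubmodule (Fin (n+1)) k m).map (Ideal.Quotient.mkₐ k I).toLinearMap with hA
  have : Module.Finite k A := hilbF_fin I m
  let π : (MvPolynomial (Fin (n+1)) k ⧸ I) →ₗ[k] (MvPolynomial (Fin (n+1)) k ⧸ J) :=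
    (Ideal.Quotient.factorₐ k hIJ).toLinearMap
  have hJ : hilbF k J m = Module.finrank k (LinearMap.range (π.domRestrict A)) := by
    rw [LinearMap.range_domRestrict, hA, ← Submodule.map_comp]; rfl
  have hrn := LinearMap.finrank_range_add_finrank_ker (π.domRestrict A)
  rw [hJ]
  change _ + _ ≤ Module.finrank k A
  rw [← hrn]
  gcongr
  unfold shiftf
  split_ifs with hem
  · set B := (homogeneousSubmodule (Fin (n+1)) k (m-e)).map (Ideal.Quotient.mkₐ k I).toLinearMap with hB
    let μ : (MvPolynomial (Fin (n+1)) k ⧸ I) →ₗ[k] (MvPolynomial (Fin (n+1)) k ⧸ I) :=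
      LinearMap.mulLeft k (Ideal.Quotient.mk I f)
    have hμ : Function.Injective μ := by
      rw [injective_iff_map_eq_zero]
      intro x hx
      obtain ⟨x, rfl⟩ := Ideal.Quotient.mk_surjective x
      simp only [μ, LinearMap.mulLeft_apply, ← map_mul, Ideal.Quotient.eq_zero_iff_mem] at hx ⊢
      exact hreg x hx
    have hBA : ∀ b : B, μ b ∈ A := by
      rintro ⟨_, q, hq, rfl⟩
      refine ⟨f * q, ?_, ?_⟩
      · have := hf.mul ((mem_homogeneousSubmodule _ _).1 hq)
        rw [show e + (m - e) = m by omega] at this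
        exact this
      · simp [μ]
    have hker : ∀ b : B, (⟨μ b, hBA b⟩ : A) ∈ LinearMap.ker (π.domRestrict A) := by
      rintro ⟨b, hb⟩
      rw [LinearMap.mem_ker, LinearMap.domRestrict_apply]
      simp only [μ, π, LinearMap.mulLeft_apply, AlgHom.toLinearMap_apply, map_mul]
      have : (Ideal.Quotient.factorₐ k hIJ) (Ideal.Quotient.mk I f) = 0 := by
        rw [Ideal.Quotient.factorₐ_apply_mk]
        exact Ideal.Quotient.eq_zero_iff_mem.2 hfJ
      rw [this, zero_mul]
    let ν : B →ₗ[k] LinearMap.ker (π.domRestrict A) :=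
      LinearMap.codRestrict _ (LinearMap.codRestrict A (μ.domRestrict B) hBA) hker
    refine LinearMap.finrank_le_finrank_of_injective (f := ν) ?_
    intro x y hxy
    have : μ x = μ y := congrArg (fun z : LinearMap.ker (π.domRestrict A) =>
      ((z : A) : MvPolynomial (Fin (n+1)) k ⧸ I)) hxy
    exact Subtype.ext (hμ this)
  · exact Nat.zero_le _

lemma regular_contraction {R A : Type*} [CommRing R] [CommRing A] [Algebra R A]
    {s : ℕ} (f : Fin s → R)
    (hreg : RingTheory.Sequence.IsWeaklyRegular A (List.ofFn fun i => algebraMap R A (f i)))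
    (i : Fin s) (x : R)
    (hx : f i * x ∈ (Ideal.ofList ((List.ofFn fun i => algebraMap R A (f i)).take i)).comap
      (algebraMap R A)) :
    x ∈ (Ideal.ofList ((List.ofFn fun i => algebraMap R A (f i)).take i)).comap
      (algebraMap R A) := by
  have h := hreg.regular_mod_prev i (by simp)
  rw [List.getElem_ofFn] at h
  have htop : (Ideal.ofList ((List.ofFn fun i => algebraMap R A (f i)).take i) • ⊤ : Submodule A A)
      = Ideal.ofList ((List.ofFn fun i => algebraMap R A (f i)).take i) := by
    rw [smul_eq_mul, Ideal.mul_top]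
  rw [isSMulRegular_quotient_iff_mem_of_smul_mem, htop] at h
  rw [Ideal.mem_comap] at hx ⊢
  apply h
  simpa [smul_eq_mul, map_mul] using hx

lemma idealDeg_le_of_bound {k : Type*} [Field k] {n : ℕ}
    (I : Ideal (MvPolynomial (Fin (n+1)) k)) (E : ℕ)
    (h : ∀ P : Polynomial ℚ, (∀ᶠ m : ℕ in Filter.atTop, (hilbF k I m : ℚ) = P.eval (m : ℚ)) →
      (P.natDegree.factorial : ℚ) * P.leadingCoeff ≤ E) : idealDeg k I ≤ E := by
  unfold idealDeg
  apply Nat.floor_le_of_le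
  by_cases hex : ∃ P : Polynomial ℚ, ∀ᶠ m : ℕ in Filter.atTop, (hilbF k I m : ℚ) = P.eval (m : ℚ)
  · have : hilbP k I = hex.choose := by unfold hilbP; rw [dif_pos hex]
    rw [this]
    exact h _ hex.choose_spec
  · have : hilbP k I = 0 := by unfold hilbP; rw [dif_neg hex]
    rw [this]; simp

lemma hilbF_top {k : Type*} [Field k] {n : ℕ} (m : ℕ) :
    hilbF k (⊤ : Ideal (MvPolynomial (Fin (n+1)) k)) m = 0 := by
  have : Subsingleton (MvPolynomial (Fin (n+1)) k ⧸ (⊤ : Ideal (MvPolynomial (Fin (n+1)) k))) :=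
    Ideal.Quotient.subsingleton_iff.2 rfl
  unfold hilbF
  exact Module.finrank_zero_of_subsingleton

/-- Bézout-type bound for the degree of the contraction
`I^c = (f₁,…,f_s)·k[x₀,…,xₙ]_F ∩ k[x₀,…,xₙ]` of the ideal generated by a weak
regular sequence of homogeneous polynomials in the localization at `F`:
`deg I^c ≤ ∏ deg fᵢ`. -/
theorem degree_contraction_bezout {k : Type*} [Field k] {n s : ℕ} (hs : s ≤ n)
    (F : MvPolynomial (Fin (n+1)) k) (eF : ℕ) (hFdeg : 1 ≤ eF)
    (hFh : F.IsHomogeneous eF) (hF0 : F ≠ 0)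
    (f : Fin s → MvPolynomial (Fin (n+1)) k) (e : Fin s → ℕ)
    (hfh : ∀ i, (f i).IsHomogeneous (e i)) (hf0 : ∀ i, f i ≠ 0)
    (hreg : RingTheory.Sequence.IsWeaklyRegular (Localization.Away F)
      (List.ofFn fun i =>
        algebraMap (MvPolynomial (Fin (n+1)) k) (Localization.Away F) (f i))) :
    idealDeg k (Ideal.comap
        (algebraMap (MvPolynomial (Fin (n+1)) k) (Localization.Away F))
        (Ideal.span (Set.range fun i =>
          algebraMap (MvPolynomial (Fin (n+1)) k) (Localization.Away F) (f i))))
      ≤ ∏ i, e i := by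
  classical
  set rs := List.ofFn fun i => algebraMap (MvPolynomial (Fin (n+1)) k) (Localization.Away F) (f i) with hrs
  set I := Ideal.span (Set.range fun i => algebraMap (MvPolynomial (Fin (n+1)) k) (Localization.Away F) (f i)) with hI
  let J : ℕ → Ideal (MvPolynomial (Fin (n+1)) k) := fun i => (Ideal.ofList (rs.take i)).comap (algebraMap (MvPolynomial (Fin (n+1)) k) (Localization.Away F))
  have hlen : rs.length = s := by simp [hrs]
  have hJs : J s = I.comap (algebraMap (MvPolynomial (Fin (n+1)) k) (Localization.Away F)) := by
    change (Ideal.ofList (rs.take s)).comap (algebraMap (MvPolynomial (Fin (n+1)) k) (Localization.Away F)) = _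
    rw [List.take_of_length_le hlen.le, Ideal.ofList, hI]
    congr 2
    ext x
    simp [hrs, List.mem_ofFn]
  -- upper bound
  have hup : ∀ i (hi : i ≤ s), ∀ m, partialSum^[i] (hilbF k (J i)) m ≤
      (∏ j : Fin i, e (Fin.castLE hi j)) * (m + n).choose n := by
    intro i
    induction i with
    | zero => intro _ m; simpa using hilbF_le (J 0) m
    | succ i ih =>
      intro hi m
      have his : i < s := hi
      have hmono : Monotone fun m : ℕ => (m + n).choose n := fun a b hab =>
        Nat.choose_le_choose _ (by omega)
      rw [Fin.prod_univ_castSucc, mul_comm (∏ _, _)]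
      have hsub : Ideal.ofList (rs.take i) ≤ Ideal.ofList (rs.take (i+1)) :=
        Ideal.span_mono fun x hx => List.take_subset_take_left rs (Nat.le_succ i) hx
      refine partialSum_step i (e ⟨i, his⟩) _ (hilbF k (J i)) (hilbF k (J (i+1))) _ hmono ?_
        (ih his.le) m
      refine hilbF_step (J i) (J (i+1)) (f ⟨i, his⟩) _ (hfh _) (Ideal.comap_mono hsub) ?_
        (fun x hx => regular_contraction f hreg ⟨i, his⟩ x hx)
      rw [Ideal.mem_comap]
      apply Ideal.subset_span
      change _ ∈ rs.take (i+1)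
      rw [List.mem_take_iff_getElem]
      exact ⟨i, by omega, by simp [hrs]⟩
  have hups := hup s le_rfl
  rw [hJs] at hups
  apply idealDeg_le_of_bound
  intro P hP
  by_cases htop : I = ⊤
  · have hP0 : P = 0 := by
      apply Polynomial.eq_zero_of_infinite_isRoot
      obtain ⟨N, hN⟩ := Filter.eventually_atTop.1 hP
      refine ((Set.Ici_infinite N).image (Nat.cast_injective (R := ℚ)).injOn).mono ?_
      rintro _ ⟨m, hm, rfl⟩
      have := hN m hm
      rw [htop, Ideal.comap_top, hilbF_top] at this
      simpa using this.symm
    subst hP0; rw [Polynomial.leadingCoeff_zero, mul_zero]; positivity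
  · refine degree_bound_numeric n s _ _ P hP ?_ (by simpa using hups)
    intro m
    have : IsNoetherianRing (Localization.Away F) := IsLocalization.isNoetherianRing (Submonoid.powers F) (Localization.Away F) inferInstance
    obtain ⟨Q, hQ⟩ := Ideal.nonempty_minimalPrimes htop
    have hQp : Q.IsPrime := hQ.1.1
    have hQh : Q.height ≤ s := by
      refine (Ideal.height_le_card_of_mem_minimalPrimes_span (Set.finite_range _) hQ).trans ?_
      have h1 : (Set.range fun i => algebraMap (MvPolynomial (Fin (n+1)) k) (Localization.Away F) (f i)).ncard ≤ s := by
        rw [← Set.image_univ]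
        refine (Set.ncard_image_le Set.finite_univ).trans ?_
        rw [Set.ncard_univ]; simp
      exact_mod_cast h1
    have hPh : (Q.under (MvPolynomial (Fin (n+1)) k)).height = Q.height := IsLocalization.height_under (Submonoid.powers F) Q
    obtain ⟨T, hT, hTc⟩ := exists_indep_vars (n+1) (Q.under (MvPolynomial (Fin (n+1)) k))
    rw [hPh] at hTc
    have hTs : n + 1 ≤ T.card + s := by
      have := hTc.trans (add_le_add le_rfl hQh)
      exact_mod_cast this
    have h1 := hilbF_ge (I.comap (algebraMap (MvPolynomial (Fin (n+1)) k) (Localization.Away F))) (Q.under (MvPolynomial (Fin (n+1)) k)) (Ideal.comap_mono hQ.1.2) T hT m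
    rw [card_antidiag_aux T (T.card - 1) m (by omega)] at h1
    exact (choose_mono_aux (a := n - s) (b := T.card - 1) m (by omega)).trans h1
end

section
/- Let k be an algebraically closed field of characteristic zero, s ≤ n, and f_1,...,f_s ∈ k[x_1,...,x_n] polynomials defining a proper ideal of Krull dimension n − s. Let d = max deg f_i and let δ be the geometric degree of the system f_1,...,f_s. Then for any g ∈ (f_1,...,f_s) there exist a_1,...,a_s ∈ k[x_1,...,x_n] with g = a_1 f_1 + ... + a_s f_s and deg(a_i f_i) ≤ deg g + s²·(d + 3n)·δ for all i. -/
open MvPolynomial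

/-- The homogenization of an affine ideal `J ⊆ k[x₁,…,xₙ]` in `k[x₀,…,xₙ]`
(`x₀` is the homogenizing variable): the ideal generated by all homogeneous
polynomials whose dehomogenization (`x₀ ↦ 1`) lies in `J`. -/
noncomputable def homogIdeal (k : Type*) [Field k] {n : ℕ}
    (J : Ideal (MvPolynomial (Fin n) k)) : Ideal (MvPolynomial (Fin (n+1)) k) :=
  Ideal.span {F | (∃ m, F.IsHomogeneous m) ∧
    aeval (Fin.cases 1 X : Fin (n+1) → MvPolynomial (Fin n) k) F ∈ J}


lemma rc_height_max {k : Type*} [Field k] : ∀ (n : ℕ) (M : Ideal (MvPolynomial (Fin n) k))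
    [M.IsMaximal], M.height = n := by
  intro n
  induction n with
  | zero =>
    intro M hM
    have e : MvPolynomial (Fin 0) k ≃+* k := (isEmptyAlgEquiv k (Fin 0)).toRingEquiv
    have hf : IsField (MvPolynomial (Fin 0) k) := e.toMulEquiv.isField (Field.toIsField k)
    let := hf.toField
    have : M = ⊥ := by
      rcases Ideal.eq_bot_or_top (K := MvPolynomial (Fin 0) k) M with h | h
      · exact h
      · exact absurd h hM.ne_top
    rw [this]; simp
  | succ n ih =>
    intro M hM
    let e := (finSuccEquiv k n).toRingEquiv
    let P : Ideal (Polynomial (MvPolynomial (Fin n) k)) := M.map e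
    have hP : P.IsMaximal := Ideal.map_isMaximal_of_equiv e
    have h1 : P.height = M.height := e.height_map M
    have h2 : (P.comap (Polynomial.C)).IsMaximal :=
      Polynomial.isMaximal_comap_C_of_isJacobsonRing P
    have h3 : P.LiesOver (P.comap Polynomial.C) := ⟨rfl⟩
    rw [← h1, Polynomial.height_eq_height_add_one (P.comap Polynomial.C) P, ih]
    simp

lemma rc_dim_le_of_integral {A B : Type*} [CommRing A] [CommRing B] [Algebra B A]
    [Algebra.IsIntegral B A] : ringKrullDim A ≤ ringKrullDim B := by
  refine Order.krullDim_le_of_strictMono (PrimeSpectrum.comap (algebraMap B A)) ?_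
  intro p q hpq
  exact Ideal.IsIntegral.comap_lt_comap (R := B) (I := p.asIdeal) (J := q.asIdeal) hpq

lemma rc_dim_ge_of_integral {A B : Type*} [CommRing A] [CommRing B] [Algebra B A]
    [Algebra.IsIntegral B A] (hinj : Function.Injective (algebraMap B A)) :
    ringKrullDim B ≤ ringKrullDim A := by
  unfold ringKrullDim Order.krullDim
  refine iSup_le fun l => ?_
  obtain ⟨Q, -, hQ, hQl⟩ := Ideal.exists_ideal_over_prime_of_isIntegral
    (S := A) (RelSeries.head l).asIdeal ⊥ (by
      intro x hx
      have hx0 : algebraMap B A x = 0 := hx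
      rw [(map_eq_zero_iff _ hinj).1 hx0]
      exact Ideal.zero_mem _)
  have : Q.LiesOver (RelSeries.head l).asIdeal := ⟨hQl.symm⟩
  obtain ⟨L, hL, -⟩ := Ideal.exists_ltSeries_of_hasGoingUp l Q
  rw [← hL]
  exact le_iSup (fun p : LTSeries (PrimeSpectrum A) => ((p.length : ℕ∞) : WithBot ℕ∞)) L

/-- weak regularity in elementary form -/
def RCReg {k : Type*} [Field k] {n m : ℕ} (q : Fin m → MvPolynomial (Fin n) k) : Prop :=
  ∀ i : Fin m, ∀ a, q i * a ∈ Ideal.span (q '' {j | (j : ℕ) < i}) →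
    a ∈ Ideal.span (q '' {j | (j : ℕ) < i})

lemma rc_dim_quot_le {k : Type*} [Field k] {n m : ℕ} (q : Fin m → MvPolynomial (Fin n) k)
    (hq : RCReg q) : ∀ i : ℕ, i ≤ m →
    ringKrullDim (MvPolynomial (Fin n) k ⧸ Ideal.span (q '' {j | (j : ℕ) < i})) + i ≤ n := by
  intro i
  induction i with
  | zero =>
    intro _
    have := ringKrullDim_quotient_le (R := MvPolynomial (Fin n) k) (Ideal.span (q '' {j | (j : ℕ) < 0}))
    simpa using this
  | succ i ih =>
    intro hi
    have h1 := ih (by omega)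
    refine le_trans ?_ h1
    let I := Ideal.span (q '' {j : Fin m | (j : ℕ) < i})
    let I' := Ideal.span (q '' {j : Fin m | (j : ℕ) < i + 1})
    have hle : I ≤ I' := Ideal.span_mono (Set.image_mono (fun j (hj : (j:ℕ) < i) => Nat.lt_succ_of_lt hj))
    have := ringKrullDim_succ_le_of_surjective (Ideal.Quotient.factor hle)
      (Ideal.Quotient.factor_surjective hle) (r := Ideal.Quotient.mk I (q ⟨i, hi⟩)) (by
        rw [mem_nonZeroDivisors_iff_right]
        intro x hx
        obtain ⟨a, rfl⟩ := Ideal.Quotient.mk_surjective x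
        rw [← map_mul, Ideal.Quotient.eq_zero_iff_mem, mul_comm] at hx
        rw [Ideal.Quotient.eq_zero_iff_mem]
        exact hq ⟨i, hi⟩ a hx) (by
        rw [Ideal.Quotient.factor_mk, Ideal.Quotient.eq_zero_iff_mem]
        exact Ideal.subset_span ⟨_, by simp, rfl⟩)
    push_cast
    rw [add_comm (i : WithBot ℕ∞) 1, ← add_assoc]
    gcongr

lemma rc_span_range_eq {k : Type*} [Field k] {n m : ℕ} (q : Fin m → MvPolynomial (Fin n) k) :
    Ideal.span (q '' {j | (j : ℕ) < m}) = Ideal.span (Set.range q) := by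
  congr 1
  rw [← Set.image_univ]
  congr 1
  ext j; simp

lemma rc_spanFinrank_le {k : Type*} [Field k] {n m : ℕ} (q : Fin m → MvPolynomial (Fin n) k) :
    (Ideal.span (Set.range q)).spanFinrank ≤ m := by
  have := Submodule.spanFinrank_span_le_ncard_of_finite (R := MvPolynomial (Fin n) k) (Set.finite_range q)
  refine this.trans ?_
  rw [← Set.image_univ]
  refine (Set.ncard_image_le Set.finite_univ).trans ?_
  simp [Set.ncard_univ]

lemma rc_dim_quot_ge {k : Type*} [Field k] {n m : ℕ} (q : Fin m → MvPolynomial (Fin n) k)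
    (hJ : Ideal.span (Set.range q) ≠ ⊤) :
    (n : WithBot ℕ∞) ≤ ringKrullDim (MvPolynomial (Fin n) k ⧸ Ideal.span (Set.range q)) + m := by
  obtain ⟨M, hM, hle⟩ := Ideal.exists_le_maximal _ hJ
  have h := height_le_ringKrullDim_quotient_add_spanFinrank (p := M) hle
  rw [rc_height_max n M] at h
  refine le_trans (by exact_mod_cast h) ?_
  gcongr
  exact rc_spanFinrank_le q

lemma rc_rank_eq {k : Type*} [Field k] {n m r : ℕ} (q : Fin m → MvPolynomial (Fin n) k)
    (hq : RCReg q) (hJ : Ideal.span (Set.range q) ≠ ⊤)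
    [Algebra (MvPolynomial (Fin r) k) (MvPolynomial (Fin n) k ⧸ Ideal.span (Set.range q))]
    [Algebra.IsIntegral (MvPolynomial (Fin r) k) (MvPolynomial (Fin n) k ⧸ Ideal.span (Set.range q))]
    (hinj : Function.Injective (algebraMap (MvPolynomial (Fin r) k)
      (MvPolynomial (Fin n) k ⧸ Ideal.span (Set.range q)))) : m + r = n := by
  have h1 := rc_dim_quot_ge q hJ
  have h2 := rc_dim_quot_le q hq m le_rfl
  rw [rc_span_range_eq] at h2
  have h3 := rc_dim_ge_of_integral hinj
  have h4 := rc_dim_le_of_integral (A := MvPolynomial (Fin n) k ⧸ Ideal.span (Set.range q))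
    (B := MvPolynomial (Fin r) k)
  have h5 := le_antisymm h4 h3
  rw [h5] at h1 h2
  simp at h1 h2
  have h6 : (n : WithBot ℕ∞) = ((r + m : ℕ) : WithBot ℕ∞) := by
    push_cast; exact le_antisymm h1 h2
  have : n = r + m := by exact_mod_cast h6
  omega

lemma rc_unmixed {k : Type*} [Field k] {n m r : ℕ} (q : Fin m → MvPolynomial (Fin n) k)
    (hmr : m + r = n)
    (φ : MvPolynomial (Fin r) k →+* MvPolynomial (Fin n) k)
    (h_itg : ((Ideal.Quotient.mk (Ideal.span (Set.range q))).comp φ).IsIntegral)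
    (p : Ideal (MvPolynomial (Fin n) k)) (hp : p ∈ (Ideal.span (Set.range q)).minimalPrimes)
    (c : MvPolynomial (Fin r) k) (hc : φ c ∈ p) : c = 0 := by
  classical
  by_contra hc0
  set J := Ideal.span (Set.range q) with hJdef
  have := hp.1.1
  have hfin : J.minimalPrimes.Finite := Ideal.finite_minimalPrimes_of_isNoetherianRing _ J
  -- an element in all other minimal primes
  obtain ⟨f, hfp, hf⟩ : ∃ f, f ∉ p ∧ ∀ p' ∈ J.minimalPrimes, p' ≠ p → f ∈ p' := by
    have : ∀ p' ∈ J.minimalPrimes, p' ≠ p → ∃ g ∈ p', g ∉ p := by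
      intro p' hp' hne
      by_contra hcon
      push Not at hcon
      have hle : p' ≤ p := hcon
      exact hne (le_antisymm hle (hp.2 hp'.1 hle))
    choose! g hg hg' using this
    refine ⟨∏ p' ∈ hfin.toFinset.erase p, g p', ?_, ?_⟩
    · rw [Ideal.IsPrime.prod_mem_iff]
      push Not
      intro p' hp'
      simp only [Finset.mem_erase, Set.Finite.mem_toFinset] at hp'
      exact hg' p' hp'.2 hp'.1
    · intro p' hp' hne
      refine Ideal.mem_of_dvd _ (Finset.dvd_prod_of_mem g (a := p') (by simp [hne, hp'])) (hg p' hp' hne)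
  -- a maximal ideal over p missing f
  obtain ⟨M, hM, hpM, hfM⟩ : ∃ M : Ideal (MvPolynomial (Fin n) k), M.IsMaximal ∧ p ≤ M ∧ f ∉ M := by
    have h1 : p.jacobson = p := (isJacobsonRing_iff_prime_eq.1 inferInstance) p hp.1.1
    by_contra hcon
    push Not at hcon
    apply hfp
    rw [← h1, Ideal.jacobson, Ideal.mem_sInf]
    intro M hM
    exact hcon M hM.2 hM.1
  have hJM : J ≤ M := hp.1.2.trans hpM
  have h1 := Ideal.height_le_height_add_spanFinrank_of_le (I := J) (p := M) hJM
  rw [rc_height_max n M] at h1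
  set M' := M.map (Ideal.Quotient.mk J)
  have : M'.IsPrime := Ideal.isPrime_map_quotientMk_of_isPrime hJM
  have h2 : (r : ℕ∞) ≤ M'.height := by
    have h3 : (n : ℕ∞) ≤ M'.height + m := h1.trans (by gcongr; exact rc_spanFinrank_le q)
    have h3' : (n : ℕ∞) = (r : ℕ∞) + m := by
      rw [← Nat.cast_add, Nat.cast_inj]; omega
    rw [h3'] at h3
    exact (ENat.add_le_add_iff_right (by simp)).1 h3
  -- compare with dimension of B/c
  have h4 : (r : WithBot ℕ∞) ≤ ringKrullDim (MvPolynomial (Fin r) k ⧸ Ideal.span {c}) := by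
    have hcomp : ∀ P : Ideal (MvPolynomial (Fin n) k ⧸ J), P.IsPrime → P ≤ M' →
        p ≤ P.comap (Ideal.Quotient.mk J) := by
      intro P hP hPM
      have := hP
      have hJP : J ≤ P.comap (Ideal.Quotient.mk J) := by
        intro x hx
        rw [Ideal.mem_comap, Ideal.Quotient.eq_zero_iff_mem.2 hx]; exact P.zero_mem
      obtain ⟨p', hp', hle⟩ := Ideal.exists_minimalPrimes_le hJP
      by_cases h : p' = p
      · exact h ▸ hle
      · exfalso
        apply hfM
        have : f ∈ P.comap (Ideal.Quotient.mk J) := hle (hf p' hp' h)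
        have h7 : Ideal.Quotient.mk J f ∈ M' := hPM this
        obtain ⟨g, hg, hgf⟩ := (Ideal.mem_map_iff_of_surjective _ Ideal.Quotient.mk_surjective).1 h7
        have : f - g ∈ J := (Ideal.Quotient.eq).1 hgf.symm
        simpa using M.add_mem (hJM this) hg
    let : Algebra (MvPolynomial (Fin r) k) (MvPolynomial (Fin n) k ⧸ J) :=
      ((Ideal.Quotient.mk J).comp φ).toAlgebra
    have : Algebra.IsIntegral (MvPolynomial (Fin r) k) (MvPolynomial (Fin n) k ⧸ J) := ⟨h_itg⟩
    replace h2 : (r : ℕ∞) ≤ Order.height (⟨M', inferInstance⟩ : PrimeSpectrum _) :=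
      h2.trans (PrimeSpectrum.height_eq_orderHeight ⟨M', inferInstance⟩).le
    obtain ⟨l, hl, hlen⟩ := Order.exists_series_of_le_height _ h2
    rw [ringKrullDim_quotient]
    refine le_trans (Nat.cast_le.2 hlen.ge) ?_
    let L : LTSeries (PrimeSpectrum.zeroLocus (R := MvPolynomial (Fin r) k) ↑(Ideal.span {c})) :=
      { length := l.length
        toFun := fun i => ⟨PrimeSpectrum.comap (algebraMap _ (MvPolynomial (Fin n) k ⧸ J)) (l i), by
          rw [PrimeSpectrum.mem_zeroLocus, SetLike.coe_subset_coe, Ideal.span_singleton_le_iff_mem]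
          refine hcomp (l i).asIdeal (l i).2 ?_ hc
          have : l i ≤ l.last := LTSeries.monotone l (Fin.le_last i)
          rw [hl] at this
          exact this⟩
        step := fun i => Ideal.IsIntegral.comap_lt_comap (R := MvPolynomial (Fin r) k)
          (I := (l i.castSucc).asIdeal) (J := (l i.succ).asIdeal) (l.step i) }
    exact Order.LTSeries.length_le_krullDim L
  have h5 := ringKrullDim_quotient_succ_le_of_nonZeroDivisor (mem_nonZeroDivisors_of_ne_zero hc0)
  have h6 : (r : WithBot ℕ∞) + 1 ≤ r := by
    refine le_trans (add_le_add_left h4 1) (h5.trans ?_)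
    simp
  have : r + 1 ≤ r := by exact_mod_cast h6
  omega

/-- Rees-type algebra of `w` inside `A[T]`. -/
noncomputable def reesB (k : Type*) [Field k] {A : Type*} [CommRing A] [Algebra k A] {r : ℕ}
    (w : Fin r → A) : Subalgebra k (Polynomial A) :=
  Algebra.adjoin k (insert Polynomial.X (Set.range fun j => Polynomial.C (w j) * Polynomial.X))

/-- `a` is integral of degree at most `D`. -/
def DInt (k : Type*) [Field k] {A : Type*} [CommRing A] [Algebra k A] {r : ℕ}
    (w : Fin r → A) (D : ℕ) (a : A) : Prop :=
  IsIntegral (reesB k w) (Polynomial.C a * Polynomial.X ^ D)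

section
variable {k : Type*} [Field k] {A : Type*} [CommRing A] [Algebra k A] {r : ℕ} (w : Fin r → A)

lemma reesB_X : (Polynomial.X : Polynomial A) ∈ reesB k w :=
  Algebra.subset_adjoin (Set.mem_insert _ _)

lemma reesB_w (j : Fin r) : (Polynomial.C (w j) * Polynomial.X : Polynomial A) ∈ reesB k w :=
  Algebra.subset_adjoin (Set.mem_insert_of_mem _ ⟨j, rfl⟩)

lemma rc_isIntegral_of_mem {x : Polynomial A} (hx : x ∈ reesB k w) : IsIntegral (reesB k w) x :=
  isIntegral_algebraMap (R := reesB k w) (A := Polynomial A) (x := ⟨x, hx⟩)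

lemma DInt_w (j : Fin r) : DInt k w 1 (w j) := by
  unfold DInt
  rw [pow_one]
  exact rc_isIntegral_of_mem w (reesB_w w j)

variable {w}

lemma DInt.mono {D D' : ℕ} (h : D ≤ D') {a : A} (ha : DInt k w D a) : DInt k w D' a := by
  unfold DInt at *
  have : (Polynomial.C a * Polynomial.X ^ D' : Polynomial A) =
      (Polynomial.C a * Polynomial.X ^ D) * Polynomial.X ^ (D' - D) := by
    rw [mul_assoc, ← pow_add]; congr 2; omega
  rw [this]
  exact ha.mul ((rc_isIntegral_of_mem w (reesB_X w)).pow _)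

lemma DInt.add {D : ℕ} {a b : A} (ha : DInt k w D a) (hb : DInt k w D b) : DInt k w D (a + b) := by
  unfold DInt at *
  rw [map_add, add_mul]
  exact IsIntegral.add ha hb

lemma DInt.mul {D D' : ℕ} {a b : A} (ha : DInt k w D a) (hb : DInt k w D' b) :
    DInt k w (D + D') (a * b) := by
  unfold DInt at *
  have : (Polynomial.C (a * b) * Polynomial.X ^ (D + D') : Polynomial A) =
      (Polynomial.C a * Polynomial.X ^ D) * (Polynomial.C b * Polynomial.X ^ D') := by
    rw [map_mul]; ring
  rw [this]
  exact IsIntegral.mul ha hb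

lemma DInt_const (D : ℕ) (c : k) : DInt k w D (algebraMap k A c) := by
  unfold DInt
  exact rc_isIntegral_of_mem w ((reesB k w).mul_mem ((reesB k w).algebraMap_mem c)
    ((reesB k w).pow_mem (reesB_X w) _))

lemma DInt_zero (D : ℕ) : DInt k w D (0 : A) := by
  simpa using DInt_const (k := k) (w := w) D 0

lemma DInt_one (D : ℕ) : DInt k w D (1 : A) := by
  simpa using DInt_const (k := k) (w := w) D 1

lemma DInt.sum {ι : Type*} (s : Finset ι) {D : ℕ} {a : ι → A} (h : ∀ i ∈ s, DInt k w D (a i)) :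
    DInt k w D (∑ i ∈ s, a i) := by
  classical
  induction s using Finset.induction_on with
  | empty => simpa using DInt_zero D
  | insert i s hi ih =>
    rw [Finset.sum_insert hi]
    exact (h i (by simp)).add (ih fun j hj => h j (by simp [hj]))

lemma DInt.prod {ι : Type*} (s : Finset ι) {D : ι → ℕ} {a : ι → A}
    (h : ∀ i ∈ s, DInt k w (D i) (a i)) :
    DInt k w (∑ i ∈ s, D i) (∏ i ∈ s, a i) := by
  classical
  induction s using Finset.induction_on with
  | empty => simpa using DInt_one 0
  | insert i s hi ih =>
    rw [Finset.sum_insert hi, Finset.prod_insert hi]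
    exact (h i (by simp)).mul (ih fun j hj => h j (by simp [hj]))

lemma DInt.pow {D : ℕ} {a : A} (h : DInt k w D a) (n : ℕ) : DInt k w (n * D) (a ^ n) := by
  have := DInt.prod (k := k) (w := w) (Finset.range n) (D := fun _ => D) (a := fun _ => a) (fun _ _ => h)
  simpa using this

lemma DInt_monomial {σ : Type*} [Fintype σ] (ξ : σ → A) (hξ : ∀ i, DInt k w 1 (ξ i)) (α : σ →₀ ℕ) :
    DInt k w α.degree (α.prod fun i e => ξ i ^ e) := by
  have := DInt.prod (k := k) (w := w) α.support (D := fun i => α i * 1) (a := fun i => ξ i ^ α i)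
    (fun i _ => (hξ i).pow _)
  simpa [Finsupp.degree_apply, Finsupp.prod] using this

lemma DInt_aeval {σ : Type*} [Fintype σ] (ξ : σ → A) (hξ : ∀ i, DInt k w 1 (ξ i))
    (f : MvPolynomial σ k) : DInt k w f.totalDegree (aeval ξ f) := by
  rw [aeval_def, eval₂_eq]
  refine DInt.sum _ fun α hα => ?_
  have h1 := (DInt_const (k := k) (w := w) 0 (coeff α f)).mul (DInt_monomial ξ hξ α)
  refine DInt.mono ?_ h1
  rw [zero_add]
  exact le_totalDegree hα

lemma DInt.map {A' : Type*} [CommRing A'] [Algebra k A'] (ψ : A →ₐ[k] A') {D : ℕ} {a : A}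
    {w' : Fin r → A'} (hw : ∀ j, ψ (w j) = w' j)
    (h : DInt k w D a) : DInt k w' D (ψ a) := by
  unfold DInt at *
  let Ψ : Polynomial A →ₐ[k] Polynomial A' := Polynomial.mapAlgHom ψ
  have hmem : ∀ x : reesB k w, (Ψ.comp (reesB k w).val) x ∈ reesB k w' := by
    have : (reesB k w).map Ψ ≤ reesB k w' := by
      unfold reesB
      rw [AlgHom.map_adjoin, Algebra.adjoin_le_iff]
      rintro _ ⟨y, hy | ⟨j, rfl⟩, rfl⟩
      · subst hy
        have : Ψ Polynomial.X = Polynomial.X := by simp [Ψ]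
        rw [this]; exact reesB_X w'
      · have : Ψ (Polynomial.C (w j) * Polynomial.X) = Polynomial.C (w' j) * Polynomial.X := by
          simp [Ψ, ← hw]
        simp only [this]; exact reesB_w w' j
    intro x
    exact this ⟨x, x.2, rfl⟩
  have := IsIntegral.map_of_comp_eq (R := reesB k w) (T := reesB k w')
    ((Ψ.comp (reesB k w).val).codRestrict (reesB k w') hmem).toRingHom
    Ψ.toRingHom (by ext x; rfl) h
  simpa [Ψ] using this

lemma reesB_coeff {x : Polynomial A} (hx : x ∈ reesB k w) :
    ∀ j, ∃ p : MvPolynomial (Fin r) k, p.totalDegree ≤ j ∧ x.coeff j = aeval w p := by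
  unfold reesB at hx
  induction hx using Algebra.adjoin_induction with
  | mem x hx =>
    intro j
    rcases hx with rfl | ⟨i, rfl⟩
    · by_cases hj : j = 1
      · subst hj; exact ⟨1, by simp, by simp⟩
      · exact ⟨0, by simp, by rw [Polynomial.coeff_X_of_ne_one hj]; simp⟩
    · by_cases hj : j = 1
      · subst hj
        refine ⟨X i, (totalDegree_X i).le, by simp⟩
      · exact ⟨0, by simp, by simp [Polynomial.coeff_C_mul, Polynomial.coeff_X_of_ne_one hj]⟩
  | algebraMap c =>
    intro j
    by_cases hj : j = 0
    · subst hj; exact ⟨C c, by simp, by simp [Polynomial.algebraMap_apply]⟩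
    · exact ⟨0, by simp, by simp [Polynomial.algebraMap_apply, Polynomial.coeff_C, hj]⟩
  | add x y _ _ hx hy =>
    intro j
    obtain ⟨p, hp, hp'⟩ := hx j
    obtain ⟨p2, hp2, hp2'⟩ := hy j
    exact ⟨p + p2, (totalDegree_add _ _).trans (max_le hp hp2), by simp [hp', hp2']⟩
  | mul x y _ _ hx hy =>
    intro j
    choose p hp hp' using hx
    choose p2 hp2 hp2' using hy
    refine ⟨∑ ij ∈ Finset.HasAntidiagonal.antidiagonal j, p ij.1 * p2 ij.2, ?_, ?_⟩
    · refine totalDegree_finsetSum_le fun ij hij => ?_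
      rw [Finset.HasAntidiagonal.mem_antidiagonal] at hij
      refine (totalDegree_mul _ _).trans ?_
      have := hp ij.1; have := hp2 ij.2; omega
    · rw [Polynomial.coeff_mul, map_sum]
      refine Finset.sum_congr rfl fun ij _ => ?_
      rw [map_mul, hp', hp2']

/-- the relation obtained from `DInt` -/
lemma DInt.relation [Nontrivial A] {D : ℕ} {a : A} (h : DInt k w D a) :
    ∃ (N : ℕ) (p : ℕ → MvPolynomial (Fin r) k), 0 < N ∧
      (∀ i < N, (p i).totalDegree ≤ D * (N - i)) ∧
      a ^ N + ∑ i ∈ Finset.range N, aeval w (p i) * a ^ i = 0 := by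
  obtain ⟨P, hP, hP0⟩ := h
  let N := P.natDegree
  choose p hp hp' using fun i : ℕ => reesB_coeff (P.coeff i).2 (D * (N - i))
  refine ⟨N, p, ?_, fun i _ => hp i, ?_⟩
  · rw [Nat.pos_iff_ne_zero]
    intro h0
    have : P = 1 := by
      exact hP.natDegree_eq_zero.1 h0
    rw [this] at hP0
    simp at hP0
  · rw [Polynomial.eval₂_eq_sum_range, Finset.sum_range_succ] at hP0
    have h2 := congrArg (fun x => Polynomial.coeff x (D * N)) hP0
    simp only [Polynomial.coeff_add, Polynomial.finsetSum_coeff, Polynomial.coeff_zero] at h2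
    rw [add_comm] at h2
    convert h2 using 2
    · have : P.coeff P.natDegree = 1 := hP
      rw [this, map_one, one_mul, mul_pow, ← map_pow, ← pow_mul, Polynomial.coeff_C_mul_X_pow]
      simp [N]
    · refine Finset.sum_congr rfl fun i hi => ?_
      rw [Finset.mem_range] at hi
      rw [mul_pow, ← map_pow, ← pow_mul]
      have : D * N = D * (N - i) + D * i := by rw [← mul_add]; congr 1; omega
      rw [mul_comm (Polynomial.C (a ^ i)), ← mul_assoc, Polynomial.coeff_mul_C, this, Polynomial.coeff_mul_X_pow, ← hp' i]
      rfl

lemma DInt.descent [Nontrivial A] (hw : AlgebraicIndependent k w) {D : ℕ} (c : MvPolynomial (Fin r) k)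
    (h : DInt k w D (aeval w c)) : c.totalDegree ≤ D := by
  obtain ⟨N, p, hN, hp, hrel⟩ := h.relation
  by_contra hcon
  push Not at hcon
  have h1 : c ^ N + ∑ i ∈ Finset.range N, p i * c ^ i = 0 := by
    apply hw
    simpa using hrel
  have h2 : c ^ N = - ∑ i ∈ Finset.range N, p i * c ^ i := eq_neg_of_add_eq_zero_left h1
  have hc0 : c ≠ 0 := by rintro rfl; simp at hcon
  have h3 : (c ^ N).totalDegree = N * c.totalDegree := by
    clear h1 h2 hN hp hrel
    induction N with
    | zero => simp
    | succ N ihN => rw [pow_succ, totalDegree_mul_of_isDomain (pow_ne_zero _ hc0) hc0, ihN]; ring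
  have h4 : (c ^ N).totalDegree ≤ N * c.totalDegree - 1 := by
    rw [h2, totalDegree_neg]
    refine totalDegree_finsetSum_le fun i hi => ?_
    rw [Finset.mem_range] at hi
    refine (totalDegree_mul _ _).trans ?_
    have h5 := hp i hi
    have h6 := totalDegree_pow c i
    obtain ⟨j, hj, rfl⟩ : ∃ j, 0 < j ∧ N = i + j := ⟨N - i, by omega, by omega⟩
    have h7 : D * (i + j - i) = D * j := by congr 1; omega
    rw [h7] at h5
    obtain ⟨e, he⟩ : ∃ e, c.totalDegree = D + 1 + e := ⟨c.totalDegree - (D + 1), by omega⟩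
    rw [he] at h6 ⊢
    have : D * j + i * (D + 1 + e) + 1 ≤ (i + j) * (D + 1 + e) := by nlinarith
    omega
  have : 0 < N * c.totalDegree := Nat.mul_pos hN (by omega)
  omega

lemma DInt.isIntegral [Nontrivial A] [Algebra (MvPolynomial (Fin r) k) A]
    (hw : ∀ c, algebraMap (MvPolynomial (Fin r) k) A c = aeval w c) {D : ℕ} {a : A}
    (h : DInt k w D a) : IsIntegral (MvPolynomial (Fin r) k) a := by
  obtain ⟨N, p, hN, hp, hrel⟩ := h.relation
  refine ⟨Polynomial.X ^ N + ∑ i ∈ Finset.range N, Polynomial.C (p i) * Polynomial.X ^ i, ?_, ?_⟩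
  · refine Polynomial.monic_X_pow_add ?_
    refine (Polynomial.degree_sum_le _ _).trans_lt ?_
    rw [Finset.sup_lt_iff (by exact WithBot.bot_lt_coe N)]
    intro i hi
    refine (Polynomial.degree_C_mul_X_pow_le _ _).trans_lt ?_
    exact_mod_cast Finset.mem_range.1 hi
  · rw [← hrel]
    simp [Polynomial.eval₂_finsetSum, hw]
end

lemma rc_coeff_prod {S : Type*} [CommRing S] {ι : Type*} (s : Finset ι) (f : ι → Polynomial S)
    (e : ι → ℕ) (h : ∀ i ∈ s, (f i).natDegree ≤ e i) :
    (∏ i ∈ s, f i).natDegree ≤ ∑ i ∈ s, e i ∧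
    (∏ i ∈ s, f i).coeff (∑ i ∈ s, e i) = ∏ i ∈ s, (f i).coeff (e i) := by
  classical
  induction s using Finset.induction_on with
  | empty => simp
  | insert i s hi ih =>
    have h1 := ih fun j hj => h j (by simp [hj])
    have h2 := h i (by simp)
    rw [Finset.prod_insert hi, Finset.sum_insert hi, Finset.prod_insert hi]
    refine ⟨Polynomial.natDegree_mul_le_of_le h2 h1.1, ?_⟩
    rw [Polynomial.coeff_mul_add_eq_of_natDegree_le h2 h1.1, h1.2]

/-- linear Noether normalization with degree control -/
lemma rc_noether {k : Type*} [Field k] [Infinite k] {A : Type*} [CommRing A] [Nontrivial A]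
    [Algebra k A] : ∀ (n : ℕ) (v : Fin n → A), ∃ (r : ℕ) (w : Fin r → A),
      (∀ j, w j ∈ Submodule.span k (Set.range v)) ∧ AlgebraicIndependent k w ∧
      ∀ i, DInt k w 1 (v i) := by
  intro n
  induction n with
  | zero =>
    intro v
    exact ⟨0, v, fun j => j.elim0, algebraicIndependent_empty_type, fun j => j.elim0⟩
  | succ n ih =>
    intro v
    by_cases hv : AlgebraicIndependent k v
    · exact ⟨n + 1, v, fun j => Submodule.subset_span ⟨j, rfl⟩, hv, fun i => DInt_w v i⟩
    rw [algebraicIndependent_iff] at hv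
    push Not at hv
    obtain ⟨f, hf, hf0⟩ := hv
    set D := f.totalDegree with hD
    set fD := homogeneousComponent D f with hfD
    have hfD0 : fD ≠ 0 := by
      intro h0
      obtain ⟨α, hα, hα'⟩ := Finset.exists_mem_eq_sup f.support (support_nonempty.2 hf0)
        (fun s => s.sum fun _ e => e)
      have h1 := congrArg (coeff α) h0
      rw [hfD, coeff_homogeneousComponent, if_pos, coeff_zero] at h1
      · exact (mem_support_iff.1 hα) h1
      · exact hα'.symm
    obtain ⟨μ, hμ⟩ : ∃ μ : Fin (n+1) → k, eval μ (X 0 * fD) ≠ 0 := by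
      by_contra hcon
      push Not at hcon
      have : X 0 * fD = 0 := MvPolynomial.funext fun μ => by rw [hcon, map_zero]
      rcases mul_eq_zero.1 this with h | h
      · exact X_ne_zero _ h
      · exact hfD0 h
    rw [map_mul, eval_X] at hμ
    have hμ0 : μ 0 ≠ 0 := left_ne_zero_of_mul hμ
    have hμf : eval μ fD ≠ 0 := right_ne_zero_of_mul hμ
    let lam : Fin n → k := fun i => μ i.succ / μ 0
    let L0 : Fin (n+1) → k := Fin.cons 1 lam
    have hL0 : eval L0 fD ≠ 0 := by
      have h1 : μ = fun i => μ 0 * L0 i := by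
        funext i
        refine Fin.cases ?_ (fun i => ?_) i
        · simp [L0]
        · simp [L0, lam]; field_simp
      have h2 : eval μ fD = μ 0 ^ D * eval L0 fD := by
        conv_lhs => rw [h1]
        rw [eval_eq', eval_eq', Finset.mul_sum]
        refine Finset.sum_congr rfl fun α hα => ?_
        have h3 := (homogeneousComponent_isHomogeneous D f) (mem_support_iff.1 hα)
        replace h3 : α.degree = D := (congrArg (fun F => F α) (Finsupp.degree_eq_weight_one (R := ℕ))).trans h3
        simp only [mul_pow, Finset.prod_mul_distrib]
        rw [Finset.prod_pow_eq_pow_sum, ← Finsupp.degree_eq_sum, h3]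
        ring
      intro h; rw [h2, h, mul_zero] at hμf; exact hμf rfl
    let v' : Fin n → A := fun i => v i.succ - lam i • v 0
    obtain ⟨r, w, hw, hind, h_itg⟩ := ih v'
    refine ⟨r, w, fun j => ?_, hind, ?_⟩
    · refine Submodule.span_le.2 ?_ (hw j)
      rintro _ ⟨i, rfl⟩
      exact Submodule.sub_mem _ (Submodule.subset_span ⟨_, rfl⟩)
        (Submodule.smul_mem _ _ (Submodule.subset_span ⟨_, rfl⟩))
    have key : DInt k w 1 (v 0) := by
      unfold DInt
      set S := integralClosure (reesB k w) (Polynomial A) with hS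
      let z : Fin n → S := fun i => ⟨Polynomial.C (v' i) * Polynomial.X ^ 1, h_itg i⟩
      let T : S := ⟨Polynomial.X, rc_isIntegral_of_mem w (reesB_X w)⟩
      let κ : k →+* S := (algebraMap (reesB k w) S).comp (algebraMap k (reesB k w))
      have hκ : ∀ c, ((κ c : S) : Polynomial A) = Polynomial.C (algebraMap k A c) := fun c => rfl
      let L : Fin (n+1) → Polynomial S := Fin.cons Polynomial.X
        (fun i => Polynomial.C (z i) + Polynomial.C (κ (lam i)) * Polynomial.X)
      have hL1 : ∀ i, (L i).natDegree ≤ 1 := by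
        intro i
        refine Fin.cases ?_ (fun i => ?_) i
        · simp [L]
        · simp only [L, Fin.cons_succ]
          compute_degree
      have hL2 : ∀ i, (L i).coeff 1 = κ (L0 i) := by
        intro i
        refine Fin.cases ?_ (fun i => ?_) i
        · simp [L, L0]
        · simp [L, L0, Polynomial.coeff_C]
      let y : Polynomial A := Polynomial.C (v 0) * Polynomial.X ^ 1
      have hL3 : ∀ i, Polynomial.eval₂ (algebraMap S (Polynomial A)) y (L i) =
          Polynomial.C (v i) * Polynomial.X := by
        intro i
        refine Fin.cases ?_ (fun i => ?_) i
        · simp [L, y]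
        · simp only [L, Fin.cons_succ, Polynomial.eval₂_add, Polynomial.eval₂_C,
            Polynomial.eval₂_mul, Polynomial.eval₂_X]
          change Polynomial.C (v' i) * Polynomial.X ^ 1 + Polynomial.C (algebraMap k A (lam i)) * y = _
          simp only [v', y, pow_one, Algebra.smul_def, map_sub, map_mul]
          ring
      let M : (Fin (n+1) →₀ ℕ) → Polynomial S := fun α =>
        Polynomial.C (κ (coeff α f) * T ^ (D - α.degree)) * ∏ i, L i ^ α i
      let G : Polynomial S := ∑ α ∈ f.support, M α
      have hprod : ∀ α : Fin (n+1) →₀ ℕ, (∏ i, L i ^ α i).natDegree ≤ α.degree ∧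
          (∏ i, L i ^ α i).coeff α.degree = ∏ i, κ (L0 i) ^ α i := by
        intro α
        have := rc_coeff_prod (S := S) Finset.univ (fun i => L i ^ α i) α (fun i _ => by
          simpa using Polynomial.natDegree_pow_le_of_le (α i) (hL1 i))
        rw [← Finsupp.degree_eq_sum] at this
        refine ⟨this.1, this.2.trans (Finset.prod_congr rfl fun i _ => ?_)⟩
        have h5 := Polynomial.coeff_pow_of_natDegree_le (m := α i) (hL1 i)
        rw [mul_one] at h5
        rw [h5, hL2]
      have hαD : ∀ α ∈ f.support, α.degree ≤ D := fun α hα => le_totalDegree hα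
      have hGdeg : G.natDegree ≤ D := by
        refine Polynomial.natDegree_sum_le_of_forall_le _ _ fun α hα => ?_
        exact (Polynomial.natDegree_C_mul_le _ _).trans ((hprod α).1.trans (hαD α hα))
      have hGD : G.coeff D = κ (eval L0 fD) := by
        rw [Polynomial.finsetSum_coeff]
        have h6 : ∀ α ∈ f.support, (M α).coeff D =
            κ (if α.degree = D then coeff α f * ∏ i, L0 i ^ α i else 0) := by
          intro α hα
          simp only [M]
          rw [Polynomial.coeff_C_mul]
          split_ifs with h
          · rw [← h, (hprod α).2]; simp
          · rw [Polynomial.coeff_eq_zero_of_natDegree_lt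
              ((hprod α).1.trans_lt (lt_of_le_of_ne (hαD α hα) h))]; simp
        rw [Finset.sum_congr rfl h6, ← map_sum, ← Finset.sum_filter, hfD, homogeneousComponent_apply, map_sum (eval L0)]
        congr 1
        refine Finset.sum_congr rfl fun α _ => ?_
        rw [eval_monomial, Finsupp.prod_fintype _ _ (by simp)]
      have hG0 : Polynomial.eval₂ (algebraMap S (Polynomial A)) y G = 0 := by
        rw [Polynomial.eval₂_finsetSum]
        have h7 : ∀ α ∈ f.support, Polynomial.eval₂ (algebraMap S (Polynomial A)) y (M α) =
            Polynomial.X ^ D * Polynomial.C (algebraMap k A (coeff α f) * ∏ i, v i ^ α i) := by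
          intro α hα
          simp only [M]
          rw [Polynomial.eval₂_mul, Polynomial.eval₂_C, Polynomial.eval₂_finsetProd]
          simp only [Polynomial.eval₂_pow, hL3, mul_pow, Finset.prod_mul_distrib]
          change (Polynomial.C (algebraMap k A (coeff α f)) * Polynomial.X ^ (D - α.degree)) * _ = _
          rw [Finset.prod_pow_eq_pow_sum, ← Finsupp.degree_eq_sum]
          have : (Polynomial.X : Polynomial A) ^ D = Polynomial.X ^ (D - α.degree) * Polynomial.X ^ α.degree := by
            rw [← pow_add]; congr 1; have := hαD α hα; omega
          rw [this]
          simp only [map_mul, map_prod, map_pow]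
          ring
        rw [Finset.sum_congr rfl h7, ← Finset.mul_sum, ← map_sum]
        rw [aeval_def, eval₂_eq'] at hf
        rw [hf]; simp
      have hint0 : IsIntegral S y := by
        refine ⟨Polynomial.C (κ (eval L0 fD)⁻¹) * G, ?_, ?_⟩
        · refine Polynomial.monic_of_natDegree_le_of_coeff_eq_one D
            ((Polynomial.natDegree_C_mul_le _ _).trans hGdeg) ?_
          rw [Polynomial.coeff_C_mul, hGD, ← map_mul, inv_mul_cancel₀ hL0, map_one]
        · rw [Polynomial.eval₂_mul, hG0, mul_zero]
      exact isIntegral_trans (R := reesB k w) (A := S) y hint0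
    intro i
    refine Fin.cases key (fun i => ?_) i
    have h8 : v i.succ = v' i + algebraMap k A (lam i) * v 0 := by
      simp [v', Algebra.smul_def]
    rw [h8]
    exact (h_itg i).add (by simpa using (DInt_const 0 (lam i)).mul key)

lemma rc_norm {k : Type*} [Field k] [Infinite k] {n : ℕ} (J : Ideal (MvPolynomial (Fin n) k))
    (hJ : J ≠ ⊤) : ∃ (r : ℕ) (ℓ : Fin r → MvPolynomial (Fin n) k),
      (∀ j, ℓ j ∈ Submodule.span k (Set.range (X : Fin n → MvPolynomial (Fin n) k))) ∧
      AlgebraicIndependent k (fun j => Ideal.Quotient.mkₐ k J (ℓ j)) ∧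
      ∀ i, DInt k (fun j => Ideal.Quotient.mkₐ k J (ℓ j)) 1 (Ideal.Quotient.mkₐ k J (X i)) := by
  have : Nontrivial (MvPolynomial (Fin n) k ⧸ J) := Ideal.Quotient.nontrivial_iff.2 hJ
  obtain ⟨r, w, hw, hind, h_itg⟩ := rc_noether (k := k) n
    (fun i => Ideal.Quotient.mkₐ k J (X i : MvPolynomial (Fin n) k))
  have h1 : ∀ j, ∃ l ∈ Submodule.span k (Set.range (X : Fin n → MvPolynomial (Fin n) k)),
      Ideal.Quotient.mkₐ k J l = w j := by
    intro j
    have h2 := hw j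
    have h3 : Set.range (fun i => Ideal.Quotient.mkₐ k J (X i : MvPolynomial (Fin n) k)) =
        (Ideal.Quotient.mkₐ k J).toLinearMap '' (Set.range (X : Fin n → MvPolynomial (Fin n) k)) := by
      rw [← Set.range_comp]; rfl
    rw [h3, Submodule.span_image] at h2
    exact h2
  choose l hl hl' using h1
  have h4 : (fun j => Ideal.Quotient.mkₐ k J (l j)) = w := funext hl'
  refine ⟨r, l, hl, ?_, ?_⟩
  · rw [h4]; exact hind
  · rw [h4]; exact h_itg

/-- geometric data attached to a radical unmixed ideal: a linear Noether normalization and the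
finite set of generic points of the fibre. -/
structure RCS {k : Type*} [Field k] {n : ℕ} (J : Ideal (MvPolynomial (Fin n) k)) (r : ℕ)
    (Ω : Type*) [Field Ω] [Algebra k Ω] [Algebra (MvPolynomial (Fin r) k) Ω]
    [IsScalarTower k (MvPolynomial (Fin r) k) Ω] where
  lin : Fin r → MvPolynomial (Fin n) k
  hlin : ∀ j, lin j ∈ Submodule.span k (Set.range (X : Fin n → MvPolynomial (Fin n) k))
  inj : Function.Injective (algebraMap (MvPolynomial (Fin r) k) Ω)
  fix : ∀ x : Ω, IsIntegral (MvPolynomial (Fin r) k) x →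
    (∀ σ : Ω ≃ₐ[MvPolynomial (Fin r) k] Ω, σ x = x) →
    ∃ c : MvPolynomial (Fin r) k, algebraMap _ Ω c = x
  pts : Finset (Fin n → Ω)
  mem_pts : ∀ ξ, ξ ∈ pts ↔ (∀ f ∈ J, aeval ξ f = 0) ∧
    ∀ j, aeval ξ (lin j) = algebraMap (MvPolynomial (Fin r) k) Ω (X j)
  dint : ∀ ξ ∈ pts, ∀ l, DInt k (fun j => algebraMap (MvPolynomial (Fin r) k) Ω (X j)) 1 (ξ l)
  ns : ∀ f, (∀ ξ ∈ pts, aeval ξ f = 0) → f ∈ J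

lemma rc_fix {k : Type*} [Field k] [CharZero k] (r : ℕ)
    (x : AlgebraicClosure (FractionRing (MvPolynomial (Fin r) k)))
    (hx : IsIntegral (MvPolynomial (Fin r) k) x)
    (h : ∀ σ : AlgebraicClosure (FractionRing (MvPolynomial (Fin r) k)) ≃ₐ[MvPolynomial (Fin r) k]
      AlgebraicClosure (FractionRing (MvPolynomial (Fin r) k)), σ x = x) :
    ∃ c : MvPolynomial (Fin r) k, algebraMap _ _ c = x := by
  have : CharZero (FractionRing (MvPolynomial (Fin r) k)) :=
    charZero_of_injective_algebraMap (R := k) (algebraMap k _).injective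
  have h1 := (InfiniteGalois.mem_range_algebraMap_iff_fixed
    (k := FractionRing (MvPolynomial (Fin r) k)) x).2 (fun σ => h (σ.restrictScalars _))
  obtain ⟨z, rfl⟩ := h1
  have h2 : IsIntegral (MvPolynomial (Fin r) k) z :=
    (isIntegral_algebraMap_iff (algebraMap (FractionRing (MvPolynomial (Fin r) k))
      (AlgebraicClosure (FractionRing (MvPolynomial (Fin r) k)))).injective).1 hx
  obtain ⟨c, rfl⟩ := IsIntegrallyClosed.isIntegral_iff.1 h2
  exact ⟨c, IsScalarTower.algebraMap_apply _ _ _ c⟩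

lemma rc_mkRCS {k : Type*} [Field k] [CharZero k] {n m : ℕ} (q : Fin m → MvPolynomial (Fin n) k)
    (hq : RCReg q) (hJ : Ideal.span (Set.range q) ≠ ⊤) (hrad : (Ideal.span (Set.range q)).IsRadical) :
    ∃ r : ℕ, m + r = n ∧ Nonempty (RCS (Ideal.span (Set.range q)) r
      (AlgebraicClosure (FractionRing (MvPolynomial (Fin r) k)))) := by
  classical
  set J := Ideal.span (Set.range q) with hJdef
  obtain ⟨r, ℓ, hℓ, hind, h_itg⟩ := rc_norm J hJ
  have : Nontrivial (MvPolynomial (Fin n) k ⧸ J) := Ideal.Quotient.nontrivial_iff.2 hJ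
  set w := fun j => Ideal.Quotient.mkₐ k J (ℓ j) with hw
  let φ : MvPolynomial (Fin r) k →ₐ[k] MvPolynomial (Fin n) k := aeval ℓ
  have hφ : ∀ c, Ideal.Quotient.mk J (φ c) = aeval w c := by
    intro c
    change Ideal.Quotient.mkₐ k J (aeval ℓ c) = _
    rw [← AlgHom.comp_apply, comp_aeval]
  have hmk : ∀ f, Ideal.Quotient.mkₐ k J f = aeval (fun i => Ideal.Quotient.mkₐ k J (X i)) f := by
    intro f
    rw [← AlgHom.congr_fun (comp_aeval (R := k) X (Ideal.Quotient.mkₐ k J)) f]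
    simp
  have hint2 : ((Ideal.Quotient.mk J).comp φ.toRingHom).IsIntegral := by
    intro x
    obtain ⟨f, rfl⟩ := Ideal.Quotient.mk_surjective x
    let : Algebra (MvPolynomial (Fin r) k) (MvPolynomial (Fin n) k ⧸ J) :=
      ((Ideal.Quotient.mk J).comp φ.toRingHom).toAlgebra
    have h1 := DInt_aeval _ h_itg f
    rw [← hmk] at h1
    exact h1.isIntegral hφ
  have hmr : m + r = n := by
    let : Algebra (MvPolynomial (Fin r) k) (MvPolynomial (Fin n) k ⧸ J) :=
      ((Ideal.Quotient.mk J).comp φ.toRingHom).toAlgebra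
    have : Algebra.IsIntegral (MvPolynomial (Fin r) k) (MvPolynomial (Fin n) k ⧸ J) := ⟨hint2⟩
    refine rc_rank_eq q hq hJ ?_
    intro a b hab
    apply hind
    exact (hφ a).symm.trans (hab.trans (hφ b))
  refine ⟨r, hmr, ?_⟩
  let B := MvPolynomial (Fin r) k
  let Ω := AlgebraicClosure (FractionRing (MvPolynomial (Fin r) k))
  have hinj : Function.Injective (algebraMap (MvPolynomial (Fin r) k) Ω) := by
    rw [IsScalarTower.algebraMap_eq _ (FractionRing (MvPolynomial (Fin r) k)) Ω]
    exact (algebraMap (FractionRing (MvPolynomial (Fin r) k)) Ω).injective.comp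
      (IsFractionRing.injective (MvPolynomial (Fin r) k) (FractionRing (MvPolynomial (Fin r) k)))
  let PT : Set (Fin n → Ω) := {ξ | (∀ f ∈ J, aeval ξ f = 0) ∧
    ∀ j, aeval ξ (ℓ j) = algebraMap (MvPolynomial (Fin r) k) Ω (X j)}
  have hlift : ∀ ξ ∈ PT, ∃ ψ : (MvPolynomial (Fin n) k ⧸ J) →ₐ[k] Ω,
      (∀ f, ψ (Ideal.Quotient.mk J f) = aeval ξ f) ∧
      ∀ c, ψ (aeval w c) = algebraMap (MvPolynomial (Fin r) k) Ω c := by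
    intro ξ hξ
    let ψ : (MvPolynomial (Fin n) k ⧸ J) →ₐ[k] Ω := Ideal.Quotient.liftₐ J (aeval ξ) hξ.1
    refine ⟨ψ, fun f => rfl, fun c => ?_⟩
    have h1 : (ψ.comp (aeval w)) = IsScalarTower.toAlgHom k (MvPolynomial (Fin r) k) Ω := by
      apply MvPolynomial.algHom_ext
      intro j
      simp only [AlgHom.comp_apply, aeval_X]
      exact hξ.2 j
    exact AlgHom.congr_fun h1 c
  have hdint : ∀ ξ ∈ PT, ∀ l, DInt k (fun j => algebraMap (MvPolynomial (Fin r) k) Ω (X j)) 1 (ξ l) := by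
    intro ξ hξ l
    obtain ⟨ψ, hψ, hψ2⟩ := hlift ξ hξ
    have h1 := (h_itg l).map ψ (w' := fun j => algebraMap (MvPolynomial (Fin r) k) Ω (X j)) (by
      intro j
      have := hψ2 (X j)
      rwa [aeval_X] at this)
    have h2 := hψ (X l)
    rw [aeval_X] at h2
    rw [← h2]
    exact h1
  have hfin : PT.Finite := by
    have h1 : ∀ l : Fin n, ∃ P : Polynomial B, P.Monic ∧
        Polynomial.eval₂ ((Ideal.Quotient.mk J).comp φ.toRingHom) (Ideal.Quotient.mk J (X l)) P = 0 :=
      fun l => hint2 _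
    choose P hP hP0 using h1
    refine Set.Finite.subset (Set.Finite.pi' (t := fun l => {z : Ω | Polynomial.eval₂ (algebraMap B Ω) z (P l) = 0})
      fun l => ?_) ?_
    · have h2 := Polynomial.rootSet_finite ((P l).map (algebraMap B Ω)) Ω
      refine h2.subset ?_
      intro z hz
      rw [Polynomial.mem_rootSet]
      refine ⟨((hP l).map _).ne_zero, ?_⟩
      rw [Polynomial.aeval_map_algebraMap]
      exact hz
    · intro ξ hξ l
      obtain ⟨ψ, hψ, hψ2⟩ := hlift ξ hξ
      have h3 := congrArg ψ (hP0 l)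
      rw [map_zero] at h3
      change ψ.toRingHom _ = 0 at h3
      rw [Polynomial.hom_eval₂] at h3
      have h4 : ψ.toRingHom.comp ((Ideal.Quotient.mk J).comp φ.toRingHom) = algebraMap B Ω := by
        refine MvPolynomial.ringHom_ext (fun c => ?_) (fun i => ?_)
        · change ψ (Ideal.Quotient.mk J (φ (C c))) = _
          rw [hφ, hψ2]
        · change ψ (Ideal.Quotient.mk J (φ _)) = _
          rw [hφ, hψ2]
      have h5 : ψ.toRingHom (Ideal.Quotient.mk J (X l)) = ξ l := by
        have := hψ (X l)
        rwa [aeval_X] at this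
      rw [h4, h5] at h3
      exact h3
  refine ⟨{ lin := ℓ, hlin := hℓ, inj := hinj, fix := rc_fix r, pts := hfin.toFinset, mem_pts := by
              intro ξ; rw [Set.Finite.mem_toFinset]; rfl
            dint := by
              intro ξ hξ; exact hdint ξ (by rwa [Set.Finite.mem_toFinset] at hξ)
            ns := ?_ }⟩
  intro f hf
  by_contra hfJ
  rw [← hrad.radical, ← Ideal.sInf_minimalPrimes, Ideal.mem_sInf] at hfJ
  push Not at hfJ
  obtain ⟨p, hp, hfp⟩ := hfJ
  have hpp : p.IsPrime := hp.1.1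
  have hJp : J ≤ p := hp.1.2
  let : Algebra (MvPolynomial (Fin r) k) (MvPolynomial (Fin n) k ⧸ p) :=
    ((Ideal.Quotient.mk p).comp φ.toRingHom).toAlgebra
  have hi1 : Function.Injective (algebraMap (MvPolynomial (Fin r) k) (MvPolynomial (Fin n) k ⧸ p)) := by
    rw [injective_iff_map_eq_zero]
    intro c hc
    exact rc_unmixed q hmr φ.toRingHom hint2 p hp c (Ideal.Quotient.eq_zero_iff_mem.1 hc)
  have hi2 : Algebra.IsIntegral (MvPolynomial (Fin r) k) (MvPolynomial (Fin n) k ⧸ p) := by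
    constructor
    intro x
    obtain ⟨f, rfl⟩ := Ideal.Quotient.mk_surjective x
    obtain ⟨P, hP, hP0⟩ := hint2 (Ideal.Quotient.mk J f)
    refine ⟨P, hP, ?_⟩
    have h3 := congrArg (Ideal.Quotient.factor hJp) hP0
    rw [Polynomial.hom_eval₂, map_zero] at h3
    exact h3
  have hf1 : FaithfulSMul (MvPolynomial (Fin r) k) (MvPolynomial (Fin n) k ⧸ p) :=
    (faithfulSMul_iff_algebraMap_injective _ _).2 hi1
  have hf2 : FaithfulSMul (MvPolynomial (Fin r) k) Ω :=
    (faithfulSMul_iff_algebraMap_injective _ _).2 hinj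
  let ψ : (MvPolynomial (Fin n) k ⧸ p) →ₐ[MvPolynomial (Fin r) k] Ω := IsAlgClosed.lift
  have hψinj : Function.Injective ψ := by
    rw [← AlgHom.coe_toRingHom, RingHom.injective_iff_ker_eq_bot]
    apply Ideal.eq_bot_of_comap_eq_bot (R := MvPolynomial (Fin r) k)
    rw [eq_bot_iff]
    intro c hc
    have h4 : ψ (algebraMap _ _ c) = 0 := hc
    rw [AlgHom.commutes] at h4
    exact (map_eq_zero_iff _ hinj).1 h4
  let ξ : Fin n → Ω := fun l => ψ (Ideal.Quotient.mk p (X l))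
  have hξ : ∀ g, aeval ξ g = ψ (Ideal.Quotient.mk p g) := by
    have h5 : ((ψ : (MvPolynomial (Fin n) k ⧸ p) →+* Ω).comp (Ideal.Quotient.mk p)) =
        (aeval ξ : MvPolynomial (Fin n) k →ₐ[k] Ω).toRingHom := by
      refine MvPolynomial.ringHom_ext (fun c => ?_) (fun i => ?_)
      · change ψ (Ideal.Quotient.mk p (C c)) = aeval ξ (C c)
        rw [aeval_C, IsScalarTower.algebraMap_apply k (MvPolynomial (Fin r) k) Ω, ← AlgHom.commutes ψ]
        congr 1
        change _ = Ideal.Quotient.mk p (φ (C c))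
        simp [φ]
      · change ψ (Ideal.Quotient.mk p (X _)) = aeval ξ (X _)
        rw [aeval_X]
    intro g
    exact (RingHom.congr_fun h5 g).symm
  have h6 : ξ ∈ hfin.toFinset := by
    rw [Set.Finite.mem_toFinset]
    refine ⟨fun g hg => ?_, fun j => ?_⟩
    · rw [hξ, Ideal.Quotient.eq_zero_iff_mem.2 (hJp hg), map_zero]
    · rw [hξ, ← AlgHom.commutes ψ]
      congr 1
      change _ = Ideal.Quotient.mk p (φ (X j))
      simp [φ]
  have h7 := hf ξ h6
  rw [hξ] at h7
  exact hfp (Ideal.Quotient.eq_zero_iff_mem.1 ((map_eq_zero_iff _ hψinj).1 h7))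

/-- `θ` is a Bezoutian (difference quotient) vector of `f` with degree bound `D`. -/
def RCBez {k : Type*} [Field k] {n : ℕ} (f : MvPolynomial (Fin n) k) (D : ℕ)
    (θ : Fin n → MvPolynomial (Fin n ⊕ Fin n) k) : Prop :=
  rename Sum.inl f - rename Sum.inr f = ∑ l, θ l * (X (Sum.inl l) - X (Sum.inr l)) ∧
    ∀ l, (θ l).totalDegree ≤ D

lemma rc_tdeg_rename_le {k : Type*} [Field k] {n : ℕ} (f : MvPolynomial (Fin n) k)
    (e : Fin n → Fin n ⊕ Fin n) : (rename e f).totalDegree ≤ f.totalDegree :=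
  totalDegree_rename_le e f

lemma RCBez.add {k : Type*} [Field k] {n : ℕ} {f g : MvPolynomial (Fin n) k} {D : ℕ}
    {θ η} (h : RCBez f D θ) (h' : RCBez g D η) : RCBez (f + g) D (θ + η) := by
  refine ⟨?_, fun l => ?_⟩
  · simp only [map_add, Pi.add_apply, add_mul, Finset.sum_add_distrib, ← h.1, ← h'.1]; ring
  · exact (totalDegree_add _ _).trans (max_le (h.2 l) (h'.2 l))

lemma RCBez.mono {k : Type*} [Field k] {n : ℕ} {f : MvPolynomial (Fin n) k} {D D' : ℕ}
    {θ} (h : RCBez f D θ) (hD : D ≤ D') : RCBez f D' θ := ⟨h.1, fun l => (h.2 l).trans hD⟩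

lemma RCBez.mul {k : Type*} [Field k] {n : ℕ} {f g : MvPolynomial (Fin n) k} {D D' : ℕ}
    {θ η} (h : RCBez f D θ) (h' : RCBez g D' η) (hf : f.totalDegree ≤ D) (hg : g.totalDegree ≤ D') :
    RCBez (f * g) (D + D') (fun l => θ l * rename Sum.inl g + rename Sum.inr f * η l) := by
  refine ⟨?_, fun l => ?_⟩
  · have : ∑ l, (θ l * rename Sum.inl g + rename Sum.inr f * η l) *
        ((X (Sum.inl l) - X (Sum.inr l)) : MvPolynomial (Fin n ⊕ Fin n) k) =
        (∑ l, θ l * (X (Sum.inl l) - X (Sum.inr l))) * rename Sum.inl g +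
        rename Sum.inr f * ∑ l, η l * (X (Sum.inl l) - X (Sum.inr l)) := by
      rw [Finset.sum_mul, Finset.mul_sum, ← Finset.sum_add_distrib]
      refine Finset.sum_congr rfl fun l _ => by ring
    rw [this, ← h.1, ← h'.1]; simp only [map_mul]; ring
  · refine (totalDegree_add _ _).trans (max_le ?_ ?_)
    · exact (totalDegree_mul _ _).trans (add_le_add (h.2 l) ((rc_tdeg_rename_le _ _).trans hg))
    · exact (totalDegree_mul _ _).trans (add_le_add ((rc_tdeg_rename_le _ _).trans hf) (h'.2 l))

lemma RCBez_C {k : Type*} [Field k] {n : ℕ} (c : k) (D) : RCBez (C c : MvPolynomial (Fin n) k) D 0 :=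
  ⟨by simp, by simp⟩

lemma RCBez_X {k : Type*} [Field k] {n : ℕ} (i : Fin n) :
    RCBez (X i : MvPolynomial (Fin n) k) 0 (Pi.single i 1) := by
  refine ⟨?_, fun l => ?_⟩
  · rw [Finset.sum_eq_single i]
    · simp
    · intro b _ hb; simp [hb]
    · simp
  · by_cases h : l = i
    · subst h; simp
    · simp [h]

lemma RCBez.smul {k : Type*} [Field k] {n : ℕ} {f : MvPolynomial (Fin n) k} {D : ℕ}
    {θ} (h : RCBez f D θ) (c : k) : RCBez (c • f) D (c • θ) := by
  refine ⟨?_, fun l => ?_⟩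
  · simp only [map_smul, Pi.smul_apply, smul_mul_assoc, ← Finset.smul_sum, ← h.1, smul_sub]
  · exact (totalDegree_smul_le _ _).trans (h.2 l)

lemma RCBez_linear {k : Type*} [Field k] {n : ℕ} (f : MvPolynomial (Fin n) k)
    (hf : f ∈ Submodule.span k (Set.range (X : Fin n → MvPolynomial (Fin n) k))) :
    ∃ θ, RCBez f 0 θ := by
  induction hf using Submodule.span_induction with
  | mem x h => obtain ⟨i, rfl⟩ := h; exact ⟨_, RCBez_X i⟩
  | zero => exact ⟨0, by simpa using RCBez_C (n := n) (0:k) 0⟩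
  | add x y _ _ hx hy => obtain ⟨θ, h⟩ := hx; obtain ⟨η, h'⟩ := hy; exact ⟨_, h.add h'⟩
  | smul a x _ hx => obtain ⟨θ, h⟩ := hx; exact ⟨_, h.smul a⟩

lemma RCBez_monomial {k : Type*} [Field k] {n : ℕ} (α : Fin n →₀ ℕ) :
    ∃ θ, RCBez (monomial α (1:k)) α.degree θ := by
  induction α using Finsupp.induction_linear with
  | zero => exact ⟨0, by simpa using RCBez_C (n := n) (1:k) 0⟩
  | add a b ha hb =>
    obtain ⟨θ, h⟩ := ha; obtain ⟨η, h'⟩ := hb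
    refine ⟨fun l => θ l * rename Sum.inl (monomial b (1:k)) + rename Sum.inr (monomial a (1:k)) * η l, ?_⟩
    · have := h.mul h' (totalDegree_monomial_le _ _) (totalDegree_monomial_le _ _)
      rw [monomial_mul, one_mul] at this
      convert this using 1
      exact map_add Finsupp.degree a b
  | single i e =>
    induction e with
    | zero => exact ⟨0, by simpa using RCBez_C (n := n) (1:k) 0⟩
    | succ e ih =>
      obtain ⟨θ, h⟩ := ih
      have h2 := h.mul ((RCBez_X (k := k) i).mono (Nat.zero_le 1)) (totalDegree_monomial_le _ _) (by simp)
      rw [show monomial (Finsupp.single i e) (1:k) * X i = monomial (Finsupp.single i (e+1)) 1 by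
        rw [X, monomial_mul, one_mul, ← Finsupp.single_add], Finsupp.degree_single] at h2
      rw [Finsupp.degree_single]
      exact ⟨_, h2⟩

lemma RCBez_exists {k : Type*} [Field k] {n : ℕ} (f : MvPolynomial (Fin n) k) :
    ∃ θ, RCBez f f.totalDegree θ := by
  have key : ∀ s : Finset (Fin n →₀ ℕ), s ⊆ f.support →
      ∃ θ, RCBez (∑ α ∈ s, monomial α (coeff α f)) f.totalDegree θ := by
    intro s
    induction s using Finset.induction_on with
    | empty => intro _; exact ⟨0, by simpa using RCBez_C (n := n) (0:k) f.totalDegree⟩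
    | insert a s ha ih =>
      intro hs
      obtain ⟨θ, h⟩ := ih (fun x hx => hs (Finset.mem_insert_of_mem hx))
      obtain ⟨η, h'⟩ := RCBez_monomial (k := k) a
      rw [Finset.sum_insert ha]
      have h3 := (h'.smul (coeff a f)).mono (le_totalDegree (hs (Finset.mem_insert_self _ _)))
      rw [smul_monomial, smul_eq_mul, mul_one] at h3
      exact ⟨_, h3.add h⟩
  have := key f.support subset_rfl
  rwa [← f.as_sum] at this

lemma RCBez.eval {k Ω : Type*} [Field k] [Field Ω] [Algebra k Ω] {n : ℕ} {f : MvPolynomial (Fin n) k}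
    {D : ℕ} {θ} (h : RCBez f D θ) (ξ η : Fin n → Ω) :
    aeval ξ f - aeval η f = ∑ l, aeval (Sum.elim ξ η) (θ l) * (ξ l - η l) := by
  have := congrArg (aeval (Sum.elim ξ η)) h.1
  simpa [aeval_rename, map_sum, Function.comp_def] using this

lemma RCBez.diag {k Ω : Type*} [Field k] [Field Ω] [Algebra k Ω] {n : ℕ} {f : MvPolynomial (Fin n) k}
    {D : ℕ} {θ} (h : RCBez f D θ) (ξ : Fin n → Ω) (i : Fin n) :
    aeval (Sum.elim ξ ξ) (θ i) = aeval ξ (pderiv i f) := by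
  have := congrArg (fun p => aeval (Sum.elim ξ ξ) (pderiv (Sum.inl i) p)) h.1
  simp only [map_sub, map_sum, Derivation.leibniz, pderiv_rename Sum.inl_injective, aeval_rename,
    map_add, smul_eq_mul, map_mul, aeval_X, Sum.elim_inl, Sum.elim_inr, sub_self, zero_mul, add_zero] at this
  rw [Finset.sum_eq_single i] at this
  · have h0 : pderiv (Sum.inl i) (rename Sum.inr f : MvPolynomial (Fin n ⊕ Fin n) k) = 0 := by
      apply pderiv_eq_zero_of_notMem_vars
      intro hm
      have := vars_rename (Sum.inr : Fin n → Fin n ⊕ Fin n) f hm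
      simp at this
    rw [h0] at this
    simpa [Function.comp_def, pderiv_X] using this.symm
  · intro b _ hb
    simp [pderiv_X, hb]
  · simp

lemma rc_det_deg {k : Type*} [Field k] {σ : Type*} {n : ℕ} (M : Matrix (Fin n) (Fin n) (MvPolynomial σ k))
    (D : Fin n → ℕ) (h : ∀ i j, (M i j).totalDegree ≤ D i) :
    M.det.totalDegree ≤ ∑ i, D i := by
  rw [← Matrix.det_transpose, Matrix.det_apply]
  refine totalDegree_finsetSum_le fun σ _ => ?_
  have h1 : (∏ i, M.transpose (σ i) i).totalDegree ≤ ∑ i, D i := by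
    refine (totalDegree_finsetProd _ _).trans (Finset.sum_le_sum fun i _ => h _ _)
  rcases Int.units_eq_one_or (Equiv.Perm.sign σ) with hs | hs
  · rw [hs]; simpa using h1
  · rw [hs]; simpa using h1

lemma rc_lift {B Ω : Type*} [CommRing B] [Field Ω] [Algebra B Ω]
    (fix : ∀ x : Ω, IsIntegral B x → (∀ σ : Ω ≃ₐ[B] Ω, σ x = x) → ∃ c : B, algebraMap _ Ω c = x)
    (T : Finset Ω) (h_itg : ∀ s ∈ T, IsIntegral B s) (hst : ∀ σ : Ω ≃ₐ[B] Ω, ∀ s ∈ T, σ s ∈ T) :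
    ∃ P : Polynomial B, P.Monic ∧ P.map (algebraMap B Ω) = Lagrange.nodal T id := by
  classical
  have hm : (Lagrange.nodal T (id : Ω → Ω)).Monic := Lagrange.nodal_monic
  have hl : Lagrange.nodal T (id : Ω → Ω) ∈ Polynomial.lifts (algebraMap (integralClosure B Ω) Ω) := by
    refine Subsemiring.prod_mem _ fun s hs => ?_
    refine (Polynomial.mem_lifts _).2 ⟨Polynomial.X - Polynomial.C ⟨s, h_itg s hs⟩, ?_⟩
    simp
  have hl2 : Lagrange.nodal T (id : Ω → Ω) ∈ Polynomial.lifts (algebraMap B Ω) := by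
    rw [Polynomial.lifts_iff_coeff_lifts] at hl ⊢
    intro i
    obtain ⟨z, hz⟩ := hl i
    refine fix _ (hz ▸ z.2) fun σ => ?_
    have h1 : (Lagrange.nodal T (id : Ω → Ω)).map (σ : Ω →+* Ω) = Lagrange.nodal T id := by
      rw [Lagrange.nodal, Polynomial.map_prod]
      have himg : T.image σ = T := by
        apply Finset.eq_of_subset_of_card_le
        · intro x hx; obtain ⟨s, hs, rfl⟩ := Finset.mem_image.1 hx; exact hst σ s hs
        · rw [Finset.card_image_of_injective _ σ.injective]
      conv_rhs => rw [← himg, Finset.prod_image (fun _ _ _ _ h => σ.injective h)]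
      refine Finset.prod_congr rfl fun s _ => by simp
    conv_rhs => rw [← h1, Polynomial.coeff_map]
    rfl
  obtain ⟨P, h1, -, h3⟩ := Polynomial.lifts_and_natDegree_eq_and_monic hl2 hm
  exact ⟨P, h3, h1⟩

lemma rc_lagrange {B Ω : Type*} [CommRing B] [Field Ω] [Algebra B Ω] (T : Finset Ω) (P : Polynomial B)
    (hP : P.Monic) (hm : P.map (algebraMap B Ω) = Lagrange.nodal T id) (j : ℕ) :
    ∃ c : B, algebraMap B Ω c =
      ∑ s ∈ T, s ^ j / (Polynomial.derivative (Lagrange.nodal T id)).eval s := by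
  classical
  have : Nontrivial B := (algebraMap B Ω).domain_nontrivial
  refine ⟨(Polynomial.X ^ j %ₘ P).coeff (T.card - 1), ?_⟩
  rw [← Polynomial.coeff_map, Lagrange.coeff_eq_sum (s := T) (v := id) Function.injective_id.injOn]
  · refine Finset.sum_congr rfl fun s hs => ?_
    congr 1
    · have h := congrArg (fun p => (Polynomial.map (algebraMap B Ω) p).eval s)
        (Polynomial.modByMonic_add_div (Polynomial.X ^ j) P)
      simp only [Polynomial.map_add, Polynomial.map_mul, hm, Polynomial.eval_add, Polynomial.eval_mul] at h
      have h0 : (Lagrange.nodal T (id : Ω → Ω)).eval s = 0 := Lagrange.eval_nodal_at_node (v := id) hs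
      rw [h0] at h
      simpa using h
    · have := Lagrange.eval_nodal_derivative_eval_node_eq (v := (id : Ω → Ω)) hs
      rw [id] at this
      rw [this, Lagrange.eval_nodal]; rfl
  · refine (Polynomial.degree_map_le).trans_lt ((Polynomial.degree_modByMonic_lt _ hP).trans_eq ?_)
    rw [← hP.degree_map (algebraMap B Ω), hm, Lagrange.degree_nodal]

lemma rc_grid {B Ω : Type*} [CommRing B] [Field Ω] [Algebra B Ω] {n : ℕ} (T : Fin n → Finset Ω)
    (P : Fin n → Polynomial B) (hP : ∀ l, (P l).Monic)
    (hm : ∀ l, (P l).map (algebraMap B Ω) = Lagrange.nodal (T l) id) (F : MvPolynomial (Fin n) B) :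
    ∃ c : B, algebraMap B Ω c = ∑ η ∈ Fintype.piFinset T, aeval η F /
      ∏ l, (Polynomial.derivative (Lagrange.nodal (T l) id)).eval (η l) := by
  classical
  induction F using MvPolynomial.induction_on' with
  | add p q hp hq =>
    obtain ⟨c, hc⟩ := hp; obtain ⟨c', hc'⟩ := hq
    refine ⟨c + c', ?_⟩
    rw [map_add, hc, hc', ← Finset.sum_add_distrib]
    refine Finset.sum_congr rfl fun η _ => ?_
    rw [map_add, add_div]
  | monomial α a =>
    choose c hc using fun l => rc_lagrange (T l) (P l) (hP l) (hm l) (α l)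
    refine ⟨a * ∏ l, c l, ?_⟩
    rw [map_mul, map_prod, Finset.prod_congr rfl fun l _ => hc l, Finset.prod_univ_sum, Finset.mul_sum]
    refine Finset.sum_congr rfl fun η _ => ?_
    rw [aeval_monomial, Finset.prod_div_distrib, mul_div_assoc, Finsupp.prod_fintype]
    simp

section
variable {k : Type*} [Field k] {n r : ℕ} {J : Ideal (MvPolynomial (Fin n) k)} {Ω : Type*} [Field Ω]
  [Algebra k Ω] [Algebra (MvPolynomial (Fin r) k) Ω] [IsScalarTower k (MvPolynomial (Fin r) k) Ω]

lemma RCS.amap (S : RCS J r Ω) (c : MvPolynomial (Fin r) k) :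
    algebraMap (MvPolynomial (Fin r) k) Ω c =
      aeval (fun j => algebraMap (MvPolynomial (Fin r) k) Ω (X j)) c := by
  have : (Algebra.ofId (MvPolynomial (Fin r) k) Ω).restrictScalars k =
      aeval (fun j => algebraMap (MvPolynomial (Fin r) k) Ω (X j)) := by
    ext i; simp [Algebra.ofId_apply]
  exact DFunLike.congr_fun this c

lemma RCS.algInd (S : RCS J r Ω) :
    AlgebraicIndependent k (fun j => algebraMap (MvPolynomial (Fin r) k) Ω (X j)) := by
  intro a b h
  change aeval _ a = aeval _ b at h
  rw [← S.amap, ← S.amap] at h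
  exact S.inj h

lemma RCS.eval_lin (S : RCS J r Ω) {ξ} (hξ : ξ ∈ S.pts) (c : MvPolynomial (Fin r) k) :
    aeval ξ (aeval S.lin c) = algebraMap (MvPolynomial (Fin r) k) Ω c := by
  rw [S.amap, ← AlgHom.comp_apply, comp_aeval]
  congr 2
  funext j
  exact ((S.mem_pts ξ).1 hξ).2 j

lemma RCS.sigma_aeval (S : RCS J r Ω) (σ : Ω ≃ₐ[MvPolynomial (Fin r) k] Ω) (ξ : Fin n → Ω)
    (f : MvPolynomial (Fin n) k) : σ (aeval ξ f) = aeval (fun i => σ (ξ i)) f := by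
  have : ((σ : Ω →ₐ[MvPolynomial (Fin r) k] Ω).restrictScalars k).comp (aeval ξ) =
      aeval (fun i => σ (ξ i)) := by
    ext i; simp
  exact DFunLike.congr_fun this f

lemma RCS.sigma_mem (S : RCS J r Ω) (σ : Ω ≃ₐ[MvPolynomial (Fin r) k] Ω) {ξ : Fin n → Ω}
    (hξ : ξ ∈ S.pts) : (fun i => σ (ξ i)) ∈ S.pts := by
  rw [S.mem_pts] at hξ ⊢
  refine ⟨fun f hf => ?_, fun j => ?_⟩
  · rw [← S.sigma_aeval, hξ.1 f hf, map_zero]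
  · rw [← S.sigma_aeval, hξ.2 j, AlgEquiv.commutes]

lemma RCS.image_sigma [DecidableEq (Fin n → Ω)] (S : RCS J r Ω) (σ : Ω ≃ₐ[MvPolynomial (Fin r) k] Ω) :
    S.pts.image (fun ξ i => σ (ξ i)) = S.pts := by
  apply Finset.eq_of_subset_of_card_le
  · intro x hx; obtain ⟨s, hs, rfl⟩ := Finset.mem_image.1 hx; exact S.sigma_mem σ hs
  · rw [Finset.card_image_of_injective]
    intro a b h
    funext i
    exact σ.injective (congrFun h i)

lemma RCS.sigma_sum (S : RCS J r Ω) (σ : Ω ≃ₐ[MvPolynomial (Fin r) k] Ω) (G : (Fin n → Ω) → Ω)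
    (hG : ∀ ξ ∈ S.pts, σ (G ξ) = G (fun i => σ (ξ i))) : σ (∑ ξ ∈ S.pts, G ξ) = ∑ ξ ∈ S.pts, G ξ := by
  classical
  conv_rhs => rw [← S.image_sigma σ]
  rw [Finset.sum_image, map_sum]
  · exact Finset.sum_congr rfl hG
  · intro a _ b _ h
    funext i
    exact σ.injective (congrFun h i)

lemma RCS.sigma_prod (S : RCS J r Ω) (σ : Ω ≃ₐ[MvPolynomial (Fin r) k] Ω) (G : (Fin n → Ω) → Ω)
    (hG : ∀ ξ ∈ S.pts, σ (G ξ) = G (fun i => σ (ξ i))) : σ (∏ ξ ∈ S.pts, G ξ) = ∏ ξ ∈ S.pts, G ξ := by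
  classical
  conv_rhs => rw [← S.image_sigma σ]
  rw [Finset.prod_image, map_prod]
  · exact Finset.prod_congr rfl hG
  · intro a _ b _ h
    funext i
    exact σ.injective (congrFun h i)

lemma RCS.descend (S : RCS J r Ω) {x : Ω} {D : ℕ}
    (hx : DInt k (fun j => algebraMap (MvPolynomial (Fin r) k) Ω (X j)) D x)
    (hσ : ∀ σ : Ω ≃ₐ[MvPolynomial (Fin r) k] Ω, σ x = x) :
    ∃ c : MvPolynomial (Fin r) k, algebraMap _ Ω c = x ∧ c.totalDegree ≤ D := by
  obtain ⟨c, rfl⟩ := S.fix x (hx.isIntegral S.amap) hσ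
  refine ⟨c, rfl, ?_⟩
  rw [S.amap] at hx
  exact hx.descent S.algInd c

lemma RCS.dint_aeval (S : RCS J r Ω) {ξ} (hξ : ξ ∈ S.pts) (f : MvPolynomial (Fin n) k) :
    DInt k (fun j => algebraMap (MvPolynomial (Fin r) k) Ω (X j)) f.totalDegree (aeval ξ f) :=
  DInt_aeval ξ (S.dint ξ hξ) f

lemma RCS.mem_iff (S : RCS J r Ω) (f : MvPolynomial (Fin n) k) :
    f ∈ J ↔ ∀ ξ ∈ S.pts, aeval ξ f = 0 :=
  ⟨fun h ξ hξ => ((S.mem_pts ξ).1 hξ).1 f h, S.ns f⟩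

lemma rc_tdeg_lin {p : MvPolynomial (Fin n) k}
    (hf : p ∈ Submodule.span k (Set.range (X : Fin n → MvPolynomial (Fin n) k))) :
    p.totalDegree ≤ 1 := by
  induction hf using Submodule.span_induction with
  | mem x h => obtain ⟨i, rfl⟩ := h; simp
  | zero => simp
  | add x y _ _ hx hy => exact (totalDegree_add _ _).trans (max_le hx hy)
  | smul a x _ hx => exact (totalDegree_smul_le _ _).trans hx

lemma rc_tdeg_aeval_lin (lin : Fin r → MvPolynomial (Fin n) k) (h : ∀ j, (lin j).totalDegree ≤ 1)
    (c : MvPolynomial (Fin r) k) : (aeval lin c).totalDegree ≤ c.totalDegree := by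
  rw [aeval_def, eval₂_eq']
  refine totalDegree_finsetSum_le fun α hα => ?_
  refine (totalDegree_mul _ _).trans ?_
  have h1 : (algebraMap k (MvPolynomial (Fin n) k) (coeff α c)).totalDegree = 0 := totalDegree_C _
  rw [h1, zero_add]
  refine (totalDegree_finsetProd _ _).trans (le_trans ?_ (le_totalDegree hα))
  rw [Finsupp.sum_fintype _ _ (fun _ => rfl)]
  refine Finset.sum_le_sum fun i _ => (totalDegree_pow _ _).trans ?_
  calc _ ≤ α i * 1 := Nat.mul_le_mul_left _ (h i)
    _ = _ := mul_one _

/-- `p` a nonzerodivisor modulo `J` does not vanish on the fibre. -/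
lemma RCS.nzd (S : RCS J r Ω) (p : MvPolynomial (Fin n) k) (hp : ∀ a, p * a ∈ J → a ∈ J) :
    ∀ ξ ∈ S.pts, aeval ξ p ≠ 0 := by
  classical
  intro ξ₀ hξ₀ h0
  set Z := S.pts.filter (fun ξ => aeval ξ p ≠ 0) with hZ
  -- `T` is the set of nonzero values of `p`
  set T : Finset Ω := Z.image (fun ξ => aeval ξ p) with hT
  have hTn : ∀ s ∈ T, s ≠ 0 := by
    intro s hs
    obtain ⟨ξ, hξ, rfl⟩ := Finset.mem_image.1 hs
    exact (Finset.mem_filter.1 hξ).2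
  obtain ⟨P, hPm, hP⟩ := rc_lift S.fix T (by
      intro s hs
      obtain ⟨ξ, hξ, rfl⟩ := Finset.mem_image.1 hs
      exact (S.dint_aeval (Finset.mem_filter.1 hξ).1 p).isIntegral S.amap) (by
      intro σ s hs
      obtain ⟨ξ, hξ, rfl⟩ := Finset.mem_image.1 hs
      have hξ' := Finset.mem_filter.1 hξ
      refine Finset.mem_image.2 ⟨fun i => σ (ξ i), Finset.mem_filter.2 ⟨S.sigma_mem σ hξ'.1, ?_⟩, ?_⟩
      · rw [← S.sigma_aeval]; simpa using hξ'.2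
      · rw [← S.sigma_aeval])
  -- the polynomial `P(p)` with coefficients through `lin`
  set a : MvPolynomial (Fin n) k := P.eval₂ (aeval S.lin : MvPolynomial (Fin r) k →ₐ[k] _).toRingHom p with ha
  have hev : ∀ ξ ∈ S.pts, aeval ξ a = (Lagrange.nodal T id).eval (aeval ξ p) := by
    intro ξ hξ
    rw [ha, ← hP, Polynomial.eval_map, ← AlgHom.coe_toRingHom, Polynomial.hom_eval₂]
    congr 1
    ext c
    · exact S.eval_lin hξ (C c)
    · exact S.eval_lin hξ (X c)
  have hmem : p * a ∈ J := by
    apply S.ns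
    intro ξ hξ
    rw [map_mul]
    by_cases h : aeval ξ p = 0
    · rw [h, zero_mul]
    · rw [hev ξ hξ]
      have : aeval ξ p ∈ T := Finset.mem_image.2 ⟨ξ, Finset.mem_filter.2 ⟨hξ, h⟩, rfl⟩
      have := Lagrange.eval_nodal_at_node (v := (id : Ω → Ω)) this
      rw [id] at this
      rw [this, mul_zero]
  have h2 := (S.mem_iff a).1 (hp a hmem) ξ₀ hξ₀
  rw [hev ξ₀ hξ₀, h0, Lagrange.eval_nodal, Finset.prod_eq_zero_iff] at h2
  obtain ⟨s, hs, h3⟩ := h2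
  exact hTn s hs (by simpa using h3)
end

section
variable {k : Type*} [Field k] {n r : ℕ} {J : Ideal (MvPolynomial (Fin n) k)} {Ω : Type*} [Field Ω]
  [Algebra k Ω] [Algebra (MvPolynomial (Fin r) k) Ω] [IsScalarTower k (MvPolynomial (Fin r) k) Ω]

/-- the system of equations over `k[y]` cutting out the generic fibre -/
noncomputable def rcQ (f : Fin n → MvPolynomial (Fin n) k) (b : Fin n → MvPolynomial (Fin r) k)
    (j : Fin n) : MvPolynomial (Fin n) (MvPolynomial (Fin r) k) :=
  map (algebraMap k (MvPolynomial (Fin r) k)) (f j) - C (b j)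

lemma RCS.aeval_map (S : RCS J r Ω) (ξ : Fin n → Ω) (p : MvPolynomial (Fin n) k) :
    aeval ξ (map (algebraMap k (MvPolynomial (Fin r) k)) p) = aeval ξ p :=
  MvPolynomial.aeval_map_algebraMap _ _ _

lemma RCS.strongNS (S : RCS J r Ω) (I : Ideal (MvPolynomial (Fin n) (MvPolynomial (Fin r) k)))
    (h1 : ∀ p ∈ J, map (algebraMap k (MvPolynomial (Fin r) k)) p ∈ I)
    (h2 : ∀ j, map (algebraMap k (MvPolynomial (Fin r) k)) (S.lin j) - C (X j) ∈ I)
    (F : MvPolynomial (Fin n) (MvPolynomial (Fin r) k)) (hF : ∀ ξ ∈ S.pts, aeval ξ F = 0) : F ∈ I := by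
  set Φ : MvPolynomial (Fin n) (MvPolynomial (Fin r) k) →+* MvPolynomial (Fin n) k :=
    eval₂Hom (aeval S.lin : MvPolynomial (Fin r) k →ₐ[k] MvPolynomial (Fin n) k).toRingHom X with hΦ
  have e1 : (Ideal.Quotient.mk I) =
      ((Ideal.Quotient.mk I).comp (map (algebraMap k (MvPolynomial (Fin r) k)))).comp Φ := by
    apply MvPolynomial.ringHom_ext
    · intro b
      have : (Ideal.Quotient.mk I).comp C =
        (((Ideal.Quotient.mk I).comp (map (algebraMap k (MvPolynomial (Fin r) k)))).comp Φ).comp C := by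
        apply MvPolynomial.ringHom_ext
        · intro c
          simp [hΦ, MvPolynomial.algebraMap_eq]
        · intro j
          simp only [hΦ, RingHom.comp_apply, coe_eval₂Hom, eval₂_C]
          symm
          rw [Ideal.Quotient.eq]
          simpa using h2 j
      exact DFunLike.congr_fun this b
    · intro i
      simp [hΦ]
  have e2 : ∀ ξ ∈ S.pts, aeval ξ (Φ F) = aeval ξ F := by
    intro ξ hξ
    have : (aeval ξ : MvPolynomial (Fin n) k →ₐ[k] Ω).toRingHom.comp Φ =
        (aeval ξ : MvPolynomial (Fin n) (MvPolynomial (Fin r) k) →ₐ[MvPolynomial (Fin r) k] Ω).toRingHom := by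
      apply MvPolynomial.ringHom_ext
      · intro c
        have := S.eval_lin hξ c
        simpa [hΦ] using this
      · intro i; simp [hΦ]
    exact DFunLike.congr_fun this F
  have h3 : Φ F ∈ J := S.ns _ fun ξ hξ => by rw [e2 ξ hξ, hF ξ hξ]
  have h4 := DFunLike.congr_fun e1 F
  rw [← Ideal.Quotient.eq_zero_iff_mem, h4]
  exact Ideal.Quotient.eq_zero_iff_mem.2 (h1 _ h3)

/-- The residue theorem. -/
lemma RCS.residue (S : RCS J r Ω) (f : Fin n → MvPolynomial (Fin n) k) (b : Fin n → MvPolynomial (Fin r) k)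
    (h1 : ∀ p ∈ J, map (algebraMap k (MvPolynomial (Fin r) k)) p ∈ Ideal.span (Set.range (rcQ f b)))
    (h2 : ∀ j, map (algebraMap k (MvPolynomial (Fin r) k)) (S.lin j) - C (X j) ∈
      Ideal.span (Set.range (rcQ f b)))
    (h3 : ∀ ξ ∈ S.pts, ∀ j, aeval ξ (f j) = algebraMap (MvPolynomial (Fin r) k) Ω (b j)) :
    (∀ ξ ∈ S.pts, aeval ξ (Matrix.of (fun j i => pderiv i (f j))).det ≠ 0) ∧
    ∀ F : MvPolynomial (Fin n) k, ∃ τ : MvPolynomial (Fin r) k, algebraMap _ Ω τ =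
      ∑ ξ ∈ S.pts, aeval ξ F / aeval ξ (Matrix.of (fun j i => pderiv i (f j))).det := by
  classical
  set T : Fin n → Finset Ω := fun l => S.pts.image (fun ξ => ξ l) with hT
  have hTm : ∀ ξ ∈ S.pts, ∀ l, ξ l ∈ T l := fun ξ hξ l => Finset.mem_image_of_mem (fun ξ => ξ l) hξ
  have hex : ∀ l, ∃ P : Polynomial (MvPolynomial (Fin r) k), P.Monic ∧
      P.map (algebraMap _ Ω) = Lagrange.nodal (T l) id := by
    intro l
    refine rc_lift S.fix (T l) ?_ ?_
    · intro s hs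
      obtain ⟨ξ, hξ, rfl⟩ := Finset.mem_image.1 hs
      exact (S.dint ξ hξ l).isIntegral S.amap
    · intro σ s hs
      obtain ⟨ξ, hξ, rfl⟩ := Finset.mem_image.1 hs
      exact Finset.mem_image.2 ⟨_, S.sigma_mem σ hξ, rfl⟩
  choose P hPm hP using hex
  have hev : ∀ (l : Fin n) (η : Fin n → Ω), aeval η (Polynomial.aeval (X l) (P l) :
      MvPolynomial (Fin n) (MvPolynomial (Fin r) k)) = (Lagrange.nodal (T l) id).eval (η l) := by
    intro l η
    rw [← hP, Polynomial.eval_map, ← Polynomial.aeval_algHom_apply, aeval_X, Polynomial.aeval_def]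
  have hev' : ∀ (l : Fin n) (η : Fin n → Ω), aeval η (Polynomial.aeval (X l) (Polynomial.derivative (P l)) :
      MvPolynomial (Fin n) (MvPolynomial (Fin r) k)) =
        (Polynomial.derivative (Lagrange.nodal (T l) id)).eval (η l) := by
    intro l η
    rw [← hP, Polynomial.derivative_map, Polynomial.eval_map, ← Polynomial.aeval_algHom_apply, aeval_X,
      Polynomial.aeval_def]
  have hc : ∀ l, ∃ c : Fin n → MvPolynomial (Fin n) (MvPolynomial (Fin r) k),
      ∑ j, c j * rcQ f b j = Polynomial.aeval (X l) (P l) := by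
    intro l
    rw [← Ideal.mem_span_range_iff_exists_fun]
    refine S.strongNS _ h1 h2 _ fun ξ hξ => ?_
    rw [hev]
    exact Lagrange.eval_nodal_at_node (v := (id : Ω → Ω)) (hTm ξ hξ l)
  choose c hc using hc
  have hQ : ∀ ξ ∈ S.pts, ∀ j, aeval ξ (rcQ f b j) = 0 := by
    intro ξ hξ j
    rw [rcQ, map_sub, S.aeval_map, h3 ξ hξ, aeval_C, sub_self]
  have hnode : ∀ ξ ∈ S.pts, ∏ l, (Polynomial.derivative (Lagrange.nodal (T l) id)).eval (ξ l) ≠ 0 := by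
    intro ξ hξ
    refine Finset.prod_ne_zero_iff.2 fun l _ => ?_
    have := Lagrange.eval_nodal_derivative_eval_node_eq (v := (id : Ω → Ω)) (hTm ξ hξ l)
    rw [id] at this
    rw [this, Lagrange.eval_nodal, Finset.prod_ne_zero_iff]
    intro s hs
    exact sub_ne_zero.2 (Finset.ne_of_mem_erase hs).symm
  have hprod : ∀ ξ ∈ S.pts, ∏ l, (Polynomial.derivative (Lagrange.nodal (T l) id)).eval (ξ l) =
      aeval ξ (Matrix.of c).det * aeval ξ (Matrix.of (fun j i => pderiv i (f j))).det := by
    intro ξ hξ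
    rw [AlgHom.map_det, AlgHom.map_det, ← Matrix.det_mul, ← Matrix.det_diagonal]
    congr 1
    ext l i
    have h := congrArg (fun p => aeval ξ (pderiv i p)) (hc l)
    simp only [map_sum, Derivation.leibniz, smul_eq_mul, map_add, map_mul, hQ ξ hξ, zero_mul, add_zero,
      Derivation.map_aeval, hev', pderiv_X] at h
    have h5 : ∀ j, pderiv i (rcQ f b j) = map (algebraMap k (MvPolynomial (Fin r) k)) (pderiv i (f j)) := by
      intro j; rw [rcQ, map_sub, pderiv_C, sub_zero, pderiv_map]
    simp only [h5, S.aeval_map] at h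
    rw [Matrix.mul_apply, Matrix.diagonal_apply]
    simp only [AlgHom.mapMatrix_apply, Matrix.map_apply, Matrix.of_apply]
    rw [h]
    by_cases hli : l = i
    · subst hli; simp
    · simp [hli, Pi.single_apply]
  refine ⟨fun ξ hξ h0 => hnode ξ hξ (by rw [hprod ξ hξ, h0, mul_zero]), fun F => ?_⟩
  obtain ⟨τ, hτ⟩ := rc_grid T P hPm hP
    (map (algebraMap k (MvPolynomial (Fin r) k)) F * (Matrix.of c).det)
  refine ⟨τ, hτ.trans ?_⟩
  symm
  refine Finset.sum_subset_zero_on_sdiff ?_ ?_ ?_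
  · intro ξ hξ; exact Fintype.mem_piFinset.2 (hTm ξ hξ)
  · intro η hη
    obtain ⟨hη1, hη2⟩ := Finset.mem_sdiff.1 hη
    have hd : aeval η (Matrix.of c).det = 0 := by
      rw [AlgHom.map_det]
      apply Matrix.exists_mulVec_eq_zero_iff.1
      refine ⟨fun j => aeval η (rcQ f b j), ?_, ?_⟩
      · intro h0
        apply hη2
        have hI : Ideal.span (Set.range (rcQ f b)) ≤ RingHom.ker (aeval η : MvPolynomial (Fin n)
            (MvPolynomial (Fin r) k) →ₐ[MvPolynomial (Fin r) k] Ω) := by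
          rw [Ideal.span_le]; rintro _ ⟨j, rfl⟩; exact congrFun h0 j
        rw [S.mem_pts]
        refine ⟨fun p hp => ?_, fun j => ?_⟩
        · have := hI (h1 p hp); rwa [RingHom.mem_ker, S.aeval_map] at this
        · have := hI (h2 j); rw [RingHom.mem_ker, map_sub, S.aeval_map, aeval_C] at this
          exact sub_eq_zero.1 this
      · funext l
        have := congrArg (aeval η) (hc l)
        rw [hev] at this
        have h0 := Lagrange.eval_nodal_at_node (v := (id : Ω → Ω)) (Fintype.mem_piFinset.1 hη1 l)
        rw [id] at h0
        rw [h0] at this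
        simpa [Matrix.mulVec, dotProduct] using this
    rw [map_mul, hd, mul_zero, zero_div]
  · intro ξ hξ
    have hn := hnode ξ hξ
    have hp := hprod ξ hξ
    rw [map_mul, S.aeval_map, hp]
    rw [hp] at hn
    rw [mul_comm, mul_div_mul_left _ _ (left_ne_zero_of_mul hn)]
end

section
variable {k : Type*} [Field k] {n r : ℕ} {J : Ideal (MvPolynomial (Fin n) k)} {Ω : Type*} [Field Ω]
  [Algebra k Ω] [Algebra (MvPolynomial (Fin r) k) Ω] [IsScalarTower k (MvPolynomial (Fin r) k) Ω]

lemma RCS.step (S : RCS J r Ω) (f : Fin n → MvPolynomial (Fin n) k) (b : Fin n → MvPolynomial (Fin r) k)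
    (h1 : ∀ p ∈ J, map (algebraMap k (MvPolynomial (Fin r) k)) p ∈ Ideal.span (Set.range (rcQ f b)))
    (h2 : ∀ j, map (algebraMap k (MvPolynomial (Fin r) k)) (S.lin j) - C (X j) ∈
      Ideal.span (Set.range (rcQ f b)))
    (h3 : ∀ ξ ∈ S.pts, ∀ j, aeval ξ (f j) = algebraMap (MvPolynomial (Fin r) k) Ω (b j))
    (D : Fin n → ℕ) (hD : ∀ j, ∃ θ, RCBez (f j) (D j) θ) (E : ℕ) (hE : ∑ j, D j ≤ E)
    (p : MvPolynomial (Fin n) k) (d : ℕ) (hp : p.totalDegree ≤ d) (hpn : ∀ a, p * a ∈ J → a ∈ J)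
    (g a : MvPolynomial (Fin n) k) (hg : g - a * p ∈ J) :
    ∃ a', a' - a ∈ J ∧ a'.totalDegree ≤ E + g.totalDegree + (S.pts.card - 1) * (d + E) := by
  classical
  obtain ⟨hJ0, hres⟩ := S.residue f b h1 h2 h3
  choose θ hθ using hD
  set Jc : MvPolynomial (Fin n) k := (Matrix.of (fun j i => pderiv i (f j))).det with hJc
  set Δ : MvPolynomial (Fin n ⊕ Fin n) k := (Matrix.of θ).det with hΔ
  have hΔdeg : Δ.totalDegree ≤ E := (rc_det_deg _ D fun i j => (hθ i).2 j).trans hE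
  have hdiag : ∀ ξ : Fin n → Ω, aeval (Sum.elim ξ ξ) Δ = aeval ξ Jc := by
    intro ξ
    rw [hΔ, hJc, AlgHom.map_det, AlgHom.map_det]
    congr 1
    ext j i
    simpa using (hθ j).diag ξ i
  have hoff : ∀ ξ ∈ S.pts, ∀ ξ' ∈ S.pts, ξ ≠ ξ' → aeval (Sum.elim ξ ξ') Δ = 0 := by
    intro ξ hξ ξ' hξ' hne
    rw [hΔ, AlgHom.map_det]
    apply Matrix.exists_mulVec_eq_zero_iff.1
    refine ⟨fun l => ξ l - ξ' l, ?_, ?_⟩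
    · intro h0; exact hne (funext fun l => sub_eq_zero.1 (congrFun h0 l))
    · funext j
      have := (hθ j).eval ξ ξ'
      rw [h3 ξ hξ, h3 ξ' hξ', sub_self] at this
      simpa [Matrix.mulVec, dotProduct] using this.symm
  have hpn0 := S.nzd p hpn
  have hap : ∀ ξ ∈ S.pts, aeval ξ a * aeval ξ p = aeval ξ g := by
    intro ξ hξ
    have := (S.mem_iff _).1 hg ξ hξ
    rw [map_sub, map_mul, sub_eq_zero] at this
    exact this.symm
  set y : Fin r → Ω := fun j => algebraMap (MvPolynomial (Fin r) k) Ω (X j) with hy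
  -- integrality of the values
  have hW : ∀ ξ ∈ S.pts, DInt k y (d + E) (aeval ξ p * aeval ξ Jc) := by
    intro ξ hξ
    refine DInt.mul ((S.dint_aeval hξ p).mono hp) ?_
    rw [← hdiag ξ]
    refine (DInt_aeval (Sum.elim ξ ξ) ?_ Δ).mono hΔdeg
    rintro (l | l) <;> exact S.dint ξ hξ l
  have hW0 : ∀ ξ ∈ S.pts, aeval ξ p * aeval ξ Jc ≠ 0 := fun ξ hξ => mul_ne_zero (hpn0 ξ hξ) (hJ0 ξ hξ)
  obtain ⟨μ, hμ, -⟩ := S.descend (x := ∏ ξ ∈ S.pts, aeval ξ p * aeval ξ Jc) (DInt.prod _ hW) (by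
    intro σ
    refine S.sigma_prod σ (fun ξ => aeval ξ p * aeval ξ Jc) fun ξ hξ => ?_
    simp only [map_mul, S.sigma_aeval])
  have hμ0 : μ ≠ 0 := by
    rintro rfl
    rw [map_zero] at hμ
    exact Finset.prod_ne_zero_iff.2 hW0 hμ.symm
  choose τ hτ using fun γ : (Fin n ⊕ Fin n) →₀ ℕ => hres (a * ∏ i, X i ^ (γ (Sum.inr i)))
  have hτdeg : ∀ γ, (τ γ).totalDegree ≤
      g.totalDegree + ∑ i, γ (Sum.inr i) + (S.pts.card - 1) * (d + E) := by
    intro γ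
    by_cases h0 : τ γ = 0
    · rw [h0, totalDegree_zero]; exact Nat.zero_le _
    have hval : algebraMap _ Ω (τ γ * μ) = ∑ ξ ∈ S.pts, aeval ξ (g * ∏ i, X i ^ (γ (Sum.inr i))) *
        ∏ ξ' ∈ S.pts.erase ξ, (aeval ξ' p * aeval ξ' Jc) := by
      rw [map_mul, hτ, hμ, Finset.sum_mul]
      refine Finset.sum_congr rfl fun ξ hξ => ?_
      rw [← Finset.mul_prod_erase _ _ hξ, map_mul, map_mul, ← hap ξ hξ]
      have := hJ0 ξ hξ
      field_simp
    have hdi : DInt k y (g.totalDegree + ∑ i, γ (Sum.inr i) + (S.pts.card - 1) * (d + E))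
        (algebraMap _ Ω (τ γ * μ)) := by
      rw [hval]
      refine DInt.sum _ fun ξ hξ => DInt.mul ?_ ?_
      · refine (S.dint_aeval hξ _).mono ((totalDegree_mul _ _).trans (add_le_add le_rfl ?_))
        refine (totalDegree_finsetProd _ _).trans (Finset.sum_le_sum fun i _ => ?_)
        exact (totalDegree_pow _ _).trans (by simp)
      · refine (DInt.prod _ (D := fun _ => d + E) fun ξ' hξ' => hW ξ' (Finset.mem_of_mem_erase hξ')).mono ?_
        rw [Finset.sum_const, Finset.card_erase_of_mem hξ, smul_eq_mul]
    rw [S.amap] at hdi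
    have := hdi.descent S.algInd
    rw [totalDegree_mul_of_isDomain h0 hμ0] at this
    omega
  refine ⟨∑ γ ∈ Δ.support, C (coeff γ Δ) * (∏ i, X i ^ (γ (Sum.inl i))) * aeval S.lin (τ γ), ?_, ?_⟩
  · apply S.ns
    intro ξ' hξ'
    rw [map_sub, sub_eq_zero, map_sum]
    have hs : ∀ γ ∈ Δ.support, aeval ξ' (C (coeff γ Δ) * (∏ i, X i ^ (γ (Sum.inl i))) * aeval S.lin (τ γ)) =
        ∑ ξ ∈ S.pts, (aeval ξ a / aeval ξ Jc) * (algebraMap k Ω (coeff γ Δ) * ∏ i, (Sum.elim ξ' ξ) i ^ γ i) := by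
      intro γ _
      rw [map_mul, S.eval_lin hξ', hτ, Finset.mul_sum]
      refine Finset.sum_congr rfl fun ξ _ => ?_
      simp only [map_mul, map_prod, map_pow, aeval_X, aeval_C, Fintype.prod_sum_type, Sum.elim_inl, Sum.elim_inr]
      ring
    rw [Finset.sum_congr rfl hs, Finset.sum_comm]
    have hs2 : ∀ ξ ∈ S.pts, ∑ γ ∈ Δ.support, (aeval ξ a / aeval ξ Jc) *
        (algebraMap k Ω (coeff γ Δ) * ∏ i, (Sum.elim ξ' ξ) i ^ γ i) =
        (aeval ξ a / aeval ξ Jc) * aeval (Sum.elim ξ' ξ) Δ := by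
      intro ξ _
      rw [← Finset.mul_sum, aeval_def (Sum.elim ξ' ξ), eval₂_eq']
    rw [Finset.sum_congr rfl hs2, Finset.sum_eq_single ξ']
    · rw [hdiag, div_mul_cancel₀ _ (hJ0 ξ' hξ')]
    · intro ξ hξ hne
      rw [hoff ξ' hξ' ξ hξ hne.symm, mul_zero]
    · intro h; exact absurd hξ' h
  · refine totalDegree_finsetSum_le fun γ hγ => ?_
    have hγ1 := (le_totalDegree hγ).trans hΔdeg
    rw [Finsupp.sum_fintype _ _ (fun _ => rfl), Fintype.sum_sum_type] at hγ1
    have e1 : (C (coeff γ Δ) * (∏ i, X i ^ (γ (Sum.inl i))) : MvPolynomial (Fin n) k).totalDegree ≤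
        ∑ i, γ (Sum.inl i) := by
      refine (totalDegree_mul _ _).trans ?_
      rw [totalDegree_C, zero_add]
      refine (totalDegree_finsetProd _ _).trans (Finset.sum_le_sum fun i _ => ?_)
      exact (totalDegree_pow _ _).trans (by simp)
    have e2 := rc_tdeg_aeval_lin S.lin (fun j => rc_tdeg_lin (S.hlin j)) (τ γ)
    have e3 := hτdeg γ
    have e4 := totalDegree_mul (C (coeff γ Δ) * (∏ i, X i ^ (γ (Sum.inl i))) : MvPolynomial (Fin n) k)
      (aeval S.lin (τ γ))
    omega
end

lemma rc_step {k : Type*} [Field k] {n m r : ℕ} (q : Fin m → MvPolynomial (Fin n) k)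
    (hmr : m + r = n) {Ω : Type*} [Field Ω]
    [Algebra k Ω] [Algebra (MvPolynomial (Fin r) k) Ω] [IsScalarTower k (MvPolynomial (Fin r) k) Ω]
    (S : RCS (Ideal.span (Set.range q)) r Ω) (d : ℕ) (hq : ∀ i, (q i).totalDegree ≤ d)
    (p : MvPolynomial (Fin n) k) (hp : p.totalDegree ≤ d)
    (hpn : ∀ a, p * a ∈ Ideal.span (Set.range q) → a ∈ Ideal.span (Set.range q))
    (g a : MvPolynomial (Fin n) k) (hg : g - a * p ∈ Ideal.span (Set.range q)) :
    ∃ a', a' - a ∈ Ideal.span (Set.range q) ∧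
      a'.totalDegree ≤ m * d + g.totalDegree + (S.pts.card - 1) * (d + m * d) := by
  let e : Fin n ≃ Fin m ⊕ Fin r := (finCongr hmr.symm).trans finSumFinEquiv.symm
  set f : Fin n → MvPolynomial (Fin n) k := fun j => Sum.elim q S.lin (e j) with hf
  set b : Fin n → MvPolynomial (Fin r) k := fun j => Sum.elim (fun _ => 0) X (e j) with hb
  have hQ1 : ∀ i, map (algebraMap k (MvPolynomial (Fin r) k)) (q i) ∈ Ideal.span (Set.range (rcQ f b)) := by
    intro i
    refine Ideal.subset_span ⟨e.symm (Sum.inl i), ?_⟩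
    simp [rcQ, hf, hb]
  refine S.step f b ?_ ?_ ?_ (fun j => Sum.elim (fun _ => d) (fun _ => 0) (e j)) ?_ (m * d) ?_
    p d hp hpn g a hg
  · intro x hx
    have : Ideal.span (Set.range q) ≤ (Ideal.span (Set.range (rcQ f b))).comap
        (map (algebraMap k (MvPolynomial (Fin r) k))) := by
      rw [Ideal.span_le]; rintro _ ⟨i, rfl⟩; exact hQ1 i
    exact this hx
  · intro j
    refine Ideal.subset_span ⟨e.symm (Sum.inr j), ?_⟩
    simp [rcQ, hf, hb]
  · intro ξ hξ j
    simp only [hf, hb]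
    rcases e j with i | i
    · simp only [Sum.elim_inl, map_zero]
      exact ((S.mem_pts ξ).1 hξ).1 _ (Ideal.subset_span ⟨i, rfl⟩)
    · exact ((S.mem_pts ξ).1 hξ).2 i
  · intro j
    simp only [hf]
    rcases e j with i | i
    · obtain ⟨θ, h⟩ := RCBez_exists (q i)
      exact ⟨θ, h.mono (hq i)⟩
    · exact RCBez_linear _ (S.hlin i)
  · rw [Equiv.sum_comp e (Sum.elim (fun _ => d) (fun _ => 0)), Fintype.sum_sum_type]
    simp

/-- eventually polynomial functions -/
def RCEP (h : ℕ → ℕ) : Prop := ∃ P : Polynomial ℚ, ∀ᶠ m : ℕ in Filter.atTop, (h m : ℚ) = P.eval (m : ℚ)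

lemma RCEP.add {h h' : ℕ → ℕ} (H : RCEP h) (H' : RCEP h') : RCEP (fun m => h m + h' m) := by
  obtain ⟨P, hP⟩ := H; obtain ⟨P', hP'⟩ := H'
  refine ⟨P + P', ?_⟩
  filter_upwards [hP, hP'] with m h1 h2
  rw [Polynomial.eval_add, ← h1, ← h2]; push_cast; rfl

lemma RCEP.shift {h : ℕ → ℕ} (H : RCEP (fun m => h (m + 1))) : RCEP h := by
  obtain ⟨P, hP⟩ := H
  refine ⟨P.comp (Polynomial.X - 1), ?_⟩
  obtain ⟨N, hN⟩ := Filter.eventually_atTop.1 hP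
  refine Filter.eventually_atTop.2 ⟨N + 1, fun m hm => ?_⟩
  obtain ⟨j, rfl⟩ : ∃ j, m = j + 1 := ⟨m - 1, by omega⟩
  rw [hN j (by omega)]
  simp

lemma RCEP.shift' {h : ℕ → ℕ} (H : RCEP h) : RCEP (fun m => h (m + 1)) := by
  obtain ⟨P, hP⟩ := H
  refine ⟨P.comp (Polynomial.X + 1), ?_⟩
  obtain ⟨N, hN⟩ := Filter.eventually_atTop.1 hP
  refine Filter.eventually_atTop.2 ⟨N, fun m hm => ?_⟩
  rw [hN (m + 1) (by omega)]
  simp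

lemma rc_antidiff (Q : Polynomial ℚ) : ∃ P : Polynomial ℚ, ∀ x : ℚ, P.eval (1 + x) = P.eval x + Q.eval x := by
  induction Q using Polynomial.induction_on' with
  | add p q hp hq =>
    obtain ⟨P, hP⟩ := hp; obtain ⟨P', hP'⟩ := hq
    refine ⟨P + P', fun x => ?_⟩
    simp only [Polynomial.eval_add, hP, hP']; ring
  | monomial n a =>
    refine ⟨Polynomial.C (a / (n + 1)) * Polynomial.bernoulli (n + 1), fun x => ?_⟩
    simp only [Polynomial.eval_mul, Polynomial.eval_C, Polynomial.bernoulli_eval_one_add,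
      Polynomial.eval_monomial]
    have : (n : ℚ) + 1 ≠ 0 := by positivity
    push_cast
    field_simp

lemma RCEP.integrate {h h' : ℕ → ℕ} (H : RCEP h') (hh : ∀ m, h (m + 1) = h m + h' m) : RCEP h := by
  obtain ⟨Q, hQ⟩ := H
  obtain ⟨P, hP⟩ := rc_antidiff Q
  obtain ⟨N, hN⟩ := Filter.eventually_atTop.1 hQ
  refine ⟨P + Polynomial.C (h N - P.eval (N : ℚ)), Filter.eventually_atTop.2 ⟨N, fun m hm => ?_⟩⟩
  induction m, hm using Nat.le_induction with
  | base => simp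
  | succ m hm ih =>
    rw [hh, Nat.cast_add, ih, hN m hm]
    simp only [Polynomial.eval_add, Polynomial.eval_C]
    have := hP m
    push_cast
    rw [add_comm (m : ℚ) 1, this]; ring

lemma rc_finrank_map_add {k V W : Type*} [Field k] [AddCommGroup V] [Module k V] [AddCommGroup W] [Module k W]
    (p : Submodule k V) [FiniteDimensional k p] (π : V →ₗ[k] W) :
    Module.finrank k (p.map π) + Module.finrank k (p ⊓ LinearMap.ker π : Submodule k V) = Module.finrank k p := by
  have h := LinearMap.finrank_range_add_finrank_ker (π.domRestrict p)
  rw [LinearMap.range_domRestrict, LinearMap.ker_domRestrict, ← Submodule.finrank_map_subtype_eq,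
    Submodule.map_comap_subtype] at h
  exact h

lemma rc_finrank_le {k V W U : Type*} [Field k] [AddCommGroup V] [Module k V] [AddCommGroup W] [Module k W]
    [AddCommGroup U] [Module k U] (p : Submodule k V) [FiniteDimensional k p] (φ : V →ₗ[k] W) (ψ : V →ₗ[k] U)
    (h : ∀ x ∈ p, ψ x = 0 → φ x = 0) : Module.finrank k (p.map φ) ≤ Module.finrank k (p.map ψ) := by
  have h1 := rc_finrank_map_add p φ
  have h2 := rc_finrank_map_add p ψ
  have : FiniteDimensional k (p ⊓ LinearMap.ker φ : Submodule k V) := 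
    Submodule.finiteDimensional_of_le (inf_le_left : p ⊓ LinearMap.ker φ ≤ p)
  have h3 : Module.finrank k (p ⊓ LinearMap.ker ψ : Submodule k V) ≤
      Module.finrank k (p ⊓ LinearMap.ker φ : Submodule k V) :=
    Submodule.finrank_mono fun x hx => ⟨hx.1, h x hx.1 hx.2⟩
  omega

lemma rc_hc_X_mul {k : Type*} [Field k] {n : ℕ} (j : Fin n) (G : MvPolynomial (Fin n) k) (m : ℕ) :
    homogeneousComponent m (X j * G) = if m = 0 then 0 else X j * homogeneousComponent (m - 1) G := by
  have h1 : homogeneousComponent m (X j * G) = ∑ i ∈ Finset.range (G.totalDegree + 1),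
      if m = i + 1 then X j * homogeneousComponent i G else 0 := by
    conv_lhs => rw [← sum_homogeneousComponent G, Finset.mul_sum, map_sum]
    refine Finset.sum_congr rfl fun i _ => homogeneousComponent_of_mem ?_
    rw [mem_homogeneousSubmodule, add_comm]
    exact (isHomogeneous_X k j).mul (homogeneousComponent_isHomogeneous i G)
  rw [h1]
  rcases m with _ | m
  · simp
  · simp only [Nat.add_right_cancel_iff, Nat.add_sub_cancel, Nat.succ_ne_zero, if_false]
    rw [Finset.sum_ite_eq]
    split_ifs with h
    · rfl
    · rw [homogeneousComponent_eq_zero, mul_zero]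
      simp at h; omega

section
variable {k : Type*} [Field k] {n : ℕ}

/-- the colon ideal `I : x_j` -/
noncomputable def rcColon (I : Ideal (MvPolynomial (Fin n) k)) (j : Fin n) : Ideal (MvPolynomial (Fin n) k) :=
  Submodule.comap (LinearMap.lsmul (MvPolynomial (Fin n) k) (MvPolynomial (Fin n) k) (X j)) I

lemma mem_rcColon (I : Ideal (MvPolynomial (Fin n) k)) (j : Fin n) (g) : g ∈ rcColon I j ↔ X j * g ∈ I := Iff.rfl

lemma rcColon_hom (I : Ideal (MvPolynomial (Fin (n+1)) k)) (j) (hI : IsHomogeneousIdeal I) :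
    IsHomogeneousIdeal (rcColon I j) := by
  intro f hf m
  rw [mem_rcColon] at hf ⊢
  have := hI _ hf (m + 1)
  rwa [rc_hc_X_mul, if_neg (Nat.succ_ne_zero m), Nat.add_sub_cancel] at this

lemma rc_sup_hom (I : Ideal (MvPolynomial (Fin (n+1)) k)) (j) (hI : IsHomogeneousIdeal I) :
    IsHomogeneousIdeal (I ⊔ Ideal.span {X j}) := by
  intro f hf m
  obtain ⟨a, ha, b, hb, rfl⟩ := Submodule.mem_sup.1 hf
  obtain ⟨G, rfl⟩ := Ideal.mem_span_singleton.1 hb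
  rw [map_add, rc_hc_X_mul]
  refine Submodule.add_mem_sup (hI a ha m) ?_
  split_ifs
  · exact zero_mem _
  · exact Ideal.mul_mem_right _ _ (Ideal.mem_span_singleton_self _)

instance rc_fd (m : ℕ) : FiniteDimensional k (homogeneousSubmodule (Fin n) k m) :=
  Module.Finite.iff_fg.2 (homogeneousSubmodule_fg (Fin n) k m)

lemma rc_exact (I : Ideal (MvPolynomial (Fin (n+1)) k)) (j) (hI : IsHomogeneousIdeal I) (m : ℕ) :
    hilbF k I (m + 1) = hilbF k (rcColon I j) m + hilbF k (I ⊔ Ideal.span {X j}) (m + 1) := by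
  set I' := I ⊔ Ideal.span {(X j : MvPolynomial (Fin (n+1)) k)} with hI'
  let π : (MvPolynomial (Fin (n+1)) k ⧸ I) →ₗ[k] (MvPolynomial (Fin (n+1)) k ⧸ I') :=
    (Ideal.Quotient.factorₐ k (le_sup_left : I ≤ I')).toLinearMap
  set W := (homogeneousSubmodule (Fin (n+1)) k (m+1)).map (Ideal.Quotient.mkₐ k I).toLinearMap with hW
  have h1 := rc_finrank_map_add W π
  have h2 : W.map π = (homogeneousSubmodule (Fin (n+1)) k (m+1)).map (Ideal.Quotient.mkₐ k I').toLinearMap := by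
    rw [hW, ← Submodule.map_comp]; rfl
  let μ : MvPolynomial (Fin (n+1)) k →ₗ[k] (MvPolynomial (Fin (n+1)) k ⧸ I) :=
    (Ideal.Quotient.mkₐ k I).toLinearMap.comp (LinearMap.mulLeft k (X j))
  have h3 : W ⊓ LinearMap.ker π = (homogeneousSubmodule (Fin (n+1)) k m).map μ := by
    ext z
    constructor
    · rintro ⟨⟨F, hF, rfl⟩, hz⟩
      have hF' : F ∈ I' := Ideal.Quotient.eq_zero_iff_mem.1 hz
      obtain ⟨a, ha, b, hb, hab⟩ := Submodule.mem_sup.1 hF'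
      obtain ⟨G, rfl⟩ := Ideal.mem_span_singleton.1 hb
      refine ⟨homogeneousComponent m G, homogeneousComponent_mem _ _, ?_⟩
      have h4 := congrArg (homogeneousComponent (m+1)) hab
      rw [map_add, rc_hc_X_mul, if_neg (Nat.succ_ne_zero m), Nat.add_sub_cancel,
        homogeneousComponent_of_mem hF, if_pos rfl] at h4
      change Ideal.Quotient.mk I (X j * homogeneousComponent m G) = Ideal.Quotient.mk I F
      rw [← h4, map_add, Ideal.Quotient.eq_zero_iff_mem.2 (hI a ha (m+1)), zero_add]
    · rintro ⟨G, hG, rfl⟩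
      refine ⟨⟨X j * G, ?_, rfl⟩, ?_⟩
      · rw [SetLike.mem_coe, mem_homogeneousSubmodule, Nat.add_comm m 1]
        exact (isHomogeneous_X k j).mul hG
      · change Ideal.Quotient.mk I' (X j * G) = 0
        rw [Ideal.Quotient.eq_zero_iff_mem]
        exact Ideal.mul_mem_right _ _ (Submodule.mem_sup_right (Ideal.mem_span_singleton_self _))
  have h5 : Module.finrank k ((homogeneousSubmodule (Fin (n+1)) k m).map μ) = hilbF k (rcColon I j) m := by
    have key : ∀ x, μ x = 0 ↔ (Ideal.Quotient.mkₐ k (rcColon I j)).toLinearMap x = 0 := by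
      intro x
      change Ideal.Quotient.mk I (X j * x) = 0 ↔ Ideal.Quotient.mk _ x = 0
      rw [Ideal.Quotient.eq_zero_iff_mem, Ideal.Quotient.eq_zero_iff_mem, mem_rcColon]
    exact le_antisymm (rc_finrank_le _ _ _ fun x _ h => (key x).2 h) (rc_finrank_le _ _ _ fun x _ h => (key x).1 h)
  rw [h2, h3, h5] at h1
  rw [hilbF, ← hW, ← h1, add_comm]
  rfl

lemma rc_le_colon (I : Ideal (MvPolynomial (Fin n) k)) (j) : I ≤ rcColon I j :=
  fun g hg => (mem_rcColon I j g).2 (I.mul_mem_left _ hg)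

/-- Hilbert–Serre. -/
lemma rc_hilbert_serre (c : ℕ) : ∀ I : Ideal (MvPolynomial (Fin (n+1)) k), IsHomogeneousIdeal I →
    (∀ i : Fin (n+1), c ≤ (i:ℕ) → X i ∈ I) → RCEP (hilbF k I) := by
  induction c with
  | zero =>
    intro I _ h
    refine ⟨0, Filter.eventually_atTop.2 ⟨1, fun m hm => ?_⟩⟩
    have : (homogeneousSubmodule (Fin (n+1)) k m).map (Ideal.Quotient.mkₐ k I).toLinearMap = ⊥ := by
      rw [Submodule.eq_bot_iff]
      rintro _ ⟨F, hF, rfl⟩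
      change Ideal.Quotient.mk I F = 0
      rw [Ideal.Quotient.eq_zero_iff_mem, F.as_sum]
      refine Ideal.sum_mem _ fun α hα => ?_
      have hdeg : α.degree = m := by
        have := hF (mem_support_iff.1 hα)
        rw [Finsupp.degree_eq_weight_one]; exact this
      have hα0 : α ≠ 0 := by rintro rfl; simp at hdeg; omega
      obtain ⟨i, hi⟩ := Finsupp.ne_iff.1 hα0
      have hdvd : (X i : MvPolynomial (Fin (n+1)) k) ∣ monomial α (coeff α F) := by
        rw [X_dvd_monomial]; right; simpa using hi
      exact Ideal.mem_of_dvd _ hdvd (h i (Nat.zero_le _))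
    simp [hilbF, this]
  | succ c ih =>
    intro I hI h
    by_cases hc : c < n + 1
    swap
    · exact ih I hI fun i hi => absurd i.2 (by omega)
    let j : Fin (n+1) := ⟨c, hc⟩
    let f : ℕ → Ideal (MvPolynomial (Fin (n+1)) k) := fun i => (fun I => rcColon I j)^[i] I
    have hfs : ∀ i, f (i+1) = rcColon (f i) j := fun i => Function.iterate_succ_apply' _ _ _
    have hfh : ∀ i, IsHomogeneousIdeal (f i) := by
      intro i
      induction i with
      | zero => exact hI
      | succ i ihi => rw [hfs]; exact rcColon_hom _ _ ihi
    have hmono : Monotone f := monotone_nat_of_le_succ fun i => by rw [hfs]; exact rc_le_colon _ _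
    obtain ⟨N, hN⟩ := monotone_stabilizes_iff_noetherian.2
      (inferInstance : IsNoetherian (MvPolynomial (Fin (n+1)) k) (MvPolynomial (Fin (n+1)) k)) ⟨f, hmono⟩
    have hsup : ∀ i, RCEP (hilbF k (f i ⊔ Ideal.span {X j})) := by
      intro i
      refine ih _ (rc_sup_hom _ _ (hfh i)) fun l hl => ?_
      rcases hl.eq_or_lt with e | e
      · have : l = j := Fin.ext e.symm
        rw [this]; exact Submodule.mem_sup_right (Ideal.mem_span_singleton_self _)
      · exact Submodule.mem_sup_left (hmono (Nat.zero_le i) (h l e))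
    have hstep : ∀ i m, hilbF k (f i) (m+1) = hilbF k (f (i+1)) m + hilbF k (f i ⊔ Ideal.span {X j}) (m+1) := by
      intro i m; rw [hfs]; exact rc_exact _ _ (hfh i) m
    have hNE : RCEP (hilbF k (f N)) := by
      refine RCEP.integrate (hsup N).shift' fun m => ?_
      have e : f N = f (N+1) := hN (N+1) (Nat.le_succ N)
      have := hstep N m
      rwa [← e] at this
    have hall : ∀ i, RCEP (hilbF k (f (N - i))) := by
      intro i
      induction i with
      | zero => exact hNE
      | succ i ihi =>
        by_cases hi : i < N
        · apply RCEP.shift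
          have e : N - i = N - (i+1) + 1 := by omega
          rw [e] at ihi
          have := ihi.add (hsup (N - (i+1))).shift'
          simpa only [hstep] using this
        · have e : N - (i+1) = N - i := by omega
          rwa [e]
    have := hall N
    rwa [Nat.sub_self] at this

lemma rc_homogIdeal_hom (J : Ideal (MvPolynomial (Fin n) k)) : IsHomogeneousIdeal (homogIdeal k J) := by
  let _ := MvPolynomial.gradedAlgebra (σ := Fin (n+1)) (R := k)
  have h : (homogIdeal k J).IsHomogeneous (homogeneousSubmodule (Fin (n+1)) k) := by
    apply Ideal.homogeneous_span (𝒜 := homogeneousSubmodule (Fin (n+1)) k)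
    rintro F ⟨⟨m, hm⟩, -⟩
    exact ⟨m, hm⟩
  intro f hf m
  exact (mem_iff_homogeneousComponent_mem h f).1 hf m

lemma rc_hilbP_exists (J : Ideal (MvPolynomial (Fin n) k)) :
    ∀ᶠ m : ℕ in Filter.atTop, (hilbF k (homogIdeal k J) m : ℚ) = (hilbP k (homogIdeal k J)).eval (m : ℚ) := by
  have h : RCEP (hilbF k (homogIdeal k J)) :=
    rc_hilbert_serre (n+1) _ (rc_homogIdeal_hom J) fun i hi => absurd i.2 (by omega)
  unfold RCEP at h
  rw [hilbP, dif_pos h]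
  exact h.choose_spec
end

lemma rc_poly_lc {Q : Polynomial ℚ} (h : ∀ᶠ m : ℕ in Filter.atTop, 0 ≤ Q.eval (m : ℚ)) : 0 ≤ Q.leadingCoeff := by
  by_contra hlt
  rw [not_le] at hlt
  by_cases hd : 0 < Q.degree
  · have h1 := (Q.tendsto_atBot_of_leadingCoeff_nonpos hd hlt.le).comp
      (tendsto_natCast_atTop_atTop (R := ℚ))
    have h2 := h1.eventually (Filter.eventually_lt_atBot 0)
    obtain ⟨m, hm1, hm2⟩ := (h.and h2).exists
    exact absurd hm1 (not_le.2 hm2)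
  · have h0 := Polynomial.eq_C_of_degree_le_zero (not_lt.1 hd)
    obtain ⟨m, hm⟩ := h.exists
    rw [h0, Polynomial.leadingCoeff_C] at hlt
    rw [h0, Polynomial.eval_C] at hm
    exact absurd hm (not_le.2 hlt)

lemma rc_poly_final {P : Polynomial ℚ} {N r : ℕ} (hN : 1 ≤ N)
    (h1 : ∀ᶠ m : ℕ in Filter.atTop, (N : ℚ) * ((m : ℚ) - N + 1) ^ r ≤ r.factorial * P.eval (m : ℚ))
    (h2 : ∀ᶠ m : ℕ in Filter.atTop, P.eval (m : ℚ) ≤ N * ((m : ℚ) + N + 1) ^ r)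
    (h3 : ∀ᶠ m : ℕ in Filter.atTop, 0 ≤ P.eval (m : ℚ)) :
    N ≤ ⌊(P.natDegree.factorial : ℚ) * P.leadingCoeff⌋₊ := by
  have hpm : ∀ c : ℚ, (Polynomial.C (N : ℚ) * (Polynomial.X + Polynomial.C c) ^ r).natDegree ≤ r := by
    intro c
    refine Polynomial.natDegree_C_mul_le _ _ |>.trans ?_
    rw [Polynomial.natDegree_pow_X_add_C]
  have hco : ∀ c : ℚ, (Polynomial.C (N : ℚ) * (Polynomial.X + Polynomial.C c) ^ r).coeff r = (N : ℚ) := by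
    intro c
    rw [Polynomial.coeff_C_mul, Polynomial.coeff_X_add_C_pow]; simp
  have hdeg : P.natDegree ≤ r := by
    by_contra hlt
    rw [not_le] at hlt
    have hU := rc_poly_lc (Q := Polynomial.C (N : ℚ) * (Polynomial.X + Polynomial.C ((N : ℚ) + 1)) ^ r - P) (by
      filter_upwards [h2] with m hm
      simp only [Polynomial.eval_sub, Polynomial.eval_mul, Polynomial.eval_C, Polynomial.eval_pow,
        Polynomial.eval_add, Polynomial.eval_X, ← add_assoc]
      linarith)
    have hlt' := (hpm ((N:ℚ)+1)).trans_lt hlt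
    have hP0 : P ≠ 0 := by rintro rfl; simp at hlt
    rw [Polynomial.leadingCoeff_sub_of_degree_lt' (Polynomial.degree_lt_degree hlt')] at hU
    have hP := rc_poly_lc h3
    exact hP0 (Polynomial.leadingCoeff_eq_zero.1 (le_antisymm (by linarith) hP))
  set W := Polynomial.C (r.factorial : ℚ) * P - Polynomial.C (N : ℚ) * (Polynomial.X + Polynomial.C (-(N : ℚ) + 1)) ^ r
    with hW
  have hWd : W.natDegree ≤ r := (Polynomial.natDegree_sub_le _ _).trans
    (max_le ((Polynomial.natDegree_C_mul_le _ _).trans hdeg) (hpm _))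
  have hWl := rc_poly_lc (Q := W) (by
      filter_upwards [h1] with m hm
      simp only [hW, Polynomial.eval_sub, Polynomial.eval_mul, Polynomial.eval_C, Polynomial.eval_pow,
        Polynomial.eval_add, Polynomial.eval_X]
      rw [show (m:ℚ) + (-N + 1) = m - N + 1 by ring]
      linarith)
  have hWc : W.coeff r = r.factorial * P.coeff r - N := by
    rw [hW, Polynomial.coeff_sub, hco, Polynomial.coeff_C_mul]
  have hge : (N : ℚ) ≤ r.factorial * P.coeff r := by
    by_contra hlt
    rw [not_le] at hlt
    have hne : W.coeff r < 0 := by rw [hWc]; linarith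
    have : W.natDegree = r := le_antisymm hWd (Polynomial.le_natDegree_of_ne_zero hne.ne)
    rw [Polynomial.leadingCoeff, this] at hWl
    linarith
  have hcr : P.coeff r ≠ 0 := by
    intro h0
    rw [h0, mul_zero] at hge
    have : (1:ℚ) ≤ N := by exact_mod_cast hN
    linarith
  have hd : P.natDegree = r := le_antisymm hdeg (Polynomial.le_natDegree_of_ne_zero hcr)
  rw [show P.leadingCoeff = P.coeff r by rw [← hd]; rfl, hd]
  exact Nat.le_floor hge

lemma rc_count_up (k : Type*) [Field k] (r M : ℕ) :
    Module.finrank k (restrictTotalDegree (Fin r) k M) ≤ (M + 1) ^ r := by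
  have h : restrictTotalDegree (Fin r) k M = restrictSupport k {α : Fin r →₀ ℕ | (α.sum fun _ e => e) ≤ M} := rfl
  rw [h, Module.finrank_eq_nat_card_basis (basisRestrictSupport k _)]
  let g : {α : Fin r →₀ ℕ | (α.sum fun _ e => e) ≤ M} → (Fin r → Fin (M + 1)) := fun α i =>
    ⟨α.1 i, by
      have h1 : (α.1.sum fun _ e => e) ≤ M := α.2
      rw [Finsupp.sum_fintype _ _ (fun _ => rfl)] at h1
      have : α.1 i ≤ ∑ i, α.1 i := Finset.single_le_sum (f := fun i => α.1 i) (fun _ _ => Nat.zero_le _) (Finset.mem_univ i)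
      omega⟩
  have hg : Function.Injective g := by
    intro a b hab
    apply Subtype.ext
    ext i
    exact congrArg Fin.val (congrFun hab i)
  refine (Nat.card_le_card_of_injective g hg).trans ?_
  simp

lemma rc_count_low (k : Type*) [Field k] (r M : ℕ) :
    (M + 1) ^ r ≤ r.factorial * Module.finrank k (restrictTotalDegree (Fin r) k M) := by
  have h : restrictTotalDegree (Fin r) k M = restrictSupport k {α : Fin r →₀ ℕ | (α.sum fun _ e => e) ≤ M} := rfl
  have hfin : Module.Finite k (restrictTotalDegree (Fin r) k M) := inferInstance
  rw [h] at hfin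
  have hfin2 : Finite {α : Fin r →₀ ℕ | (α.sum fun _ e => e) ≤ M} :=
    Module.Finite.finite_basis (basisRestrictSupport k _)
  rw [h, Module.finrank_eq_nat_card_basis (basisRestrictSupport k _)]
  let g : (Finset.finsuppAntidiag (Finset.univ : Finset (Fin (r+1))) M) → {α : Fin r →₀ ℕ | (α.sum fun _ e => e) ≤ M} :=
    fun α => ⟨Finsupp.tail α.1, by
      have h1 := (Finset.mem_finsuppAntidiag.1 α.2).1
      rw [Fin.sum_univ_succ] at h1
      change (Finsupp.sum _ _) ≤ M
      rw [Finsupp.sum_fintype _ _ (fun _ => rfl)]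
      simp only [Finsupp.tail_apply]
      omega⟩
  have hg : Function.Injective g := by
    intro a b hab
    apply Subtype.ext
    have h0 : Finsupp.tail a.1 = Finsupp.tail b.1 := congrArg Subtype.val hab
    have ht : ∀ i : Fin r, a.1 i.succ = b.1 i.succ := fun i => DFunLike.congr_fun h0 i
    have h1 := (Finset.mem_finsuppAntidiag.1 a.2).1
    have h2 := (Finset.mem_finsuppAntidiag.1 b.2).1
    rw [Fin.sum_univ_succ] at h1 h2
    simp only [ht] at h1
    ext i
    refine Fin.cases ?_ ht i
    omega
  have h2 := Nat.card_le_card_of_injective g hg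
  rw [Nat.card_eq_fintype_card, Fintype.card_coe, Finset.card_finsuppAntidiag_nat_eq_choose] at h2
  have h3 : (Finset.univ : Finset (Fin (r+1))).card + M - 1 = M + r := by simp; omega
  rw [h3] at h2
  have h4 : (M + r).choose M = (M + r).choose r := by
    rw [Nat.choose_symm_add]
  refine le_trans ?_ (Nat.mul_le_mul_left _ h2)
  rw [h4, ← Nat.descFactorial_eq_factorial_mul_choose]
  have := Nat.pow_sub_le_descFactorial (M + r) r
  rwa [show M + r + 1 - r = M + 1 by omega] at this

section
variable {k : Type*} [Field k] {n r : ℕ} {J : Ideal (MvPolynomial (Fin n) k)} {Ω : Type*} [Field Ω]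
  [Algebra k Ω] [Algebra (MvPolynomial (Fin r) k) Ω] [IsScalarTower k (MvPolynomial (Fin r) k) Ω]

lemma RCS.sep [Infinite k] (S : RCS J r Ω) : ∃ u : MvPolynomial (Fin n) k, u.totalDegree ≤ 1 ∧
    Set.InjOn (fun ξ : Fin n → Ω => aeval ξ u) S.pts := by
  classical
  set p : MvPolynomial (Fin n) Ω := ∏ z ∈ S.pts.offDiag, ∑ l, C (z.1 l - z.2 l) * X l with hp
  have hp0 : p ≠ 0 := by
    rw [hp, Finset.prod_ne_zero_iff]
    intro z hz h0
    refine (Finset.mem_offDiag.1 hz).2.2 (funext fun l => sub_eq_zero.1 ?_)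
    have := congrArg (eval (Pi.single l 1)) h0
    simpa [Pi.single_apply, Finset.sum_ite_eq] using this
  obtain ⟨x, hx, hxp⟩ : ∃ x ∈ Set.univ.pi (fun _ : Fin n => Set.range (algebraMap k Ω)), eval x p ≠ 0 := by
    by_contra hcon
    push Not at hcon
    refine hp0 (funext_set (fun _ : Fin n => Set.range (algebraMap k Ω)) (fun i => ?_) fun x hx => ?_)
    · exact Set.infinite_range_of_injective (algebraMap k Ω).injective
    · rw [hcon x hx, map_zero]
  choose c hc using fun l => hx l (Set.mem_univ l)
  refine ⟨∑ l, C (c l) * X l, ?_, ?_⟩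
  · refine totalDegree_finsetSum_le fun l _ => (totalDegree_mul _ _).trans ?_
    simp
  · intro ξ hξ ξ' hξ' h
    by_contra hne
    apply hxp
    rw [hp, map_prod]
    refine Finset.prod_eq_zero (i := (ξ, ξ')) (Finset.mem_offDiag.2 ⟨hξ, hξ', hne⟩) ?_
    simp only [map_sum, map_mul, aeval_C, aeval_X] at h
    simp only [map_sum, map_mul, eval_C, eval_X, ← hc, sub_mul, Finset.sum_sub_distrib]
    rw [sub_eq_zero]
    simpa only [mul_comm] using h
end

section
variable {k : Type*} [Field k] {n r : ℕ} {J : Ideal (MvPolynomial (Fin n) k)} {Ω : Type*} [Field Ω]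
  [Algebra k Ω] [Algebra (MvPolynomial (Fin r) k) Ω] [IsScalarTower k (MvPolynomial (Fin r) k) Ω]

/-- dehomogenization -/
noncomputable def rcDe (k : Type*) [Field k] (n : ℕ) :
    MvPolynomial (Fin (n+1)) k →ₐ[k] MvPolynomial (Fin n) k :=
  aeval (Fin.cases 1 X : Fin (n+1) → MvPolynomial (Fin n) k)

lemma rcDe_deg (F : MvPolynomial (Fin (n+1)) k) : (rcDe k n F).totalDegree ≤ F.totalDegree := by
  refine rc_tdeg_aeval_lin _ (fun j => ?_) F
  refine Fin.cases ?_ (fun i => ?_) j <;> simp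

lemma rcDe_mem (F : MvPolynomial (Fin (n+1)) k) (hF : F ∈ homogIdeal k J) : rcDe k n F ∈ J := by
  have : homogIdeal k J ≤ J.comap (rcDe k n) := by
    refine Ideal.span_le.2 ?_
    rintro F ⟨_, h⟩
    exact h
  exact this hF

lemma rcDe_mem' {m : ℕ} (F : MvPolynomial (Fin (n+1)) k) (hm : F ∈ homogeneousSubmodule (Fin (n+1)) k m)
    (hF : rcDe k n F ∈ J) : F ∈ homogIdeal k J :=
  Ideal.subset_span ⟨⟨m, hm⟩, hF⟩

lemma rcDe_surj (p : MvPolynomial (Fin n) k) {m : ℕ} (hp : p.totalDegree ≤ m) :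
    ∃ F ∈ homogeneousSubmodule (Fin (n+1)) k m, rcDe k n F = p := by
  refine ⟨∑ α ∈ p.support, X 0 ^ (m - α.degree) * rename Fin.succ (monomial α (p.coeff α)), ?_, ?_⟩
  · refine Submodule.sum_mem _ fun α hα => ?_
    have h1 : α.degree ≤ m := by
      refine le_trans ?_ hp
      exact le_totalDegree hα
    rw [mem_homogeneousSubmodule]
    have h2 : (monomial α (p.coeff α)).IsHomogeneous α.degree := isHomogeneous_monomial _ rfl
    have := ((isHomogeneous_X k (0 : Fin (n+1))).pow (m - α.degree)).mul (h2.rename_isHomogeneous (f := Fin.succ))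
    rwa [one_mul, Nat.sub_add_cancel h1] at this
  · conv_rhs => rw [p.as_sum]
    rw [map_sum]
    refine Finset.sum_congr rfl fun α _ => ?_
    rw [map_mul, map_pow]
    have h1 : rcDe k n (X 0) = 1 := by simp [rcDe]
    rw [h1, one_pow, one_mul, rcDe, aeval_rename]
    have : (Fin.cases 1 X : Fin (n+1) → MvPolynomial (Fin n) k) ∘ Fin.succ = X := by
      funext i; simp
    rw [this]; simp

lemma rc_hilbF_low [Infinite k] (S : RCS J r Ω) (M : ℕ) :
    S.pts.card * Module.finrank k (restrictTotalDegree (Fin r) k M) ≤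
      hilbF k (homogIdeal k J) (M + S.pts.card) := by
  classical
  obtain ⟨u, hu, hinj⟩ := S.sep
  set N := S.pts.card with hN
  set V := restrictTotalDegree (Fin r) k M
  set φ : MvPolynomial (Fin n) k →ₗ[k] _ := (Ideal.Quotient.mkₐ k J).toLinearMap
  set H := homogeneousSubmodule (Fin (n+1)) k (M + N)
  have hle : Module.finrank k (H.map (φ ∘ₗ (rcDe k n).toLinearMap)) ≤ hilbF k (homogIdeal k J) (M + N) := by
    refine rc_finrank_le H _ _ ?_
    intro F _ h
    have : F ∈ homogIdeal k J := Ideal.Quotient.eq_zero_iff_mem.1 h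
    exact Ideal.Quotient.eq_zero_iff_mem.2 (rcDe_mem F this)
  refine le_trans ?_ hle
  let G0 : (Fin N → V) →ₗ[k] MvPolynomial (Fin n) k :=
    ∑ i : Fin N, (LinearMap.mulRight k (u ^ (i:ℕ))) ∘ₗ (aeval S.lin).toLinearMap ∘ₗ V.subtype ∘ₗ LinearMap.proj i
  have hG0 : ∀ b, G0 b = ∑ i : Fin N, aeval S.lin (b i : MvPolynomial (Fin r) k) * u ^ (i:ℕ) := by
    intro b
    simp [G0, LinearMap.sum_apply]
  have hmem : ∀ b, φ (G0 b) ∈ H.map (φ ∘ₗ (rcDe k n).toLinearMap) := by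
    intro b
    have hd : (G0 b).totalDegree ≤ M + N := by
      rw [hG0]
      refine totalDegree_finsetSum_le fun i _ => (totalDegree_mul _ _).trans ?_
      refine add_le_add ((rc_tdeg_aeval_lin S.lin (fun j => rc_tdeg_lin (S.hlin j)) _).trans ?_)
        ((totalDegree_pow _ _).trans ?_)
      · exact (mem_restrictTotalDegree _ _ _).1 (b i).2
      · have := i.2
        nlinarith
    obtain ⟨F, hF, h⟩ := rcDe_surj (G0 b) hd
    exact ⟨F, hF, congrArg φ h⟩
  have hcard : Module.finrank k (Fin N → V) = N * Module.finrank k V := by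
    rw [Module.finrank_pi_fintype]; simp
  rw [← hcard]
  refine LinearMap.finrank_le_finrank_of_injective (f := (φ ∘ₗ G0).codRestrict _ hmem) ?_
  rw [injective_iff_map_eq_zero]
  intro b hb
  have hb0 : φ (G0 b) = 0 := congrArg Subtype.val hb
  have hbJ : G0 b ∈ J := Ideal.Quotient.eq_zero_iff_mem.1 hb0
  rw [S.mem_iff] at hbJ
  have e : Fin N ≃ S.pts := S.pts.equivFin.symm
  have key : (fun i : Fin N => algebraMap (MvPolynomial (Fin r) k) Ω (b i : MvPolynomial (Fin r) k)) = 0 := by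
    refine Matrix.eq_zero_of_forall_index_sum_mul_pow_eq_zero (f := fun j : Fin N => aeval (e j).1 u) ?_ ?_
    · intro i j h
      exact e.injective (Subtype.ext (hinj (e i).2 (e j).2 h))
    · intro j
      have := hbJ (e j).1 (e j).2
      rw [hG0, map_sum] at this
      simpa only [map_mul, map_pow, S.eval_lin (e j).2] using this
  funext i
  apply Subtype.ext
  apply S.inj
  have := congrFun key i
  simpa using this

lemma rc_hilbF_up [Infinite k] (S : RCS J r Ω) (m : ℕ) :
    hilbF k (homogIdeal k J) m ≤ S.pts.card * (m + S.pts.card + 1) ^ r := by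
  classical
  obtain ⟨u, hu, hinj⟩ := S.sep
  set N := S.pts.card with hN
  set H := homogeneousSubmodule (Fin (n+1)) k m with hH
  have hfd : FiniteDimensional k H := rc_fd m
  set V : Submodule k Ω := (restrictTotalDegree (Fin r) k (m + N)).map
    (IsScalarTower.toAlgHom k (MvPolynomial (Fin r) k) Ω).toLinearMap with hV
  have hVfd : FiniteDimensional k V := inferInstance
  let T0 : Fin N → (H →ₗ[k] Ω) := fun i =>
    ∑ ξ ∈ S.pts, (LinearMap.mulRight k ((aeval ξ u) ^ (i:ℕ))) ∘ₗ (aeval ξ).toLinearMap ∘ₗ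
      (rcDe k n).toLinearMap ∘ₗ H.subtype
  have hT0 : ∀ i F, T0 i F = ∑ ξ ∈ S.pts, aeval ξ (rcDe k n F.1) * (aeval ξ u) ^ (i:ℕ) := by
    intro i F
    simp [T0, LinearMap.sum_apply]
  have hmem : ∀ i F, T0 i F ∈ V := by
    intro i F
    have h1 : DInt k (fun j => algebraMap (MvPolynomial (Fin r) k) Ω (X j)) (m + N) (T0 i F) := by
      rw [hT0]
      refine DInt.sum _ fun ξ hξ => ?_
      rw [← map_pow, ← map_mul]
      refine (S.dint_aeval hξ _).mono ((totalDegree_mul _ _).trans (add_le_add ?_ ((totalDegree_pow _ _).trans ?_)))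
      · exact (rcDe_deg _).trans (IsHomogeneous.totalDegree_le F.2)
      · have := i.2
        nlinarith
    obtain ⟨c, hc, hcd⟩ := S.descend h1 (by
      intro σ
      rw [hT0]
      refine S.sigma_sum σ _ fun ξ _ => ?_
      rw [map_mul, map_pow, S.sigma_aeval, S.sigma_aeval])
    exact ⟨c, (mem_restrictTotalDegree _ _ _).2 hcd, hc⟩
  let T : H →ₗ[k] (Fin N → V) := LinearMap.pi fun i => (T0 i).codRestrict V (hmem i)
  have hfin : Module.finrank k V ≤ (m + N + 1) ^ r :=
    (Submodule.finrank_map_le _ _).trans (rc_count_up k r (m + N))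
  have hcard : Module.finrank k (Fin N → V) = N * Module.finrank k V := by
    rw [Module.finrank_pi_fintype]; simp
  have h1 : hilbF k (homogIdeal k J) m ≤ Module.finrank k ((⊤ : Submodule k H).map T) := by
    have h2 : hilbF k (homogIdeal k J) m = Module.finrank k ((⊤ : Submodule k H).map
        ((Ideal.Quotient.mkₐ k (homogIdeal k J)).toLinearMap ∘ₗ H.subtype)) := by
      rw [Submodule.map_comp, Submodule.map_subtype_top]; rfl
    rw [h2]
    refine rc_finrank_le _ _ _ ?_
    intro F _ hF
    refine Ideal.Quotient.eq_zero_iff_mem.2 (rcDe_mem' F.1 F.2 ?_)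
    rw [S.mem_iff]
    have e : Fin N ≃ S.pts := S.pts.equivFin.symm
    have key : (fun j : Fin N => aeval (e j).1 (rcDe k n F.1)) = 0 := by
      refine Matrix.eq_zero_of_forall_pow_sum_mul_pow_eq_zero (f := fun j : Fin N => aeval (e j).1 u) ?_ ?_
      · intro i j h
        exact e.injective (Subtype.ext (hinj (e i).2 (e j).2 h))
      · intro i
        have h3 : T0 i F = 0 := congrArg Subtype.val (congrFun hF i)
        rw [hT0, ← Finset.sum_coe_sort, ← e.sum_comp] at h3
        exact h3
    intro ξ hξ
    have := congrFun key (e.symm ⟨ξ, hξ⟩)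
    simpa using this
  calc _ ≤ _ := h1
    _ ≤ Module.finrank k (Fin N → V) := Submodule.finrank_le _
    _ ≤ _ := by rw [hcard]; exact Nat.mul_le_mul_left _ hfin

lemma RCS.one_le_card (S : RCS J r Ω) (hJ : J ≠ ⊤) : 1 ≤ S.pts.card := by
  rw [Nat.one_le_iff_ne_zero]
  intro h
  rw [Finset.card_eq_zero] at h
  refine hJ ((Ideal.eq_top_iff_one _).2 (S.ns 1 ?_))
  rw [h]; simp

lemma rc_card_le [Infinite k] (S : RCS J r Ω) (hJ : J ≠ ⊤) :
    S.pts.card ≤ idealDeg k (homogIdeal k J) := by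
  have hP := rc_hilbP_exists J
  refine rc_poly_final (r := r) (S.one_le_card hJ) ?_ ?_ ?_
  · filter_upwards [hP, Filter.eventually_ge_atTop S.pts.card] with m hm hge
    rw [← hm]
    obtain ⟨M, rfl⟩ := Nat.exists_eq_add_of_le' hge
    have h1 := rc_hilbF_low S M
    have h2 := rc_count_low k r M
    have h3 : S.pts.card * (M + 1) ^ r ≤ r.factorial * hilbF k (homogIdeal k J) (M + S.pts.card) := by
      calc _ ≤ S.pts.card * (r.factorial * _) := Nat.mul_le_mul_left _ h2
        _ = r.factorial * (S.pts.card * _) := by ring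
        _ ≤ _ := Nat.mul_le_mul_left _ h1
    have h4 : ((S.pts.card * (M + 1) ^ r : ℕ) : ℚ) ≤ ((r.factorial * hilbF k (homogIdeal k J) (M + S.pts.card) : ℕ) : ℚ) := by
      exact_mod_cast h3
    push_cast at h4 ⊢
    rwa [add_sub_cancel_right]
  · filter_upwards [hP] with m hm
    rw [← hm]
    exact_mod_cast rc_hilbF_up S m
  · filter_upwards [hP] with m hm
    rw [← hm]
    positivity

end

lemma rc_reg_of {k : Type*} [Field k] {n t : ℕ} (q : Fin t → MvPolynomial (Fin n) k)
    (h : RingTheory.Sequence.IsWeaklyRegular (MvPolynomial (Fin n) k) (List.ofFn q)) : RCReg q := by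
  intro i a ha
  have h1 := h.regular_mod_prev i (by simp)
  have h2 : (Ideal.ofList ((List.ofFn q).take i) • (⊤ : Submodule (MvPolynomial (Fin n) k) (MvPolynomial (Fin n) k)))
      = Ideal.span (q '' {j | (j:ℕ) < i}) := by
    rw [Ideal.smul_top_eq_map, Algebra.algebraMap_self, Ideal.map_id]
    change Ideal.span _ = Ideal.span _
    congr 1
    ext x
    simp only [Set.mem_ofPred_eq, Set.mem_image, List.mem_take_iff_getElem, List.getElem_ofFn, List.length_ofFn]
    constructor
    · rintro ⟨j, hj, rfl⟩
      exact ⟨⟨j, by omega⟩, by simp; omega, rfl⟩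
    · rintro ⟨j, hj, rfl⟩
      exact ⟨j, by have := j.2; omega, rfl⟩
  rw [h2] at h1
  have h3 : (Ideal.Quotient.mk (Ideal.span (q '' {j | (j:ℕ) < i})) a) = 0 := by
    refine h1 ?_
    simp only [List.getElem_ofFn, smul_zero]
    exact Ideal.Quotient.eq_zero_iff_mem.2 ha
  exact Ideal.Quotient.eq_zero_iff_mem.1 h3

lemma rc_prefix {k : Type*} [Field k] {n t m : ℕ} (q : Fin t → MvPolynomial (Fin n) k) (h : m ≤ t) (i : ℕ)
    (hi : i ≤ m) : (fun j : Fin m => q (Fin.castLE h j)) '' {j | (j:ℕ) < i} = q '' {j | (j:ℕ) < i} := by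
  ext x
  constructor
  · rintro ⟨j, hj, rfl⟩
    exact ⟨_, hj, rfl⟩
  · rintro ⟨j, hj, rfl⟩
    exact ⟨⟨j, lt_of_lt_of_le hj hi⟩, hj, rfl⟩

lemma rc_main_ind {k : Type*} [Field k] [CharZero k] {n t : ℕ} (q : Fin t → MvPolynomial (Fin n) k)
    (hreg : RCReg q) (hne : Ideal.span (Set.range q) ≠ ⊤) (d δ : ℕ) (hd : ∀ i, (q i).totalDegree ≤ d)
    (hqrad : ∀ i : ℕ, 1 ≤ i → i ≤ t - 1 → (Ideal.span (q '' {j | (j : ℕ) < i})).IsRadical)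
    (hδ : ∀ i : ℕ, 1 ≤ i → i ≤ t - 1 →
      idealDeg k (homogIdeal k (Ideal.span (q '' {j | (j : ℕ) < i}))) ≤ δ) :
    (2 ≤ t → 1 ≤ δ) ∧ ∀ i, 1 ≤ i → i ≤ t → ∀ g ∈ Ideal.span (q '' {j | (j : ℕ) < i}),
      ∃ b : Fin t → MvPolynomial (Fin n) k, g = ∑ j, b j * q j ∧
        ∀ j, (b j).totalDegree + δ * d ≤ g.totalDegree + δ * d * (i * i) := by
  classical
  have hInf : Infinite k := inferInstance
  have hstep : ∀ m, 1 ≤ m → m ≤ t - 1 → ∀ hm : m < t, 1 ≤ δ ∧ ∀ g ∈ Ideal.span (q '' {j | (j : ℕ) < m + 1}),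
      ∃ b h, h ∈ Ideal.span (q '' {j | (j : ℕ) < m}) ∧ g = b * q ⟨m, hm⟩ + h ∧
        b.totalDegree + d ≤ g.totalDegree + δ * d * (m + 1) := by
    intro m hm1 hm2 hm
    set q' : Fin m → MvPolynomial (Fin n) k := fun j => q (Fin.castLE hm.le j) with hq'
    have hsp : Ideal.span (Set.range q') = Ideal.span (q '' {j | (j : ℕ) < m}) := by
      rw [← rc_span_range_eq, hq', rc_prefix q hm.le m le_rfl]
    have hreg' : RCReg q' := by
      intro i a ha
      rw [hq', rc_prefix q hm.le i i.2.le] at ha ⊢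
      exact hreg (Fin.castLE hm.le i) a ha
    have hJ : Ideal.span (Set.range q') ≠ ⊤ := by
      intro h
      rw [hsp] at h
      exact hne (top_le_iff.1 (h ▸ Ideal.span_mono (Set.image_subset_range _ _)))
    have hrad : (Ideal.span (Set.range q')).IsRadical := by rw [hsp]; exact hqrad m hm1 hm2
    obtain ⟨r, hmr, ⟨S⟩⟩ := rc_mkRCS q' hreg' hJ hrad
    have hN1 := S.one_le_card hJ
    have hN2 : S.pts.card ≤ δ := by
      refine (rc_card_le S hJ).trans ?_
      rw [hsp]; exact hδ m hm1 hm2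
    refine ⟨hN1.trans hN2, ?_⟩
    intro g hg
    have hset : {j : Fin t | (j : ℕ) < m + 1} = insert ⟨m, hm⟩ {j : Fin t | (j : ℕ) < m} := by
      ext j
      simp only [Set.mem_ofPred_eq, Set.mem_insert_iff, Fin.ext_iff]
      omega
    rw [hset, Set.image_insert_eq, Ideal.mem_span_insert] at hg
    obtain ⟨a, h, hh, hgh⟩ := hg
    obtain ⟨b, hb, hbd⟩ := rc_step q' hmr S d (fun i => hd _) (q ⟨m, hm⟩) (hd _)
      (by intro a ha; rw [hsp] at ha ⊢; exact hreg ⟨m, hm⟩ a ha) g a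
      (by rw [hsp, hgh, add_sub_cancel_left]; exact hh)
    rw [hsp] at hb
    refine ⟨b, g - b * q ⟨m, hm⟩, ?_, by ring, ?_⟩
    · have : g - b * q ⟨m, hm⟩ = h - q ⟨m, hm⟩ * (b - a) := by rw [hgh]; ring
      rw [this]
      exact Ideal.sub_mem _ hh (Ideal.mul_mem_left _ _ hb)
    · obtain ⟨c, hc⟩ := Nat.exists_eq_add_of_le' hN1
      rw [hc, Nat.add_sub_cancel] at hbd
      have : (c + 1) * (d * (m + 1)) ≤ δ * (d * (m + 1)) := Nat.mul_le_mul_right _ (by omega)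
      nlinarith
  refine ⟨fun ht => (hstep 1 le_rfl (by omega) (by omega)).1, ?_⟩
  intro i hi
  induction i, hi using Nat.le_induction with
  | base =>
    intro hit g hg
    have hset : {j : Fin t | (j : ℕ) < 1} = {⟨0, by omega⟩} := by
      ext j
      simp only [Set.mem_ofPred_eq, Set.mem_singleton_iff, Fin.ext_iff]
      omega
    rw [hset, Set.image_singleton, Ideal.mem_span_singleton'] at hg
    obtain ⟨c, hc⟩ := hg
    by_cases hg0 : g = 0
    · exact ⟨0, by simp [hg0], by simp⟩
    have hc0 : c ≠ 0 := by rintro rfl; exact hg0 (by rw [← hc, zero_mul])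
    have hq0 : q ⟨0, by omega⟩ ≠ 0 := by intro h; exact hg0 (by rw [← hc, h, mul_zero])
    refine ⟨Pi.single ⟨0, by omega⟩ c, ?_, ?_⟩
    · rw [Finset.sum_eq_single ⟨0, by omega⟩]
      · rw [Pi.single_eq_same, hc]
      · intro j _ hj
        rw [Pi.single_eq_of_ne hj, zero_mul]
      · simp
    · intro j
      have h1 : g.totalDegree = c.totalDegree + (q ⟨0, by omega⟩).totalDegree := by
        rw [← hc, totalDegree_mul_of_isDomain hc0 hq0]
      by_cases hj : j = ⟨0, by omega⟩
      · subst hj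
        rw [Pi.single_eq_same]; omega
      · rw [Pi.single_eq_of_ne hj]; simp
  | succ m hm ih =>
    intro hmt g hg
    have hmt' : m < t := hmt
    obtain ⟨hδ1, hs⟩ := hstep m hm (by omega) (by omega)
    obtain ⟨b, h, hh, hgh, hbd⟩ := hs g hg
    obtain ⟨b', hb', hbd'⟩ := ih (by omega) h hh
    have hhd : h.totalDegree ≤ g.totalDegree + δ * d * (m + 1) := by
      have : h = g - b * q ⟨m, by omega⟩ := by rw [hgh]; ring
      rw [this]
      refine (totalDegree_sub _ _).trans (max_le (by omega) ((totalDegree_mul _ _).trans ?_))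
      have := hd ⟨m, by omega⟩
      omega
    have hE : δ * d * (m + 1) + δ * d * (m * m) ≤ δ * d * ((m + 1) * (m + 1)) := by
      rw [← mul_add]; exact Nat.mul_le_mul_left _ (by nlinarith)
    have hdd : d ≤ δ * d := Nat.le_mul_of_pos_left _ hδ1
    have hE2 : δ * d + δ * d * (m + 1) ≤ δ * d * ((m + 1) * (m + 1)) := by
      have : δ * d + δ * d * (m + 1) = δ * d * (1 + (m + 1)) := by ring
      rw [this]; exact Nat.mul_le_mul_left _ (by nlinarith)
    refine ⟨b' + Pi.single ⟨m, by omega⟩ b, ?_, ?_⟩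
    · simp only [Pi.add_apply, add_mul, Finset.sum_add_distrib, ← hb']
      rw [Finset.sum_eq_single ⟨m, by omega⟩]
      · rw [Pi.single_eq_same, hgh]; ring
      · intro j _ hj
        rw [Pi.single_eq_of_ne hj, zero_mul]
      · simp
    · intro j
      have h1 : (b' j).totalDegree + δ * d ≤ g.totalDegree + δ * d * ((m + 1) * (m + 1)) := by
        have := hbd' j
        omega
      have h2 : (Pi.single (M := fun _ => MvPolynomial (Fin n) k) ⟨m, hmt'⟩ b j).totalDegree + δ * d ≤
          g.totalDegree + δ * d * ((m + 1) * (m + 1)) := by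
        by_cases hj : j = ⟨m, hmt'⟩
        · rw [hj]
          rw [Pi.single_eq_same]; omega
        · rw [Pi.single_eq_of_ne hj, totalDegree_zero]; omega
      have h3 := totalDegree_add (b' j) (Pi.single (M := fun _ => MvPolynomial (Fin n) k) ⟨m, by omega⟩ b j)
      simp only [Pi.add_apply]
      rcases le_max_iff.1 h3 with h | h <;> omega

/-- the representation problem in complete intersections.  Given
`f₁,…,f_s` defining a proper ideal of Krull dimension `n − s`, `d` a bound for
their degrees, and any admissible system `q₁,…,q_t` of `k`-linear combinations
of the `fᵢ` (generating the same ideal, forming a weak regular sequence, with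
radical intermediate ideals) whose intermediate affine varieties have degrees
bounded by `δ` — so that the geometric degree of the system is at most `δ` —
every `g ∈ (f₁,…,f_s)` can be written `g = ∑ aᵢ fᵢ` with
`deg (aᵢ fᵢ) ≤ deg g + s²·(d + 3n)·δ`. -/
theorem representation_complete_intersection {k : Type*} [Field k] [IsAlgClosed k]
    [CharZero k] {n s : ℕ} (hs : s ≤ n)
    (f : Fin s → MvPolynomial (Fin n) k)
    (hproper : Ideal.span (Set.range f) ≠ ⊤)
    (hdim : ringKrullDim (MvPolynomial (Fin n) k ⧸ Ideal.span (Set.range f)) =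
      ((n - s : ℕ) : WithBot (WithTop ℕ)))
    (d δ : ℕ) (hd : ∀ i, (f i).totalDegree ≤ d)
    (t : ℕ) (ht : t ≤ s) (q : Fin t → MvPolynomial (Fin n) k)
    (hqlin : ∀ i, q i ∈ Submodule.span k (Set.range f))
    (hqspan : Ideal.span (Set.range q) = Ideal.span (Set.range f))
    (hqreg : RingTheory.Sequence.IsWeaklyRegular (MvPolynomial (Fin n) k)
      (List.ofFn q))
    (hqrad : ∀ i : ℕ, 1 ≤ i → i ≤ t - 1 →
      (Ideal.span (q '' {j | (j : ℕ) < i})).IsRadical)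
    (hδ : ∀ i : ℕ, 1 ≤ i → i ≤ min t n - 1 →
      idealDeg k (homogIdeal k (Ideal.span (q '' {j | (j : ℕ) < i}))) ≤ δ)
    (g : MvPolynomial (Fin n) k) (hg : g ∈ Ideal.span (Set.range f)) :
    ∃ a : Fin s → MvPolynomial (Fin n) k, g = ∑ i, a i * f i ∧
      ∀ i, (a i * f i).totalDegree ≤ g.totalDegree + s ^ 2 * (d + 3 * n) * δ := by
  have hts : t = s := by
    have h1 := rc_dim_quot_ge q (by rw [hqspan]; exact hproper)
    rw [hqspan, hdim] at h1
    have h1' : ((n : ℕ) : WithBot ℕ∞) ≤ ((n - s : ℕ) : WithBot ℕ∞) + ((t : ℕ) : WithBot ℕ∞) := h1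
    have h2 : n ≤ (n - s) + t := by exact_mod_cast h1'
    omega
  subst hts
  have hgf := hg
  rw [Ideal.mem_span_range_iff_exists_fun] at hgf
  obtain ⟨c0, hc0⟩ := hgf
  rcases Nat.lt_or_ge t 2 with ht2 | ht2
  · refine ⟨c0, hc0.symm, ?_⟩
    intro i
    have : t = 1 := by have := i.2; omega
    subst this
    rw [Fin.sum_univ_one] at hc0
    rw [Subsingleton.elim i 0, hc0]
    omega
  have hqd : ∀ i, (q i).totalDegree ≤ d := by
    intro i
    have : Submodule.span k (Set.range f) ≤ restrictTotalDegree (Fin n) k d := by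
      refine Submodule.span_le.2 ?_
      rintro _ ⟨j, rfl⟩
      exact (mem_restrictTotalDegree _ _ _).2 (hd j)
    exact (mem_restrictTotalDegree _ _ _).1 (this (hqlin i))
  obtain ⟨hδ1, hmain⟩ := rc_main_ind q (rc_reg_of q hqreg) (by rw [hqspan]; exact hproper) d δ hqd hqrad
    (by rwa [min_eq_left hs] at hδ)
  have hδ1 := hδ1 ht2
  obtain ⟨b, hb, hbd⟩ := hmain t (by omega) le_rfl g (by rw [rc_span_range_eq, hqspan]; exact hg)
  have hlin : ∀ i, ∃ c : Fin t → k, ∑ j, c j • f j = q i := fun i =>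
    (Submodule.mem_span_range_iff_exists_fun k).1 (hqlin i)
  choose c hc using hlin
  refine ⟨fun j => ∑ i, c i j • b i, ?_, ?_⟩
  · rw [hb]
    simp only [Finset.sum_mul]
    rw [Finset.sum_comm]
    refine Finset.sum_congr rfl fun i _ => ?_
    rw [← hc i, Finset.mul_sum]
    refine Finset.sum_congr rfl fun j _ => ?_
    rw [mul_smul_comm, smul_mul_assoc]
  · intro j
    have hdd : d ≤ δ * d := Nat.le_mul_of_pos_left _ hδ1
    have hbig : δ * d * (t * t) ≤ t ^ 2 * (d + 3 * n) * δ := by nlinarith [Nat.zero_le (t ^ 2 * (3 * n) * δ)]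
    have h1 : (∑ i, c i j • b i).totalDegree ≤ g.totalDegree + δ * d * (t * t) - δ * d := by
      refine totalDegree_finsetSum_le fun i _ => (totalDegree_smul_le _ _).trans ?_
      have := hbd i
      omega
    have h2 : δ * d ≤ δ * d * (t * t) := Nat.le_mul_of_pos_right _ (by positivity)
    have h3 := hd j
    refine (totalDegree_mul _ _).trans ?_
    dsimp only
    omega
end
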